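/- arXiv:2102.09070 — 2 statements merged into one kernel-verified Lean document; each statement's English description precedes it below -/
import Mathlib

section
/- Let p be a prime, n = d + m with d, m ≥ 1, α ∈ ℤ_p^m with τ(α) = m+1, and let τ ∈ ℝ satisfy 1 + 1/n < τ < 1 + 1/m. Then for the constant weight vector (τ,…,τ), the Hausdorff dimension of 𝔚_n((τ,…,τ)) ∩ Π_α equals (n+1)/τ − m. -/
/-!
Write `n = d + m`. An integer vector `(q₀, q)` is a good approximation of `α` to precision `θ`
if `‖q₀ αᵢ - qᵢ‖ < θ` for all `i`. The hypothesis `τ(α) = m + 1` enters only as an upper bound: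
for every `σ > (m + 1) / m` and all large `L` there is no good approximation of `α` of height `L`
to precision `L ^ (-σ)` (`exists_no_small`). Since the difference of two approximations is an
approximation, a pigeonhole argument gives: there are at most `(2 T / L + 1) ^ (m + 1)` good
approximations of height `T` to precision `L ^ (-σ)` (`card_approx_le`).

**Upper bound.** At the dyadic scale `q₀ ≈ 2 ^ j` the set is covered by balls of radius
`2 ^ (-j τ)`, one for each good approximation of `α` to that precision and each choice of the
first `d` numerators. With `L ≈ 2 ^ (j τ / σ)` and `σ` close to `(m + 1) / m` their number is at
most `2 ^ (j (n + 1 - m τ + o(1)))`, so the sum of the `s`-th powers of the radii converges for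
`s > (n + 1) / τ - m` (`dimH_le_of_frequently_cover`).

**Lower bound.** The set contains a Cantor set. Fix a large `Q`, put `p ^ k ≈ Q ^ τ` and
`p ^ k' ≈ Q ^ t`, where `t d` is slightly smaller than `n + 1 - m τ`, and attach to
`Y ∈ ℤ_p ^ d` the lattice `Λ` of all `v ∈ ℤ ^ (n + 1)` for which `(v₁, …, vₙ) / v₀` approximates
`Y` to precision `p ^ (-k')` and `α` to precision `p ^ (-k)`. Its index is slightly smaller than
`Q ^ (n + 1)`.

* By the count above, for all but a small proportion of the residue classes of `Y` modulo
  `p ^ k'` in a given ball, `Λ` has no nonzero vector shorter than `Q ^ (1 - ε)`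
  (`exists_bad_set`).
* A pigeonhole argument then shows that the vectors of `Λ` of length at most `Q ^ (1 - ε / 4)` span
  the whole space, so that the covering radius of `Λ` is small compared with `Q`
  (`span_short_vectors`, `exists_lattice_point_near`).
* Hence `Λ` contains a vector `a` near `(3 Q / 4, Q / 4, …, Q / 4)`. Adding short lattice vectors
  makes `a₀` prime to `b₀` for a fixed short `b ∈ Λ`, and moving along the line `a + c b` makes
  `v₀` prime to `p` and to all `vᵢ` (`exists_coprime_lattice_point`). Only the prime factors of
  `D = p ∏ |a₀ bᵢ - aᵢ b₀|` matter, and an elementary sieve (`exists_coprime_in_progression`)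
  finds `c ≤ 8 ^ ω(D)`, which is `D ^ o(1)`.

Each such vector gives a ball of radius `p ^ (-k)` around a point within `p ^ (-k')` of `Y` whose
points, completed by `α`, lie in `𝔄_{v₀}(τ, …, τ)` (`exists_center`). So every ball of the
previous level contains evenly spread smaller balls of this kind (`exists_children`), and the
mass distribution principle for the resulting Cantor set (`CantorScheme.le_dimH`) gives the
dimension `t d / τ`, which is arbitrarily close to `(n + 1) / τ - m`.
-/

open scoped BigOperators ENNReal Classical
open MeasureTheory

noncomputable instance {p : ℕ} [Fact p.Prime] : MeasurableSpace ℤ_[p] := borel _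
instance {p : ℕ} [Fact p.Prime] : BorelSpace ℤ_[p] := ⟨rfl⟩

/-- The Diophantine exponent of `α ∈ ℤ_p^m`. -/
noncomputable def dioExp {p : ℕ} [Fact p.Prime] {m : ℕ} (α : Fin m → ℤ_[p]) : ℝ :=
  sSup {s : ℝ | ∃ τ : Fin m → ℝ, s = ∑ i, τ i ∧
    ∀ Q₀ : ℕ, ∃ Q : ℕ, Q₀ ≤ Q ∧ ∃ q₀ : ℤ, ∃ q : Fin m → ℤ,
      0 < q₀ ∧ q₀ ≤ (Q : ℤ) ∧ (∀ i, |q i| ≤ (Q : ℤ)) ∧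
      ∀ i, ‖(q₀ : ℤ_[p]) * α i - (q i : ℤ_[p])‖ < (Q : ℝ) ^ (-(τ i))}

/-- The set `𝔄_{q₀}(τ)` of weighted `τ`-approximable points with denominator `q₀`. -/
def Aset {p : ℕ} [Fact p.Prime] {n : ℕ} (τ : Fin n → ℝ) (q₀ : ℕ) :
    Set (Fin n → ℤ_[p]) :=
  ⋃ (q : Fin n → ℤ) (_ : ∀ i, |q i| ≤ (q₀ : ℤ) ∧ Int.gcd (q i) q₀ = 1),
    {x | ∀ i, ‖(x i : ℚ_[p]) - (q i : ℚ_[p]) / (q₀ : ℚ_[p])‖ < (q₀ : ℝ) ^ (-(τ i))}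

/-- The set `𝔚_n(τ) = limsup_{q₀ → ∞} 𝔄_{q₀}(τ)` of weighted `τ`-approximable points. -/
def Wset {p : ℕ} [Fact p.Prime] {n : ℕ} (τ : Fin n → ℝ) : Set (Fin n → ℤ_[p]) :=
  ⋂ (Q : ℕ), ⋃ (q₀ : ℕ) (_ : Q ≤ q₀), Aset τ q₀

/-- The coordinate hyperplane `Π_α ⊆ ℤ_p^{d+m}` determined by `α ∈ ℤ_p^m`. -/
def Pialpha {p : ℕ} [Fact p.Prime] {d m : ℕ} (α : Fin m → ℤ_[p]) :
    Set (Fin (d + m) → ℤ_[p]) :=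
  {x | ∀ i : Fin m, x (Fin.natAdd d i) = α i}

/-! ### Sieving and prime divisors -/

/-- Legendre's sieve: the number of `k < K` for which `h + g * k` is divisible by no prime of `S`
differs from the expected value by less than `2 ^ |S|`. The induction splits off the residue class
modulo the new prime, which is again an arithmetic progression. -/
lemma sieve_count (S : Finset ℕ) (hS : ∀ l ∈ S, l.Prime) :
    ∀ (h g : ℤ) (_ : ∀ l ∈ S, ¬ (l : ℤ) ∣ g) (K : ℕ),
      |(((Finset.range K).filter (fun k : ℕ => ∀ l ∈ S, ¬ (l : ℤ) ∣ h + g * k)).card : ℝ)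
        - K * ∏ l ∈ S, (1 - 1 / (l : ℝ))| ≤ 2 ^ S.card - 1 := by
  induction S using Finset.induction_on with
  | empty => intro h g _ K; simp
  | insert l S hl ih =>
    intro h g hg K
    have hlp : l.Prime := hS l (Finset.mem_insert_self _ _)
    have hS' : ∀ q ∈ S, q.Prime := fun q hq => hS q (Finset.mem_insert_of_mem hq)
    have hgS : ∀ q ∈ S, ¬ (q : ℤ) ∣ g := fun q hq => hg q (Finset.mem_insert_of_mem hq)
    have hgl : ¬ (l : ℤ) ∣ g := hg l (Finset.mem_insert_self _ _)
    have hl0 : 0 < l := hlp.pos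
    -- the residue class of `k` modulo `l` on which `l ∣ h + g * k`
    obtain ⟨k₀, hk₀l, hk₀⟩ : ∃ k₀ : ℕ, k₀ < l ∧ ∀ k : ℕ, (l : ℤ) ∣ h + g * k ↔ k % l = k₀ := by
      have := Fact.mk hlp
      have hgne : (g : ZMod l) ≠ 0 := by
        rwa [Ne, ZMod.intCast_zmod_eq_zero_iff_dvd]
      refine ⟨(-(h : ZMod l) / g).val, ZMod.val_lt _, fun k => ?_⟩
      rw [← ZMod.intCast_zmod_eq_zero_iff_dvd]
      push_cast
      rw [← ZMod.val_natCast]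
      constructor
      · intro hk
        congr 1
        field_simp
        linear_combination hk
      · intro hk
        have := ZMod.val_injective _ hk
        rw [this]
        field_simp
        ring
    set K' : ℕ := (K - k₀ + (l - 1)) / l with hK'
    have hK'lt : ∀ k' : ℕ, k' < K' ↔ k₀ + l * k' < K := by
      intro k'
      rw [hK', ← Nat.succ_le_iff, Nat.le_div_iff_mul_le hl0, Nat.succ_mul, mul_comm k' l]
      omega
    have hK'1 : |(K' : ℝ) - K / l| ≤ 1 := by
      have hlR : (0 : ℝ) < l := by exact_mod_cast hl0
      have e1 : K' * l ≤ K - k₀ + (l - 1) := Nat.div_mul_le_self _ _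
      have e2 : K - k₀ + (l - 1) < K' * l + l := by
        have := Nat.lt_div_mul_add (a := K - k₀ + (l - 1)) hl0
        exact this
      have e3 : K' * l ≤ K + l := by omega
      have e4 : K ≤ K' * l + l := by omega
      have e3' : (K' : ℝ) * l ≤ K + l := by exact_mod_cast e3
      have e4' : (K : ℝ) ≤ K' * l + l := by exact_mod_cast e4
      rw [abs_le]
      constructor
      · rw [neg_le_sub_iff_le_add, div_le_iff₀ hlR]; linarith
      · rw [sub_le_iff_le_add, ← sub_le_iff_le_add', le_div_iff₀ hlR]; linarith
    set G := (Finset.range K).filter (fun k : ℕ => ∀ q ∈ S, ¬ (q : ℤ) ∣ h + g * k) with hG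
    have hsplit : (((Finset.range K).filter
        (fun k : ℕ => ∀ q ∈ insert l S, ¬ (q : ℤ) ∣ h + g * k)).card : ℝ)
        = (G.card : ℝ) - ((Finset.range K').filter
          (fun k : ℕ => ∀ q ∈ S, ¬ (q : ℤ) ∣ (h + g * k₀) + (g * l) * k)).card := by
      have e1 : (Finset.range K).filter
          (fun k : ℕ => ∀ q ∈ insert l S, ¬ (q : ℤ) ∣ h + g * k)
          = G.filter (fun k : ℕ => ¬ (l : ℤ) ∣ h + g * k) := by
        ext k; simp only [hG, Finset.mem_filter, Finset.forall_mem_insert]; tauto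
      have e2 : (G.filter (fun k : ℕ => (l : ℤ) ∣ h + g * k)).card = ((Finset.range K').filter
          (fun k : ℕ => ∀ q ∈ S, ¬ (q : ℤ) ∣ (h + g * k₀) + (g * l) * k)).card := by
        symm
        apply Finset.card_bij (fun k' _ => k₀ + l * k')
        · intro k' hk'
          simp only [Finset.mem_filter, Finset.mem_range, hG] at hk' ⊢
          refine ⟨⟨(hK'lt k').1 hk'.1, fun q hq => ?_⟩, ?_⟩
          · convert hk'.2 q hq using 2; push_cast; ring
          · rw [hk₀]; simp [Nat.mod_eq_of_lt hk₀l]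
        · intro a _ b _ hab
          have : l * a = l * b := by omega
          exact Nat.eq_of_mul_eq_mul_left hl0 this
        · intro k hk
          simp only [Finset.mem_filter, Finset.mem_range, hG] at hk
          have hm := (hk₀ k).1 hk.2
          have hkk : k₀ + l * (k / l) = k := by rw [← hm]; exact Nat.mod_add_div k l
          refine ⟨k / l, ?_, hkk⟩
          simp only [Finset.mem_filter, Finset.mem_range]
          refine ⟨(hK'lt _).2 (by rw [hkk]; exact hk.1.1), fun q hq => ?_⟩
          have := hk.1.2 q hq
          rw [← hkk] at this
          convert this using 2; push_cast; ring
      rw [e1, ← e2, ← Finset.card_filter_add_card_filter_not (s := G)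
        (fun k : ℕ => (l : ℤ) ∣ h + g * k)]
      push_cast; ring
    have hgl' : ∀ q ∈ S, ¬ (q : ℤ) ∣ g * l := by
      intro q hq hd
      have hqp : Prime (q : ℤ) := Nat.prime_iff_prime_int.1 (hS' q hq)
      rcases hqp.dvd_or_dvd hd with h1 | h1
      · exact hgS q hq h1
      · have := (Nat.prime_dvd_prime_iff_eq (hS' q hq) hlp).1 (by exact_mod_cast h1)
        exact hl (this ▸ hq)
    have i1 := ih hS' h g hgS K
    have i2 := ih hS' (h + g * k₀) (g * l) hgl' K'
    set P := ∏ q ∈ S, (1 - 1 / (q : ℝ)) with hP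
    have hP0 : 0 ≤ P := Finset.prod_nonneg fun q hq => by
      have : (1 : ℝ) ≤ q := by exact_mod_cast (hS' q hq).one_le
      rw [sub_nonneg, div_le_one (by linarith)]; exact this
    have hP1 : P ≤ 1 := Finset.prod_le_one (fun q hq => by
      have : (1 : ℝ) ≤ q := by exact_mod_cast (hS' q hq).one_le
      rw [sub_nonneg, div_le_one (by linarith)]; exact this) (fun q hq => by
      have : (0 : ℝ) ≤ 1 / q := by positivity
      linarith)
    rw [hsplit, Finset.prod_insert hl, Finset.card_insert_of_notMem hl, pow_succ]
    have i3 : |((K' : ℝ) - K / l) * P| ≤ 1 := by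
      rw [abs_mul, abs_of_nonneg hP0]
      calc _ ≤ 1 * 1 := mul_le_mul hK'1 hP1 hP0 zero_le_one
        _ = 1 := one_mul 1
    rw [abs_le] at i1 i2 i3 ⊢
    have : (K : ℝ) * ((1 - 1 / l) * P) = K * P - K / l * P := by ring
    rw [this]
    constructor <;> nlinarith [i1.1, i1.2, i2.1, i2.2, i3.1, i3.2]

/-- Among `x, x + y, …, x + 4 ^ ω(D) * y` there is a term divisible by no prime factor of `D`
except those dividing both `x` and `y`. -/
lemma exists_coprime_in_progression (D : ℕ) (x y : ℤ) :
    ∃ c : ℕ, c ≤ 4 ^ D.primeFactors.card ∧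
      ∀ l ∈ D.primeFactors, ¬ ((l : ℤ) ∣ x ∧ (l : ℤ) ∣ y) → ¬ (l : ℤ) ∣ x + y * c := by
  set S : Finset ℕ := D.primeFactors.filter (fun l : ℕ => ¬ (l : ℤ) ∣ y) with hSd
  have hSp : ∀ l ∈ S, l.Prime := fun l hl =>
    Nat.prime_of_mem_primeFactors (Finset.mem_filter.1 hl).1
  have hcard : S.card ≤ D.primeFactors.card := Finset.card_filter_le _ _
  have key := sieve_count S hSp x y (fun l hl => (Finset.mem_filter.1 hl).2) (4 ^ S.card)
  have hprod : (1 / 2 : ℝ) ^ S.card ≤ ∏ l ∈ S, (1 - 1 / (l : ℝ)) := by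
    rw [← Finset.prod_const]
    apply Finset.prod_le_prod (fun _ _ => by norm_num)
    intro l hl
    have : (2 : ℝ) ≤ l := by exact_mod_cast (hSp l hl).two_le
    have : 1 / (l : ℝ) ≤ 1 / 2 := one_div_le_one_div_of_le (by norm_num) this
    linarith
  have hpos : 0 < ((Finset.range (4 ^ S.card)).filter
      (fun k : ℕ => ∀ l ∈ S, ¬ (l : ℤ) ∣ x + y * k)).card := by
    by_contra h0
    have h0 : ((Finset.range (4 ^ S.card)).filter
      (fun k : ℕ => ∀ l ∈ S, ¬ (l : ℤ) ∣ x + y * k)).card = 0 := by omega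
    rw [h0, abs_le] at key
    push_cast at key
    have h4 : (4 : ℝ) ^ S.card * (1 / 2 : ℝ) ^ S.card = 2 ^ S.card := by
      rw [← mul_pow]; norm_num
    have := mul_le_mul_of_nonneg_left hprod (by positivity : (0 : ℝ) ≤ 4 ^ S.card)
    rw [h4] at this
    linarith [key.1]
  obtain ⟨c, hc⟩ := Finset.card_pos.1 hpos
  simp only [Finset.mem_filter, Finset.mem_range] at hc
  refine ⟨c, hc.1.le.trans (Nat.pow_le_pow_right (by norm_num) hcard), fun l hl hxy => ?_⟩
  by_cases hy : (l : ℤ) ∣ y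
  · intro hd
    exact hxy ⟨(Int.dvd_add_left (dvd_mul_of_dvd_left hy _)).1 hd, hy⟩
  · exact hc.2 l (by simp [hSd, hl, hy])

/-- Sub-polynomial growth of `B ^ ω(D)`: every prime factor `l ≥ B ^ (1 / ε)` contributes at most
`l ^ ε`, and the boundedly many smaller ones contribute a constant. -/
lemma pow_card_primeFactors_le (B : ℝ) (hB : 1 ≤ B) (ε : ℝ) (hε : 0 < ε) :
    ∃ C : ℝ, 1 ≤ C ∧ ∀ D : ℕ, D ≠ 0 → B ^ D.primeFactors.card ≤ C * (D : ℝ) ^ ε := by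
  obtain ⟨y, hy⟩ := exists_nat_ge (B ^ (1 / ε))
  refine ⟨B ^ y, one_le_pow₀ hB, fun D hD => ?_⟩
  have hB0 : 0 < B := by linarith
  have hsplit := Finset.card_filter_add_card_filter_not (s := D.primeFactors) (fun l => l < y)
  rw [← hsplit, pow_add]
  have h1 : B ^ (D.primeFactors.filter (fun l => l < y)).card ≤ B ^ y := by
    apply pow_le_pow_right₀ hB
    calc _ ≤ (Finset.range y).card := Finset.card_le_card (fun l hl => by
            simpa using (Finset.mem_filter.1 hl).2)
      _ = y := Finset.card_range y
  have h2 : B ^ (D.primeFactors.filter (fun l => ¬ l < y)).card ≤ (D : ℝ) ^ ε := by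
    have hle : ∏ l ∈ D.primeFactors.filter (fun l => ¬ l < y), l ≤ D := by
      apply Nat.le_of_dvd (Nat.pos_of_ne_zero hD)
      exact (Finset.prod_dvd_prod_of_subset _ _ _ (Finset.filter_subset _ _)).trans
        (Nat.prod_primeFactors_dvd D)
    calc B ^ (D.primeFactors.filter (fun l => ¬ l < y)).card
        = ∏ l ∈ D.primeFactors.filter (fun l => ¬ l < y), B := by rw [Finset.prod_const]
      _ ≤ ∏ l ∈ D.primeFactors.filter (fun l => ¬ l < y), (l : ℝ) ^ ε := by
          apply Finset.prod_le_prod (fun _ _ => hB0.le)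
          intro l hl
          have hl' : (y : ℝ) ≤ l := by
            exact_mod_cast not_lt.1 (Finset.mem_filter.1 hl).2
          calc B = (B ^ (1 / ε)) ^ ε := by
                rw [← Real.rpow_mul hB0.le, one_div_mul_cancel hε.ne', Real.rpow_one]
            _ ≤ (l : ℝ) ^ ε := Real.rpow_le_rpow (by positivity) (hy.trans hl') hε.le
      _ = ((∏ l ∈ D.primeFactors.filter (fun l => ¬ l < y), l : ℕ) : ℝ) ^ ε := by
          push_cast
          rw [Real.finsetProd_rpow]
          intro i _; positivity
      _ ≤ (D : ℝ) ^ ε := Real.rpow_le_rpow (by positivity) (by exact_mod_cast hle) hε.le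
  exact mul_le_mul h1 h2 (by positivity) (by positivity)

/-! ### Coprime lattice points -/

/-- If for every prime some lattice vector of size `r` has zeroth coordinate prime to it, then any
lattice vector can be moved by at most `8 ^ ω(D) * r` so that its zeroth coordinate becomes prime to
`D`. The primes dividing `D` are added one at a time, and `ω(D) * 4 ^ ω(D) ≤ 8 ^ ω(D)`. -/
lemma exists_coprime_shift {n : ℕ} (Λ : AddSubgroup (Fin (n + 1) → ℤ)) (r : ℤ) (hr : 0 ≤ r)
    (hgen : ∀ l : ℕ, l.Prime → ∃ w ∈ Λ, (∀ j, |w j| ≤ r) ∧ ¬ (l : ℤ) ∣ w 0)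
    (D : ℕ) (u : Fin (n + 1) → ℤ) (hu : u ∈ Λ) :
    ∃ v ∈ Λ, (∀ j, |v j - u j| ≤ 8 ^ D.primeFactors.card * r) ∧
      ∀ l ∈ D.primeFactors, ¬ (l : ℤ) ∣ v 0 := by
  have key : ∀ S : Finset ℕ, S ⊆ D.primeFactors → ∃ v ∈ Λ,
      (∀ j, |v j - u j| ≤ S.card * (4 ^ D.primeFactors.card * r)) ∧
      ∀ l ∈ S, ¬ (l : ℤ) ∣ v 0 := by
    intro S
    induction S using Finset.induction_on with
    | empty => intro _; exact ⟨u, hu, by simp, by simp⟩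
    | insert q S hq ih =>
      intro hS
      obtain ⟨v, hv, hvu, hvS⟩ := ih ((Finset.subset_insert _ _).trans hS)
      have hqD := hS (Finset.mem_insert_self _ _)
      obtain ⟨w, hw, hwr, hqw⟩ := hgen q (Nat.prime_of_mem_primeFactors hqD)
      obtain ⟨c, hc, hcl⟩ := exists_coprime_in_progression D (v 0) (w 0)
      refine ⟨v + c • w, Λ.add_mem hv (Λ.nsmul_mem hw c), fun j => ?_, fun l hl => ?_⟩
      · rw [Finset.card_insert_of_notMem hq]
        have e : (v + c • w) j - u j = (v j - u j) + c * w j := by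
          simp; ring
        have h1 : |(c : ℤ) * w j| ≤ 4 ^ D.primeFactors.card * r := by
          rw [abs_mul, Nat.abs_cast]
          exact mul_le_mul (by exact_mod_cast hc) (hwr j) (abs_nonneg _) (by positivity)
        rw [e]
        refine (abs_add_le _ _).trans ?_
        push_cast
        linarith [hvu j]
      · have e : (v + c • w) 0 = v 0 + w 0 * c := by simp; ring
        rw [e]
        refine hcl l (hS hl) ?_
        rintro ⟨h1, h2⟩
        rcases Finset.mem_insert.1 hl with rfl | hlS
        · exact hqw h2
        · exact hvS l hlS h1
  obtain ⟨v, hv, hvu, hvl⟩ := key D.primeFactors subset_rfl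
  refine ⟨v, hv, fun j => (hvu j).trans ?_, hvl⟩
  have : (D.primeFactors.card : ℤ) ≤ 2 ^ D.primeFactors.card := by
    exact_mod_cast Nat.lt_two_pow_self.le
  calc (D.primeFactors.card : ℤ) * (4 ^ D.primeFactors.card * r)
      ≤ 2 ^ D.primeFactors.card * (4 ^ D.primeFactors.card * r) :=
        mul_le_mul_of_nonneg_right this (by positivity)
    _ = 8 ^ D.primeFactors.card * r := by
        rw [← mul_assoc, ← mul_pow]; norm_num

/-- If the kernel lattice of `ψ`, whose index is at most `card A`, has no nonzero vector of sup norm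
at most `n * T`, then its vectors of sup norm at most `R` span, once `(R + 1) ^ (n + 1)` exceeds the
number of pigeonholes. Otherwise these short vectors lie in a hyperplane on which `n` coordinates
bound the remaining one, and the pigeonhole principle produces a nonzero vector of sup norm at most
`n * T`. -/
lemma span_short_vectors {n : ℕ} {A : Type*} [AddCommGroup A] [Fintype A]
    (ψ : (Fin (n + 1) → ℤ) →+ A) (T R : ℕ) (hT : 1 ≤ T)
    (hshort : ∀ v, ψ v = 0 → (∀ j, |v j| ≤ n * T) → v = 0)
    (hR : Fintype.card A * (R / T + 1) ^ n < (R + 1) ^ (n + 1)) :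
    Submodule.span ℝ {x : Fin (n + 1) → ℝ | ∃ v, ψ v = 0 ∧ (∀ j, |v j| ≤ (R : ℤ)) ∧
      x = fun j => (v j : ℝ)} = ⊤ := by
  by_contra hne
  obtain ⟨f, hf0, hf⟩ := Submodule.exists_le_ker_of_lt_top _ (lt_top_iff_ne_top.2 hne)
  set c : Fin (n + 1) → ℝ := fun j => f (fun i => if j = i then 1 else 0) with hc
  have hfc : ∀ x, f x = ∑ j, x j * c j := by
    intro x
    rw [LinearMap.pi_apply_eq_sum_univ f x]
    simp [hc]
  obtain ⟨j₀, hj₀⟩ := Finite.exists_max (fun j => |c j|)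
  have hc0 : 0 < |c j₀| := by
    rw [abs_pos]
    intro h0
    apply hf0
    refine LinearMap.ext fun x => ?_
    rw [hfc, LinearMap.zero_apply]
    have : ∀ j, c j = 0 := fun j => by
      have := hj₀ j
      simp only [h0, abs_zero] at this
      exact abs_nonpos_iff.1 this
    simp [this]
  -- two points of the cube `[0, R]^(n+1)` that agree modulo the lattice and lie in the same
  -- box of side `T` in all coordinates but `j₀`
  obtain ⟨x, y, hxy, hF⟩ := Fintype.exists_ne_map_eq_of_card_lt
    (fun x : Fin (n + 1) → Fin (R + 1) =>
      ((ψ (fun j => ((x j : ℕ) : ℤ)),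
        fun i : Fin n => (⟨(x (j₀.succAbove i) : ℕ) / T,
          Nat.lt_succ_of_le (Nat.div_le_div_right (Nat.le_of_lt_succ (x _).2))⟩ :
            Fin (R / T + 1))) : A × (Fin n → Fin (R / T + 1))))
    (by simpa using hR)
  simp only [Prod.mk.injEq] at hF
  set v : Fin (n + 1) → ℤ := fun j => ((x j : ℕ) : ℤ) - ((y j : ℕ) : ℤ) with hv
  have hψ : ψ v = 0 := by
    have : v = (fun j => ((x j : ℕ) : ℤ)) - (fun j => ((y j : ℕ) : ℤ)) := rfl
    rw [this, map_sub, hF.1, sub_self]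
  have hvR : ∀ j, |v j| ≤ (R : ℤ) := fun j => by
    have h1 := (x j).2
    have h2 := (y j).2
    rw [hv, abs_le]
    constructor <;> simp only <;> omega
  have hvT : ∀ i, |v (j₀.succAbove i)| ≤ (T : ℤ) := fun i => by
    have h1 := congrFun hF.2 i
    simp only [Fin.mk.injEq] at h1
    have h2 := Nat.div_add_mod (x (j₀.succAbove i) : ℕ) T
    have h3 := Nat.div_add_mod (y (j₀.succAbove i) : ℕ) T
    have h4 := Nat.mod_lt (x (j₀.succAbove i) : ℕ) hT
    have h5 := Nat.mod_lt (y (j₀.succAbove i) : ℕ) hT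
    rw [h1] at h2
    rw [hv, abs_le]
    constructor <;> simp only <;> omega
  have hfv : ∑ j, (v j : ℝ) * c j = 0 := by
    rw [← hfc]
    exact hf (Submodule.subset_span ⟨v, hψ, hvR, rfl⟩)
  rw [Fin.sum_univ_succAbove _ j₀] at hfv
  have hv0 : |(v j₀ : ℝ)| ≤ n * T := by
    have h1 : |(v j₀ : ℝ)| * |c j₀| ≤ (n * T) * |c j₀| := by
      rw [← abs_mul, eq_neg_of_add_eq_zero_left hfv, abs_neg]
      refine (Finset.abs_sum_le_sum_abs _ _).trans ?_
      calc ∑ i : Fin n, |(v (j₀.succAbove i) : ℝ) * c (j₀.succAbove i)|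
          ≤ ∑ i : Fin n, (T : ℝ) * |c j₀| := by
            apply Finset.sum_le_sum
            intro i _
            rw [abs_mul]
            exact mul_le_mul (by exact_mod_cast hvT i) (hj₀ _) (abs_nonneg _) (by positivity)
        _ = (n * T) * |c j₀| := by simp [mul_assoc]
    exact le_of_mul_le_mul_right h1 hc0
  have hv00 : v = 0 := by
    apply hshort v hψ
    intro j
    rcases Fin.eq_self_or_eq_succAbove j₀ j with rfl | ⟨i, rfl⟩
    · exact_mod_cast hv0
    · have hn : 1 ≤ n := by have := i.2; omega
      calc _ ≤ (T : ℤ) := hvT i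
        _ = 1 * T := (one_mul _).symm
        _ ≤ n * T := by gcongr; exact_mod_cast hn
  apply hxy
  funext j
  have : v j = 0 := congrFun hv00 j
  simp only [hv, sub_eq_zero] at this
  exact Fin.ext (by exact_mod_cast this)

/-- A spanning set of lattice vectors of sup norm at most `R` bounds the covering radius. -/
lemma exists_lattice_point_near {n : ℕ} (Λ : AddSubgroup (Fin (n + 1) → ℤ)) (R : ℕ)
    (hspan : Submodule.span ℝ {x : Fin (n + 1) → ℝ | ∃ v ∈ Λ, (∀ j, |v j| ≤ (R : ℤ)) ∧
      x = fun j => (v j : ℝ)} = ⊤) (x : Fin (n + 1) → ℝ) :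
    ∃ v ∈ Λ, ∀ j, |x j - v j| ≤ (n + 1) * R := by
  set s := {x : Fin (n + 1) → ℝ | ∃ v ∈ Λ, (∀ j, |v j| ≤ (R : ℤ)) ∧
      x = fun j => (v j : ℝ)} with hs
  let b := (Module.Basis.ofSpan hspan.ge).reindex
    ((Module.Basis.ofSpan hspan.ge).indexEquiv (Pi.basisFun ℝ (Fin (n + 1))))
  have hb : ∀ i, ∃ v ∈ Λ, (∀ j, |v j| ≤ (R : ℤ)) ∧ b i = fun j => (v j : ℝ) := fun i => by
    rw [Module.Basis.reindex_apply]
    exact Module.Basis.ofSpan_subset hspan.ge ⟨_, rfl⟩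
  choose w hw hwR hbw using hb
  refine ⟨∑ i, ⌊b.repr x i⌋ • w i, Λ.sum_mem fun i _ => Λ.zsmul_mem (hw i) _, fun j => ?_⟩
  have hx : x j = ∑ i, b.repr x i * (w i j : ℝ) := by
    conv_lhs => rw [← b.sum_repr x]
    simp [hbw]
  have e : x j - ((∑ i, ⌊b.repr x i⌋ • w i : Fin (n + 1) → ℤ) j : ℝ)
      = ∑ i, Int.fract (b.repr x i) * (w i j : ℝ) := by
    rw [hx]
    simp only [Finset.sum_apply, Pi.smul_apply, smul_eq_mul, Int.cast_sum, Int.cast_mul,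
      ← Finset.sum_sub_distrib, ← sub_mul, Int.self_sub_floor]
  rw [e]
  refine (Finset.abs_sum_le_sum_abs _ _).trans ?_
  calc _ ≤ ∑ i : Fin (n + 1), (R : ℝ) := by
        apply Finset.sum_le_sum
        intro i _
        rw [abs_mul, abs_of_nonneg (Int.fract_nonneg _)]
        have h1 : |(w i j : ℝ)| ≤ R := by exact_mod_cast hwR i j
        nlinarith [Int.fract_nonneg (b.repr x i), Int.fract_lt_one (b.repr x i),
          abs_nonneg (w i j : ℝ)]
    _ = (n + 1) * R := by simp

/-- A lattice with covering radius at most `(n + 1) * R` is generated by vectors of comparable size;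
since it contains a vector `e` with `e 0 = 1`, for every prime one of these has zeroth coordinate
prime to it. -/
lemma exists_short_not_dvd {n : ℕ} (Λ : AddSubgroup (Fin (n + 1) → ℤ)) (R : ℕ)
    (hcov : ∀ x : Fin (n + 1) → ℝ, ∃ v ∈ Λ, ∀ j, |x j - v j| ≤ (n + 1) * R)
    (e : Fin (n + 1) → ℤ) (he : e ∈ Λ) (he0 : e 0 = 1) (l : ℕ) (hl : l.Prime) :
    ∃ w ∈ Λ, (∀ j, |w j| ≤ (2 * (n + 1) * R + 1 : ℤ)) ∧ ¬ (l : ℤ) ∣ w 0 := by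
  by_contra! hcon
  obtain ⟨N, hN⟩ : ∃ N : ℕ, ∀ j, |e j| ≤ (N : ℤ) := by
    refine ⟨∑ j, (e j).natAbs, fun j => ?_⟩
    rw [Int.abs_eq_natAbs]
    exact_mod_cast Finset.single_le_sum (f := fun j => (e j).natAbs)
      (fun _ _ => Nat.zero_le _) (Finset.mem_univ j)
  have hN1 : (1 : ℝ) ≤ N := by
    have := hN 0
    rw [he0] at this
    exact_mod_cast this
  -- walk from `0` to `e` along lattice points close to the segment joining them
  have key : ∀ t : ℕ, ∀ v ∈ Λ, (∀ j, |(t : ℝ) / N * e j - v j| ≤ (n + 1) * R) →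
      (l : ℤ) ∣ v 0 := by
    intro t
    induction t with
    | zero =>
      intro v hv hvx
      refine hcon v hv fun j => ?_
      have h1 := hvx j
      simp only [Nat.cast_zero, zero_div, zero_mul, zero_sub, abs_neg] at h1
      have h2 : |v j| ≤ ((n + 1) * R : ℤ) := by exact_mod_cast h1
      have h3 : (0 : ℤ) ≤ (n + 1) * R := by positivity
      linarith
    | succ t ih =>
      intro v hv hvx
      obtain ⟨v', hv', hvx'⟩ := hcov (fun j => (t : ℝ) / N * e j)
      have h1 := ih v' hv' hvx'
      have h2 := hcon (v - v') (Λ.sub_mem hv hv') fun j => ?_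
      · have := dvd_add h1 h2
        simpa using this
      · have h3 := hvx j
        have h4 := hvx' j
        have h5 : |(e j : ℝ) / N| ≤ 1 := by
          rw [abs_div, Nat.abs_cast, div_le_one (by linarith)]
          exact_mod_cast hN j
        have h6 : (((t + 1 : ℕ) : ℝ) / N * e j) = (t : ℝ) / N * e j + e j / N := by
          push_cast; ring
        rw [h6] at h3
        rw [abs_le] at h3 h4 h5
        have h7 : |((v - v') j : ℝ)| ≤ 2 * (n + 1) * R + 1 := by
          rw [Pi.sub_apply, Int.cast_sub, abs_le]
          constructor <;> linarith [h3.1, h3.2, h4.1, h4.2, h5.1, h5.2]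
        exact_mod_cast h7
  have := key N e he (fun j => by
    rw [div_self (by linarith), one_mul, sub_self, abs_zero]; positivity)
  rw [he0] at this
  have h1 : l ∣ 1 := by exact_mod_cast this
  exact hl.one_lt.ne' (Nat.dvd_one.1 h1)

/-- A lattice without very short vectors contains a vector of size comparable with `Q` whose zeroth
coordinate is prime to `p` and to every other coordinate. A lattice point `a`
near the centre is first shifted so that `a 0` is prime to `b 0` for a short lattice vector `b`. On
the line `v = a + c * b` a common prime of `v 0` and `v i` then divides `a 0 * b i - a i * b 0`, so
it is enough to find a small `c` with `v 0` prime to `p` and to the product of these numbers. -/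
theorem exists_coprime_lattice_point {n : ℕ} {A : Type*} [AddCommGroup A] [Fintype A]
    (ψ : (Fin (n + 1) → ℤ) →+ A) (e : Fin (n + 1) → ℤ) (he : ψ e = 0) (he0 : e 0 = 1)
    (T R : ℕ) (hT : 1 ≤ T)
    (hshort : ∀ v, ψ v = 0 → (∀ j, |v j| ≤ n * T) → v = 0)
    (hR : Fintype.card A * (R / T + 1) ^ n < (R + 1) ^ (n + 1))
    (p : ℕ) (hp : p.Prime) (Q B : ℕ) (hB1 : 1 ≤ B)
    (hB : ∀ D : ℕ, D ≠ 0 → D ≤ p * (2 * Q ^ 2) ^ (n + 1) → 8 ^ D.primeFactors.card ≤ B)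
    (hQ : 100 * (n + 1) * (R + 1) * B ≤ Q) :
    ∃ v, ψ v = 0 ∧ 0 < v 0 ∧ v 0 ≤ Q ∧ (Q : ℤ) ≤ 2 * v 0 ∧ (∀ i : Fin n, |v i.succ| ≤ v 0) ∧
      (∀ i : Fin n, Int.gcd (v i.succ) (v 0) = 1) ∧ ¬ (p : ℤ) ∣ v 0 := by
  set Λ := ψ.ker with hΛ
  have hcov := exists_lattice_point_near Λ R (span_short_vectors ψ T R hT hshort hR)
  have hB1' : (1 : ℝ) ≤ B := by exact_mod_cast hB1
  set r : ℤ := 2 * (n + 1) * R + 1 with hr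
  have hr0 : 0 ≤ r := by positivity
  have hrR : (r : ℝ) = 2 * (n + 1) * R + 1 := by rw [hr]; push_cast; ring
  have hgen : ∀ l : ℕ, l.Prime → ∃ w ∈ Λ, (∀ j, |w j| ≤ r) ∧ ¬ (l : ℤ) ∣ w 0 :=
    exists_short_not_dvd Λ R hcov e he he0
  have hQR : 100 * ((n : ℝ) + 1) * (R + 1) * B ≤ Q := by exact_mod_cast hQ
  have hR0 : (0 : ℝ) ≤ R := Nat.cast_nonneg R
  have hn0 : (0 : ℝ) ≤ n := Nat.cast_nonneg n
  -- the total displacement allowed below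
  have hbud : 32 * (((n : ℝ) + 1) * R) + 32 * (B * r) < Q := by
    rw [hrR]
    nlinarith [mul_nonneg hn0 hR0, mul_nonneg (mul_nonneg hn0 hR0) (by linarith : (0:ℝ) ≤ B - 1),
      mul_nonneg hR0 (by linarith : (0:ℝ) ≤ B - 1), mul_nonneg hn0 (by linarith : (0:ℝ) ≤ B),
      mul_nonneg hR0 (by linarith : (0:ℝ) ≤ B)]
  have hBr : (r : ℝ) ≤ B * r := le_mul_of_one_le_left (by exact_mod_cast hr0) hB1'
  have hBr1 : (1 : ℝ) ≤ B * r := by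
    refine le_trans ?_ hBr
    rw [hrR]; nlinarith [mul_nonneg hn0 hR0]
  have hnR : 0 ≤ ((n : ℝ) + 1) * R := by positivity
  have hrQ : (r : ℝ) ≤ Q := by linarith
  have hrQ' : r ≤ Q := by exact_mod_cast hrQ
  have hQ1 : 1 ≤ Q := by
    have : (1 : ℝ) ≤ Q := by linarith
    exact_mod_cast this
  have hdisp : ∀ D : ℕ, D ≠ 0 → D ≤ p * (2 * Q ^ 2) ^ (n + 1) →
      ((8 ^ D.primeFactors.card * r : ℤ) : ℝ) ≤ B * r := by
    intro D h1 h2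
    have h3 : ((8 ^ D.primeFactors.card : ℕ) : ℝ) ≤ B := by exact_mod_cast hB D h1 h2
    push_cast at h3 ⊢
    exact mul_le_mul_of_nonneg_right h3 (by exact_mod_cast hr0)
  -- the centre `(3Q/4, Q/4, …, Q/4)` keeps `0 < v i < v 0` in a neighbourhood
  obtain ⟨u, hu, hux⟩ := hcov (Fin.cons (3 * (Q : ℝ) / 4) (fun _ => (Q : ℝ) / 4))
  obtain ⟨b, hb, hbr, hb2⟩ := hgen 2 Nat.prime_two
  have hb0 : b 0 ≠ 0 := fun h => hb2 (by rw [h]; exact dvd_zero _)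
  have hpow : 2 * Q ^ 2 ≤ (2 * Q ^ 2) ^ (n + 1) := Nat.le_self_pow (by omega) _
  have hbig : Q ≤ p * (2 * Q ^ 2) ^ (n + 1) := by
    have := hp.pos
    nlinarith
  obtain ⟨a, ha, hau, haD⟩ := exists_coprime_shift Λ r hr0 hgen (b 0).natAbs u hu
  have hau' : ∀ j, |(a j : ℝ) - u j| ≤ B * r := fun j => by
    refine le_trans ?_ (hdisp (b 0).natAbs (by simpa using hb0) (le_trans ?_ hbig))
    · exact_mod_cast hau j
    · zify
      exact (hbr 0).trans hrQ'
  have hab : ∀ l : ℕ, l.Prime → ¬ ((l : ℤ) ∣ a 0 ∧ (l : ℤ) ∣ b 0) := by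
    rintro l hl ⟨h1, h2⟩
    refine haD l ?_ h1
    rw [Nat.mem_primeFactors]
    exact ⟨hl, Int.natCast_dvd.1 h2, by simpa using hb0⟩
  have ha0 : (11 : ℝ) * Q / 16 ≤ a 0 - B * r ∧ (a 0 : ℝ) + B * r ≤ 13 * Q / 16 := by
    have h1 := hux 0
    have h2 := hau' 0
    rw [Fin.cons_zero] at h1
    rw [abs_le] at h1 h2
    constructor <;> linarith [h1.1, h1.2, h2.1, h2.2]
  have hai : ∀ i : Fin n, (3 : ℝ) * Q / 16 ≤ a i.succ - B * r ∧
      (a i.succ : ℝ) + B * r ≤ 5 * Q / 16 := by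
    intro i
    have h1 := hux i.succ
    have h2 := hau' i.succ
    rw [Fin.cons_succ] at h1
    rw [abs_le] at h1 h2
    constructor <;> linarith [h1.1, h1.2, h2.1, h2.2]
  have hQ0 : (1 : ℝ) ≤ Q := by exact_mod_cast hQ1
  have hD0 : ∀ i : Fin n, a 0 * b i.succ - a i.succ * b 0 ≠ 0 := by
    intro i h0
    have h1 : a 0 ∣ a i.succ * b 0 := ⟨b i.succ, by linarith⟩
    have h2 : IsCoprime (a 0) (b 0) := by
      rw [Int.isCoprime_iff_gcd_eq_one]
      by_contra hg
      obtain ⟨l, hl, hld⟩ := Nat.exists_prime_and_dvd hg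
      exact hab l hl ⟨(Int.natCast_dvd_natCast.2 hld).trans (Int.gcd_dvd_left _ _),
        (Int.natCast_dvd_natCast.2 hld).trans (Int.gcd_dvd_right _ _)⟩
    have h3 : a 0 ∣ a i.succ := h2.dvd_of_dvd_mul_right h1
    have h4 : (0 : ℝ) < a i.succ := by linarith [(hai i).1]
    have h5 : (a i.succ : ℝ) < a 0 := by linarith [(hai i).2, ha0.1]
    have := Int.le_of_dvd (by exact_mod_cast h4) h3
    have h6 : a i.succ < a 0 := by exact_mod_cast h5
    linarith
  have haQ : ∀ j, |a j| ≤ (Q : ℤ) := by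
    intro j
    have : |(a j : ℝ)| ≤ Q := by
      rw [abs_le]
      rcases Fin.eq_zero_or_eq_succ j with rfl | ⟨i, rfl⟩
      · constructor <;> linarith [ha0.1, ha0.2]
      · constructor <;> linarith [(hai i).1, (hai i).2]
    exact_mod_cast this
  set D : ℕ := p * ∏ i : Fin n, (a 0 * b i.succ - a i.succ * b 0).natAbs with hD
  have hDne : D ≠ 0 := by
    rw [hD]
    refine mul_ne_zero hp.ne_zero (Finset.prod_ne_zero_iff.2 fun i _ => ?_)
    simpa using hD0 i
  have hDle : D ≤ p * (2 * Q ^ 2) ^ (n + 1) := by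
    rw [hD]
    refine Nat.mul_le_mul_left p ?_
    calc _ ≤ ∏ i : Fin n, (2 * Q ^ 2) := by
          apply Finset.prod_le_prod (fun _ _ => Nat.zero_le _)
          intro i _
          have h1 : |a 0 * b i.succ - a i.succ * b 0| ≤ 2 * (Q : ℤ) ^ 2 := by
            refine (abs_sub _ _).trans ?_
            rw [abs_mul, abs_mul]
            have h2 := mul_le_mul (haQ 0) ((hbr i.succ).trans hrQ') (abs_nonneg _)
              (by positivity)
            have h3 := mul_le_mul (haQ i.succ) ((hbr 0).trans hrQ') (abs_nonneg _)
              (by positivity)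
            linarith [sq (Q : ℤ)]
          zify
          exact h1
      _ = (2 * Q ^ 2) ^ n := by simp
      _ ≤ (2 * Q ^ 2) ^ (n + 1) := Nat.pow_le_pow_right (by positivity) (Nat.le_succ n)
  obtain ⟨c, hc, hcl⟩ := exists_coprime_in_progression D (a 0) (b 0)
  have hcb : ∀ j, |(c : ℝ) * b j| ≤ B * r := by
    intro j
    refine le_trans ?_ (hdisp D hDne hDle)
    have h48 : 4 ^ D.primeFactors.card ≤ 8 ^ D.primeFactors.card :=
      Nat.pow_le_pow_left (by norm_num) _
    rw [abs_mul, Nat.abs_cast]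
    push_cast
    have h1 : (c : ℝ) ≤ 8 ^ D.primeFactors.card := by exact_mod_cast hc.trans h48
    have h2 : |(b j : ℝ)| ≤ r := by exact_mod_cast hbr j
    exact mul_le_mul h1 h2 (abs_nonneg _) (by positivity)
  have hv : ∀ j, (a + c • b) j = a j + b j * c := fun j => by simp; ring
  have hvR : ∀ j, (((a + c • b) j : ℤ) : ℝ) = a j + c * b j := fun j => by
    rw [hv]; push_cast; ring
  have hcop : ∀ l ∈ D.primeFactors, ¬ (l : ℤ) ∣ (a + c • b) 0 := by
    intro l hl
    rw [hv]
    exact hcl l hl (hab l (Nat.prime_of_mem_primeFactors hl))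
  have hv0 := hcb 0
  rw [abs_le] at hv0
  refine ⟨a + c • b, Λ.add_mem ha (Λ.nsmul_mem hb c), ?_, ?_, ?_, fun i => ?_, fun i => ?_, ?_⟩
  · have : (0 : ℝ) < ((a + c • b) 0 : ℤ) := by rw [hvR]; linarith [ha0.1, hv0.1]
    exact_mod_cast this
  · have : (((a + c • b) 0 : ℤ) : ℝ) ≤ Q := by rw [hvR]; linarith [ha0.2, hv0.2]
    exact_mod_cast this
  · have : (Q : ℝ) ≤ 2 * (((a + c • b) 0 : ℤ) : ℝ) := by rw [hvR]; linarith [ha0.1, hv0.1]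
    exact_mod_cast this
  · have hvi := hcb i.succ
    rw [abs_le] at hvi
    have : |(((a + c • b) i.succ : ℤ) : ℝ)| ≤ (((a + c • b) 0 : ℤ) : ℝ) := by
      rw [hvR, hvR, abs_le]
      constructor <;> linarith [ha0.1, hv0.1, (hai i).1, (hai i).2]
    exact_mod_cast this
  · by_contra hg
    obtain ⟨l, hl, hld⟩ := Nat.exists_prime_and_dvd hg
    have h1 : (l : ℤ) ∣ (a + c • b) i.succ :=
      (Int.natCast_dvd_natCast.2 hld).trans (Int.gcd_dvd_left _ _)
    have h2 : (l : ℤ) ∣ (a + c • b) 0 :=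
      (Int.natCast_dvd_natCast.2 hld).trans (Int.gcd_dvd_right _ _)
    refine hcop l ?_ h2
    have h3 : (l : ℤ) ∣ a 0 * b i.succ - a i.succ * b 0 := by
      have : a 0 * b i.succ - a i.succ * b 0
          = (a + c • b) 0 * b i.succ - (a + c • b) i.succ * b 0 := by
        rw [hv, hv]; ring
      rw [this]
      exact dvd_sub (dvd_mul_of_dvd_left h2 _) (dvd_mul_of_dvd_left h1 _)
    rw [Nat.mem_primeFactors]
    refine ⟨hl, ?_, hDne⟩
    rw [hD]
    exact dvd_mul_of_dvd_right ((Int.natCast_dvd.1 h3).trans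
      (Finset.dvd_prod_of_mem (fun i : Fin n => (a 0 * b i.succ - a i.succ * b 0).natAbs)
        (Finset.mem_univ i))) _
  · exact hcop p (Nat.mem_primeFactors.2 ⟨hp, dvd_mul_right _ _, hDne⟩)

/-! ### Hausdorff dimension of Cantor sets built from separated children -/

/-- Data for a Cantor-like construction in an ultrametric space. At level `j` every ball of radius
`q ^ a j` contains `M j` points, spread out at scale `q ^ b j` as evenly as points of a
`d`-dimensional space (up to a factor `2`), whose neighbourhoods of radius `q ^ a (j + 1)` lie in
the target set `G j`. The inequality `small` makes `s` a lower bound for the dimension. -/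
structure CantorScheme (X : Type*) [MetricSpace X] (q : ℝ) (d : ℕ) (s : ℝ) (G : ℕ → Set X) where
  a : ℕ → ℕ
  b : ℕ → ℕ
  M : ℕ → ℕ
  F : ∀ j, X → Fin (M j) → X
  a_le : ∀ j, a j ≤ b j
  b_le : ∀ j, b j ≤ a (j + 1)
  a_lt : ∀ j, a j < a (j + 1)
  M_pos : ∀ j, 0 < M j
  small : ∀ j, 4 * q ^ (b j * d) ≤ q ^ s * (q ^ a (j + 1)) ^ s * q ^ (a j * d)
  M_large : ∀ j, q ^ (a j * d) ≤ 2 * M j * q ^ (b j * d)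
  near : ∀ j x c, dist (F j x c) x ≤ q ^ a j
  good : ∀ j x c, Metric.closedBall (F j x c) (q ^ a (j + 1)) ⊆ G j
  sep : ∀ j x y l, l ≤ b j →
    ((Finset.univ.filter fun c => dist (F j x c) y ≤ q ^ l).card : ℝ) * q ^ (b j * d) ≤ q ^ (l * d)

namespace CantorScheme

variable {X : Type*} [MetricSpace X] {q : ℝ} {d : ℕ} {s : ℝ} {G : ℕ → Set X}

/-- The centre of the level `j` ball with address `ω`. -/
def z (S : CantorScheme X q d s G) (x₀ : X) : ℕ → (∀ j, Fin (S.M j)) → X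
  | 0, _ => x₀
  | j + 1, ω => S.F j (S.z x₀ j ω) (ω j)

lemma z_dist [IsUltrametricDist X] (S : CantorScheme X q d s G) (hq0 : 0 < q) (hq1 : q < 1)
    (x₀ : X) (ω : ∀ j, Fin (S.M j)) (j i : ℕ) :
    dist (S.z x₀ (j + i) ω) (S.z x₀ j ω) ≤ q ^ S.a j := by
  induction i with
  | zero => simp only [add_zero, dist_self]; positivity
  | succ i ih =>
    refine (dist_triangle_max _ (S.z x₀ (j + i) ω) _).trans (max_le ?_ ih)
    refine (S.near (j + i) _ _).trans (pow_le_pow_of_le_one hq0.le hq1.le ?_)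
    exact (strictMono_nat_of_lt_succ S.a_lt).monotone (Nat.le_add_right _ _)

lemma exists_limit [IsUltrametricDist X] [CompleteSpace X] (S : CantorScheme X q d s G)
    (hq0 : 0 < q) (hq1 : q < 1) (x₀ : X) (ω : ∀ j, Fin (S.M j)) :
    ∃ x, Filter.Tendsto (fun j => S.z x₀ j ω) Filter.atTop (nhds x) ∧
      ∀ j, dist x (S.z x₀ j ω) ≤ q ^ S.a j := by
  have ha := strictMono_nat_of_lt_succ S.a_lt
  have h0 : Filter.Tendsto (fun j => q ^ S.a j) Filter.atTop (nhds 0) :=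
    (tendsto_pow_atTop_nhds_zero_of_lt_one hq0.le hq1).comp ha.tendsto_atTop
  have hc : CauchySeq (fun j => S.z x₀ j ω) := by
    refine cauchySeq_of_le_tendsto_0' (fun j => q ^ S.a j) (fun n m hnm => ?_) h0
    obtain ⟨i, rfl⟩ := Nat.exists_eq_add_of_le hnm
    rw [dist_comm]
    exact S.z_dist hq0 hq1 x₀ ω n i
  obtain ⟨x, hx⟩ := cauchySeq_tendsto_of_complete hc
  refine ⟨x, hx, fun j => ?_⟩
  refine le_of_tendsto (hx.dist tendsto_const_nhds) ?_
  filter_upwards [Filter.eventually_ge_atTop j] with m hm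
  obtain ⟨i, rfl⟩ := Nat.exists_eq_add_of_le hm
  exact S.z_dist hq0 hq1 x₀ ω j i

lemma z_locallyConstant (S : CantorScheme X q d s G) (x₀ : X) (j : ℕ) :
    IsLocallyConstant (S.z x₀ j) := by
  induction j with
  | zero => exact IsLocallyConstant.const x₀
  | succ j ih =>
    have h1 : IsLocallyConstant (fun ω : ∀ j, Fin (S.M j) => ω j) :=
      (IsLocallyConstant.iff_continuous _).2 (continuous_apply j)
    exact (ih.prodMk h1).comp (fun t => S.F j t.1 t.2)

lemma z_congr (S : CantorScheme X q d s G) (x₀ : X) (ω ω' : ∀ j, Fin (S.M j)) (j : ℕ)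
    (h : ∀ i < j, ω i = ω' i) : S.z x₀ j ω = S.z x₀ j ω' := by
  induction j with
  | zero => rfl
  | succ j ih =>
    simp only [z]
    rw [ih fun i hi => h i (hi.trans (Nat.lt_succ_self j)), h j (Nat.lt_succ_self j)]

/-- Addresses whose points are `q ^ l`-close agree at all levels with separation scale at least
`q ^ l`. -/
lemma address_eq [IsUltrametricDist X] (S : CantorScheme X q d s G) (hq0 : 0 < q) (hq1 : q < 1)
    (x₀ : X) (φ : (∀ j, Fin (S.M j)) → X) (hφ : ∀ ω j, dist (φ ω) (S.z x₀ j ω) ≤ q ^ S.a j)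
    (ω ω' : ∀ j, Fin (S.M j)) (i l : ℕ) (hl : S.b i ≤ l) (hd : dist (φ ω) (φ ω') ≤ q ^ l) :
    ∀ t < i + 1, ω t = ω' t := by
  have ha := (strictMono_nat_of_lt_succ S.a_lt).monotone
  have hb : Monotone S.b := monotone_nat_of_le_succ fun j => (S.b_le j).trans (S.a_le (j + 1))
  intro t
  induction t using Nat.strong_induction_on with
  | _ t ih =>
    intro ht
    have hz := S.z_congr x₀ ω ω' t fun i' hi' => ih i' hi' (hi'.trans ht)
    -- both children are within the separation scale of the first one
    have h1 : dist (S.F t (S.z x₀ t ω) (ω' t)) (S.z x₀ (t + 1) ω) ≤ q ^ S.b t := by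
      have e : S.F t (S.z x₀ t ω) (ω' t) = S.z x₀ (t + 1) ω' := by rw [hz]; rfl
      rw [e]
      have g1 : q ^ S.a (t + 1) ≤ q ^ S.b t := pow_le_pow_of_le_one hq0.le hq1.le (S.b_le t)
      have g2 : q ^ l ≤ q ^ S.b t :=
        pow_le_pow_of_le_one hq0.le hq1.le ((hb (Nat.lt_succ_iff.1 ht)).trans hl)
      refine (dist_triangle_max _ (φ ω') _).trans (max_le ?_ ?_)
      · rw [dist_comm]; exact (hφ ω' (t + 1)).trans g1
      · refine (dist_triangle_max _ (φ ω) _).trans (max_le ?_ ((hφ ω (t + 1)).trans g1))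
        rw [dist_comm]; exact hd.trans g2
    have h2 := S.sep t (S.z x₀ t ω) (S.z x₀ (t + 1) ω) (S.b t) le_rfl
    have hpos : 0 < q ^ (S.b t * d) := by positivity
    have h3 : ((Finset.univ.filter fun c =>
        dist (S.F t (S.z x₀ t ω) c) (S.z x₀ (t + 1) ω) ≤ q ^ S.b t).card : ℝ) ≤ 1 := by
      by_contra hcon
      push Not at hcon
      nlinarith
    have h4 := Finset.card_le_one.1 (by exact_mod_cast h3 : (Finset.univ.filter fun c =>
        dist (S.F t (S.z x₀ t ω) c) (S.z x₀ (t + 1) ω) ≤ q ^ S.b t).card ≤ 1)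
    refine h4 _ ?_ _ ?_
    · simp only [Finset.mem_filter, Finset.mem_univ, true_and]
      change dist (S.z x₀ (t + 1) ω) _ ≤ _
      rw [dist_self]; positivity
    · simpa using h1

/-- The natural probability measure on addresses: all children of a ball are equally likely. -/
noncomputable def addrMeasure (S : CantorScheme X q d s G) : Measure (∀ j, Fin (S.M j)) :=
  Measure.infinitePi fun j =>
    haveI : Nonempty (Fin (S.M j)) := ⟨⟨0, S.M_pos j⟩⟩
    (PMF.uniformOfFintype (Fin (S.M j))).toMeasure

instance (S : CantorScheme X q d s G) : IsProbabilityMeasure S.addrMeasure := by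
  unfold addrMeasure
  infer_instance

lemma addrMeasure_cylinder (S : CantorScheme X q d s G) (n : ℕ)
    (t : ∀ j, Finset (Fin (S.M j))) :
    S.addrMeasure {ω | ∀ j < n, ω j ∈ t j} =
      ENNReal.ofReal (∏ j ∈ Finset.range n, ((t j).card : ℝ) / S.M j) := by
  have e : {ω : ∀ j, Fin (S.M j) | ∀ j < n, ω j ∈ t j}
      = Set.pi (Finset.range n : Set ℕ) fun j => (t j : Set (Fin (S.M j))) := by
    ext ω; simp [Set.mem_pi]
  rw [e, addrMeasure, Measure.infinitePi_pi _ fun j _ => (t j).measurableSet]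
  rw [ENNReal.ofReal_prod_of_nonneg fun j _ => by positivity]
  refine Finset.prod_congr rfl fun j _ => ?_
  have hM : (0 : ℝ) < S.M j := by exact_mod_cast S.M_pos j
  have : Nonempty (Fin (S.M j)) := ⟨⟨0, S.M_pos j⟩⟩
  rw [PMF.toMeasure_uniformOfFintype_apply (hs := (t j).measurableSet), ENNReal.ofReal_div_of_pos hM]
  simp

/-- Mass of a ball of radius `q ^ l` around a point of the Cantor set. -/
lemma measure_ball_le [IsUltrametricDist X] (S : CantorScheme X q d s G) (hq0 : 0 < q)
    (hq1 : q < 1) (hs : 0 ≤ s) (hsd : s ≤ d) (x₀ : X) (φ : (∀ j, Fin (S.M j)) → X)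
    (hφ : ∀ ω j, dist (φ ω) (S.z x₀ j ω) ≤ q ^ S.a j) (ω₀ : ∀ j, Fin (S.M j)) (l : ℕ)
    (hl : S.b 0 ≤ l) :
    S.addrMeasure {ω | dist (φ ω) (φ ω₀) ≤ q ^ l} ≤ ENNReal.ofReal ((q ^ (l + 1)) ^ s) := by
  have ha := (strictMono_nat_of_lt_succ S.a_lt)
  have hex : ∃ j, l < S.b j :=
    ⟨l + 1, (Nat.lt_of_succ_le (ha.le_apply)).trans_le (S.a_le (l + 1))⟩
  obtain ⟨i, hi1, hi2⟩ : ∃ i, S.b i ≤ l ∧ l < S.b (i + 1) := by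
    have h1 := Nat.find_spec hex
    have h0 : Nat.find hex ≠ 0 := fun h => by rw [h] at h1; omega
    refine ⟨Nat.find hex - 1, not_lt.1 (Nat.find_min hex (by omega)), ?_⟩
    rwa [Nat.sub_add_cancel (Nat.pos_of_ne_zero h0)]
  have hM : ∀ j, (0 : ℝ) < S.M j := fun j => by exact_mod_cast S.M_pos j
  have hM1 : ∀ j, (1 : ℝ) ≤ S.M j := fun j => by exact_mod_cast S.M_pos j
  set P : ℝ := ∏ j ∈ Finset.range (i + 1), (1 : ℝ) / S.M j with hP
  have hP0 : 0 ≤ P := Finset.prod_nonneg fun j _ => by positivity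
  -- the mass of a ball of level `i + 1`
  have hPs : 2 * P ≤ q ^ s * (q ^ S.a (i + 1)) ^ s := by
    have h1 : P ≤ 1 / S.M i := by
      rw [hP, Finset.prod_range_succ]
      refine mul_le_of_le_one_left (by have := hM i; positivity) (Finset.prod_le_one
        (fun j _ => by positivity) fun j _ => ?_)
      rw [div_le_one (hM j)]; exact hM1 j
    have h2 := S.M_large i
    have h3 := S.small i
    have h4 : 0 < q ^ (S.a i * d) := by positivity
    have h5 : 0 < q ^ (S.b i * d) := by positivity
    have h6 : 2 * (1 / (S.M i : ℝ)) * q ^ (S.a i * d) ≤ 4 * q ^ (S.b i * d) := by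
      rw [mul_one_div, div_mul_eq_mul_div, div_le_iff₀ (hM i)]
      linarith
    have h7 : 2 * P * q ^ (S.a i * d) ≤ q ^ s * (q ^ S.a (i + 1)) ^ s * q ^ (S.a i * d) := by
      refine le_trans ?_ (h6.trans h3)
      gcongr
    exact le_of_mul_le_mul_right h7 h4
  have hagree := S.address_eq hq0 hq1 x₀ φ hφ
  have hqs : q ^ s * (q ^ l) ^ s = (q ^ (l + 1)) ^ s := by
    rw [← Real.mul_rpow hq0.le (by positivity), ← pow_succ']
  by_cases hla : l ≤ S.a (i + 1)
  · have hsub : {ω | dist (φ ω) (φ ω₀) ≤ q ^ l} ⊆ {ω | ∀ j < i + 1, ω j ∈ ({ω₀ j} : Finset _)} := by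
      intro ω hω j hj
      simpa using hagree ω ω₀ i l hi1 hω j hj
    refine (measure_mono hsub).trans ?_
    rw [S.addrMeasure_cylinder (i + 1) fun j => {ω₀ j}]
    apply ENNReal.ofReal_le_ofReal
    simp only [Finset.card_singleton, Nat.cast_one]
    rw [← hqs]
    calc P ≤ 2 * P := by linarith
      _ ≤ _ := hPs
      _ ≤ _ := by
        gcongr q ^ s * ?_
        exact Real.rpow_le_rpow (by positivity) (pow_le_pow_of_le_one hq0.le hq1.le hla) hs
  · push Not at hla
    set F₀ : Finset (Fin (S.M (i + 1))) := Finset.univ.filter fun c =>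
      dist (S.F (i + 1) (S.z x₀ (i + 1) ω₀) c) (φ ω₀) ≤ q ^ l with hF₀
    have hsub : {ω | dist (φ ω) (φ ω₀) ≤ q ^ l} ⊆ {ω | ∀ j < i + 1 + 1,
        ω j ∈ (if h : j = i + 1 then h ▸ F₀ else {ω₀ j} : Finset (Fin (S.M j)))} := by
      intro ω hω j hj
      have hag := hagree ω ω₀ i l hi1 hω
      by_cases h : j = i + 1
      · subst h
        simp only [dite_true, hF₀, Finset.mem_filter, Finset.mem_univ, true_and]
        rw [S.z_congr x₀ ω₀ ω (i + 1) fun t ht => (hag t ht).symm]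
        change dist (S.z x₀ (i + 1 + 1) ω) _ ≤ _
        refine (dist_triangle_max _ (φ ω) _).trans (max_le ?_ hω)
        rw [dist_comm]
        exact (hφ ω (i + 1 + 1)).trans
          (pow_le_pow_of_le_one hq0.le hq1.le (hi2.le.trans (S.b_le (i + 1))))
      · simp only [h, dite_false, Finset.mem_singleton]
        exact hag j (by omega)
    refine (measure_mono hsub).trans ?_
    rw [S.addrMeasure_cylinder (i + 1 + 1) fun j =>
      if h : j = i + 1 then h ▸ F₀ else {ω₀ j}]
    apply ENNReal.ofReal_le_ofReal
    rw [Finset.prod_range_succ]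
    have hp1 : ∏ j ∈ Finset.range (i + 1),
        (((if h : j = i + 1 then h ▸ F₀ else {ω₀ j} : Finset (Fin (S.M j))).card : ℝ) / S.M j)
        = P := by
      refine Finset.prod_congr rfl fun j hj => ?_
      have : j ≠ i + 1 := (Finset.mem_range.1 hj).ne
      simp [this]
    rw [hp1]
    simp only [dite_true]
    have hsep := S.sep (i + 1) (S.z x₀ (i + 1) ω₀) (φ ω₀) l hi2.le
    rw [← hF₀] at hsep
    have hML := S.M_large (i + 1)
    have hB : 0 < q ^ (S.b (i + 1) * d) := by positivity
    have hcard : (F₀.card : ℝ) / S.M (i + 1) ≤ 2 * (q ^ (l - S.a (i + 1))) ^ d := by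
      rw [div_le_iff₀ (hM _)]
      have e : q ^ (l * d) = (q ^ (l - S.a (i + 1))) ^ d * q ^ (S.a (i + 1) * d) := by
        rw [← pow_mul, ← pow_add, ← add_mul, Nat.sub_add_cancel hla.le]
      refine le_of_mul_le_mul_right (hsep.trans ?_) hB
      rw [e]
      have := mul_le_mul_of_nonneg_left hML
        (by positivity : 0 ≤ (q ^ (l - S.a (i + 1))) ^ d)
      linarith
    have hle1 : q ^ (l - S.a (i + 1)) ≤ 1 := pow_le_one₀ hq0.le hq1.le
    have hdl : (q ^ (l - S.a (i + 1))) ^ d ≤ (q ^ (l - S.a (i + 1))) ^ s := by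
      rw [← Real.rpow_natCast]
      exact Real.rpow_le_rpow_of_exponent_ge (by positivity) hle1 hsd
    have hfin : (q ^ S.a (i + 1)) ^ s * (q ^ (l - S.a (i + 1))) ^ s = (q ^ l) ^ s := by
      rw [← Real.mul_rpow (by positivity) (by positivity), ← pow_add,
        Nat.add_sub_cancel' hla.le]
    have hx0 : 0 ≤ (q ^ (l - S.a (i + 1))) ^ s := by positivity
    calc P * ((F₀.card : ℝ) / S.M (i + 1)) ≤ P * (2 * (q ^ (l - S.a (i + 1))) ^ s) := by
          gcongr
          linarith
      _ = 2 * P * (q ^ (l - S.a (i + 1))) ^ s := by ring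
      _ ≤ q ^ s * (q ^ S.a (i + 1)) ^ s * (q ^ (l - S.a (i + 1))) ^ s := by gcongr
      _ = (q ^ (l + 1)) ^ s := by rw [mul_assoc, hfin, hqs]

/-- Mass distribution principle for a Cantor scheme. -/
lemma le_dimH [IsUltrametricDist X] [CompleteSpace X] [MeasurableSpace X] [BorelSpace X]
    [Nonempty X] {s : NNReal} {G : ℕ → Set X} (S : CantorScheme X q d s G) (hq0 : 0 < q)
    (hq1 : q < 1) (hs : 0 < s) (hsd : (s : ℝ) ≤ d) : (s : ℝ≥0∞) ≤ dimH (⋂ j, G j) := by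
  obtain ⟨x₀⟩ := ‹Nonempty X›
  choose φ hφt hφ using S.exists_limit hq0 hq1 x₀
  have hmeas : Measurable φ := by
    refine measurable_of_tendsto_metrizable (f := fun j => S.z x₀ j) (fun j => ?_)
      (tendsto_pi_nhds.2 hφt)
    exact (S.z_locallyConstant x₀ j).continuous.measurable
  have hG : ∀ ω, φ ω ∈ ⋂ j, G j := by
    intro ω
    refine Set.mem_iInter.2 fun j => S.good j (S.z x₀ j ω) (ω j) ?_
    exact hφ ω (j + 1)
  have hs' : (0 : ℝ) < s := hs
  set ν := S.addrMeasure.map φ with hν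
  have hball : ∀ x l, S.b 0 ≤ l → ν (Metric.closedBall x (q ^ l))
      ≤ ENNReal.ofReal ((q ^ (l + 1)) ^ (s : ℝ)) := by
    intro x l hl
    rw [hν, Measure.map_apply hmeas Metric.isClosed_closedBall.measurableSet]
    by_cases hx : ∃ ω₀, φ ω₀ ∈ Metric.closedBall x (q ^ l)
    · obtain ⟨ω₀, hω₀⟩ := hx
      rw [IsUltrametricDist.closedBall_eq_of_mem hω₀]
      exact S.measure_ball_le hq0 hq1 hs'.le hsd x₀ φ hφ ω₀ l hl
    · push Not at hx
      have e : φ ⁻¹' Metric.closedBall x (q ^ l) = ∅ := by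
        ext ω; simpa using hx ω
      rw [e]
      simp
  have hle : ν ≤ Measure.hausdorffMeasure (s : ℝ) := by
    refine Measure.le_hausdorffMeasure _ _ (ENNReal.ofReal (q ^ S.b 0))
      (ENNReal.ofReal_pos.2 (by positivity)) fun U hU => ?_
    rcases U.eq_empty_or_nonempty with rfl | ⟨u, hu⟩
    · simp
    have hUl : ∀ l : ℕ, Metric.ediam U ≤ ENNReal.ofReal (q ^ l) →
        U ⊆ Metric.closedBall u (q ^ l) := by
      intro l hl v hv
      rw [Metric.mem_closedBall]
      have := (Metric.edist_le_ediam_of_mem hv hu).trans hl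
      rwa [edist_dist, ENNReal.ofReal_le_ofReal_iff (by positivity)] at this
    have hfin : Metric.ediam U ≠ ⊤ := ne_top_of_le_ne_top ENNReal.ofReal_ne_top hU
    by_cases h0 : Metric.ediam U = 0
    · rw [h0, ENNReal.zero_rpow_of_pos hs']
      have hlim : Filter.Tendsto (fun l : ℕ => ENNReal.ofReal ((q ^ (l + 1)) ^ (s : ℝ)))
          Filter.atTop (nhds (ENNReal.ofReal ((0 : ℝ) ^ (s : ℝ)))) := by
        refine ENNReal.tendsto_ofReal ?_
        refine Filter.Tendsto.rpow_const ?_ (Or.inr hs'.le)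
        exact (tendsto_pow_atTop_nhds_zero_of_lt_one hq0.le hq1).comp
          (Filter.tendsto_add_atTop_nat 1)
      rw [Real.zero_rpow hs'.ne', ENNReal.ofReal_zero] at hlim
      refine ge_of_tendsto hlim ?_
      filter_upwards [Filter.eventually_ge_atTop (S.b 0)] with l hl
      exact (measure_mono (hUl l (by rw [h0]; exact zero_le))).trans (hball u l hl)
    · have hpos : 0 < (Metric.ediam U).toReal := ENNReal.toReal_pos h0 hfin
      have hle : (Metric.ediam U).toReal ≤ q ^ S.b 0 :=
        ENNReal.toReal_le_of_le_ofReal (by positivity) hU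
      obtain ⟨l, hl1, hl2⟩ := exists_nat_pow_near_of_lt_one hpos
        (hle.trans (pow_le_one₀ hq0.le hq1.le)) hq0 hq1
      have hll : S.b 0 ≤ l := by
        by_contra hcon
        push Not at hcon
        have : q ^ S.b 0 ≤ q ^ (l + 1) := pow_le_pow_of_le_one hq0.le hq1.le hcon
        linarith
      refine (measure_mono (hUl l ?_)).trans ((hball u l hll).trans ?_)
      · rw [← ENNReal.ofReal_toReal hfin]
        exact ENNReal.ofReal_le_ofReal hl2
      · rw [← ENNReal.ofReal_rpow_of_nonneg (by positivity) hs'.le]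
        refine ENNReal.rpow_le_rpow ?_ hs'.le
        rw [← ENNReal.ofReal_toReal hfin]
        exact ENNReal.ofReal_le_ofReal hl1.le
  refine le_dimH_of_hausdorffMeasure_ne_zero fun h => ?_
  have h1 : ν (⋂ j, G j) = 0 := le_antisymm ((hle _).trans h.le) (zero_le)
  have h2 := Measure.le_map_apply (f := φ) hmeas.aemeasurable (μ := S.addrMeasure) (⋂ j, G j)
  have e : φ ⁻¹' (⋂ j, G j) = Set.univ := Set.eq_univ_of_forall fun ω => hG ω
  rw [e, measure_univ, ← hν, h1] at h2
  simp at h2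

end CantorScheme

/-- Lower bound for the Hausdorff dimension of `⋂ N, G N` in an ultrametric space, when for all `a`
and `N` every ball of radius `q ^ a` contains evenly spread small balls lying in `G N`. -/
lemma le_dimH_iInter_of_step {X : Type*} [MetricSpace X] [IsUltrametricDist X] [CompleteSpace X]
    [MeasurableSpace X] [BorelSpace X] [Nonempty X] {q : ℝ} {d : ℕ} {s : NNReal} {G : ℕ → Set X}
    (hq0 : 0 < q) (hq1 : q < 1) (hs : 0 < s) (hsd : (s : ℝ) ≤ d)
    (H : ∀ a N : ℕ, ∃ (b k M : ℕ) (F : X → Fin M → X), a ≤ b ∧ b ≤ k ∧ a < k ∧ 0 < M ∧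
      4 * q ^ (b * d) ≤ q ^ (s : ℝ) * (q ^ k) ^ (s : ℝ) * q ^ (a * d) ∧
      q ^ (a * d) ≤ 2 * M * q ^ (b * d) ∧
      (∀ x c, dist (F x c) x ≤ q ^ a) ∧
      (∀ x c, Metric.closedBall (F x c) (q ^ k) ⊆ G N) ∧
      (∀ x y l, l ≤ b → ((Finset.univ.filter fun c => dist (F x c) y ≤ q ^ l).card : ℝ)
        * q ^ (b * d) ≤ q ^ (l * d))) :
    (s : ℝ≥0∞) ≤ dimH (⋂ j, G j) := by
  choose b k M F h1 h2 h3 h4 h5 h6 h7 h8 h9 using H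
  let a : ℕ → ℕ := fun j => Nat.rec 0 (fun j r => k r j) j
  have ha : ∀ j, a (j + 1) = k (a j) j := fun j => rfl
  exact CantorScheme.le_dimH (q := q) (d := d)
    { a := a
      b := fun j => b (a j) j
      M := fun j => M (a j) j
      F := fun j => F (a j) j
      a_le := fun j => h1 _ _
      b_le := fun j => h2 _ _
      a_lt := fun j => h3 _ _
      M_pos := fun j => h4 _ _
      small := fun j => h5 _ _
      M_large := fun j => h6 _ _
      near := fun j => h7 _ _
      good := fun j => h8 _ _
      sep := fun j => h9 _ _ } hq0 hq1 hs hsd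

/-! ### Counting integer points close to `α` -/

/-- A nonzero integer satisfies `|z|_∞ |z|_p ≥ 1`. -/
lemma one_le_abs_mul_norm {p : ℕ} [Fact p.Prime] {z : ℤ} (hz : z ≠ 0) :
    1 ≤ (|z| : ℝ) * ‖(z : ℤ_[p])‖ := by
  have hz' : (z : ℤ_[p]) ≠ 0 := by exact_mod_cast hz
  have hp : (0 : ℝ) < p := by exact_mod_cast (Fact.out : p.Prime).pos
  have h1 := PadicInt.norm_eq_zpow_neg_valuation hz'
  have h2 : ((p ^ (z : ℤ_[p]).valuation : ℕ) : ℤ) ∣ z := by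
    have := (PadicInt.norm_int_le_pow_iff_dvd (p := p) (k := z) (n := (z : ℤ_[p]).valuation)).1 h1.le
    exact_mod_cast this
  have h3 : ((p ^ (z : ℤ_[p]).valuation : ℕ) : ℤ) ≤ |z| :=
    Int.le_of_dvd (abs_pos.2 hz) ((dvd_abs _ _).2 h2)
  have h4 : (p : ℝ) ^ (z : ℤ_[p]).valuation ≤ |(z : ℝ)| := by exact_mod_cast h3
  rw [h1, zpow_neg, zpow_natCast, ← div_eq_mul_inv, le_div_iff₀ (by positivity), one_mul]
  exact h4

/-- For `σ > (m + 1) / m`, the constant exponents `(σ, …, σ)` are admissible for only finitely many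
`Q`, because their sum exceeds the Diophantine exponent `m + 1`. -/
lemma exists_no_small {p : ℕ} [Fact p.Prime] {m : ℕ} (α : Fin m → ℤ_[p])
    (hα : dioExp α = (m : ℝ) + 1) {σ : ℝ} (hσ : (m : ℝ) + 1 < m * σ) :
    ∃ Q₀ : ℕ, ∀ L ≥ Q₀, ∀ q₀ : ℤ, ∀ q : Fin m → ℤ, 0 < q₀ → q₀ ≤ L → (∀ i, |q i| ≤ (L : ℤ)) →
      ∃ i, (L : ℝ) ^ (-σ) ≤ ‖(q₀ : ℤ_[p]) * α i - (q i : ℤ_[p])‖ := by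
  by_contra hcon
  push Not at hcon
  unfold dioExp at hα
  -- the supremum of an unbounded set would be `0`, not `m + 1`
  have hbdd := not_imp_comm.1 Real.sSup_of_not_bddAbove (by
    rw [hα]; positivity)
  have := le_csSup hbdd (a := m * σ) ⟨fun _ => σ, by simp, hcon⟩
  rw [hα] at this
  linarith

/-- Pigeonhole bound for the number of approximations of `α` of height at most `T` to a precision
that is not attained by any approximation of height at most `L`. -/
lemma card_approx_le {p : ℕ} [Fact p.Prime] {m : ℕ} (α : Fin m → ℤ_[p]) {σ θ : ℝ} (hσ : 1 ≤ σ)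
    {L T : ℕ} (hL : 1 ≤ L)
    (hno : ∀ q₀ : ℤ, ∀ q : Fin m → ℤ, 0 < q₀ → q₀ ≤ L → (∀ i, |q i| ≤ (L : ℤ)) →
      ∃ i, (L : ℝ) ^ (-σ) ≤ ‖(q₀ : ℤ_[p]) * α i - (q i : ℤ_[p])‖)
    (hθ : θ ≤ (L : ℝ) ^ (-σ)) (W : Finset (ℤ × (Fin m → ℤ)))
    (hW : ∀ w ∈ W, 0 < w.1 ∧ w.1 ≤ T ∧ (∀ i, |w.2 i| ≤ (T : ℤ)) ∧
      ∀ i, ‖(w.1 : ℤ_[p]) * α i - (w.2 i : ℤ_[p])‖ < θ) :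
    W.card ≤ (2 * T / L + 1) ^ (m + 1) := by
  have hL' : (0 : ℤ) < L := by exact_mod_cast hL
  let f : ℤ × (Fin m → ℤ) → ℤ × (Fin m → ℤ) := fun w => (w.1 / L, fun i => (w.2 i + T) / L)
  have hcard : (Finset.Icc (0 : ℤ) (2 * T / L) ×ˢ
      Fintype.piFinset fun _ : Fin m => Finset.Icc (0 : ℤ) (2 * T / L)).card
      = (2 * T / L + 1) ^ (m + 1) := by
    rw [Finset.card_product, Fintype.card_piFinset]
    have : (Finset.Icc (0 : ℤ) (2 * T / L)).card = 2 * T / L + 1 := by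
      rw [Int.card_Icc]
      have : (2 * (T : ℤ) / L) = ((2 * T / L : ℕ) : ℤ) := by push_cast; rfl
      rw [this, sub_zero]; exact Int.toNat_natCast (2 * T / L + 1)
    rw [this]
    simp [pow_succ, mul_comm]
  rw [← hcard]
  refine Finset.card_le_card_of_injOn f (fun w hw => ?_) ?_
  · obtain ⟨h1, h2, h3, -⟩ := hW w hw
    simp only [f, Finset.coe_product, Set.mem_prod, Finset.mem_coe, Finset.mem_Icc,
      Fintype.mem_piFinset]
    refine ⟨⟨Int.ediv_nonneg h1.le hL'.le, Int.ediv_le_ediv hL' (by omega)⟩, fun i => ?_⟩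
    have := abs_le.1 (h3 i)
    exact ⟨Int.ediv_nonneg (by omega) hL'.le, Int.ediv_le_ediv hL' (by omega)⟩
  -- two approximations in the same cell differ by a better one with coordinates below `L`
  have key : ∀ w ∈ W, ∀ w' ∈ W, f w = f w' → w'.1 ≤ w.1 → w = w' := by
    intro w hw w' hw' hf hle
    obtain ⟨-, -, -, h4⟩ := hW w hw
    obtain ⟨-, -, -, h4'⟩ := hW w' hw'
    have hdiv : ∀ x y : ℤ, x / L = y / L → |x - y| ≤ L := by
      intro x y hxy
      have e1 := Int.mul_ediv_add_emod x L
      have e2 := Int.mul_ediv_add_emod y L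
      have e3 := Int.emod_nonneg x hL'.ne'
      have e4 := Int.emod_nonneg y hL'.ne'
      have e5 := Int.emod_lt_of_pos x hL'
      have e6 := Int.emod_lt_of_pos y hL'
      rw [hxy] at e1
      rw [abs_le]; constructor <;> linarith
    have hd1 : |w.1 - w'.1| ≤ L := hdiv _ _ (congrArg Prod.fst hf)
    have hd2 : ∀ i, |w.2 i - w'.2 i| ≤ L := fun i => by
      have := hdiv _ _ (congrFun (congrArg Prod.snd hf) i)
      simpa using this
    have hsmall : ∀ i, ‖((w.1 - w'.1 : ℤ) : ℤ_[p]) * α i - ((w.2 i - w'.2 i : ℤ) : ℤ_[p])‖ < θ := by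
      intro i
      have e : ((w.1 - w'.1 : ℤ) : ℤ_[p]) * α i - ((w.2 i - w'.2 i : ℤ) : ℤ_[p])
          = ((w.1 : ℤ_[p]) * α i - w.2 i) - ((w'.1 : ℤ_[p]) * α i - w'.2 i) := by
        push_cast; ring
      rw [e, sub_eq_add_neg]
      refine (PadicInt.nonarchimedean _ _).trans_lt (max_lt (h4 i) ?_)
      rw [norm_neg]; exact h4' i
    rcases hle.lt_or_eq with hlt | heq
    · obtain ⟨i, hi⟩ := hno (w.1 - w'.1) (fun i => w.2 i - w'.2 i) (by omega)
        ((le_abs_self _).trans hd1) hd2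
      exact absurd (hsmall i) (not_lt.2 (hθ.trans hi))
    · refine Prod.ext heq.symm (funext fun i => ?_)
      by_contra hne
      have hne' : w.2 i - w'.2 i ≠ 0 := sub_ne_zero.2 hne
      have h1 := one_le_abs_mul_norm (p := p) hne'
      have h2 := hsmall i
      rw [heq, sub_self, Int.cast_zero, zero_mul, zero_sub, norm_neg] at h2
      have h3 : (|((w.2 i - w'.2 i : ℤ) : ℝ)|) ≤ L := by exact_mod_cast hd2 i
      have hL1 : (1 : ℝ) ≤ L := by exact_mod_cast hL
      have h4 : (L : ℝ) ^ (-σ) ≤ (L : ℝ) ^ (-1 : ℝ) :=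
        Real.rpow_le_rpow_of_exponent_le hL1 (by linarith)
      rw [Real.rpow_neg_one] at h4
      have h5 := h2.trans_le (hθ.trans h4)
      have h6 : (|((w.2 i - w'.2 i : ℤ) : ℝ)|) * ‖((w.2 i - w'.2 i : ℤ) : ℤ_[p])‖
          < L * (L : ℝ)⁻¹ :=
        mul_lt_mul_of_nonneg_of_pos' h3 h5 (norm_nonneg _) (by linarith)
      rw [mul_inv_cancel₀ (by linarith)] at h6
      linarith
  intro w hw w' hw' hf
  rcases le_total w'.1 w.1 with h | h
  · exact key w hw w' hw' hf h
  · exact (key w' hw' w hw hf.symm h).symm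

/-- At most `6 * T` residues modulo `P` become congruent to an integer of size at most `T` after
multiplication by a positive `w ≤ T`. -/
lemma card_mul_small (P T w : ℕ) (hw : 0 < w) (hwT : w ≤ T) (hTP : 2 * T < P) :
    ((Finset.range P).filter fun X : ℕ =>
      ∃ q : ℤ, |q| ≤ T ∧ (P : ℤ) ∣ (w : ℤ) * (X : ℤ) - q).card ≤ 6 * T := by
  let f : ℕ → ℕ × ℕ := fun X => ((w * X + T) / P, ((w * X + T) % P) / w)
  have h1 : (Finset.range (w + 1) ×ˢ Finset.range (2 * T / w + 1)).card ≤ 6 * T := by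
    rw [Finset.card_product, Finset.card_range, Finset.card_range]
    have := Nat.div_mul_le_self (2 * T) w
    have h2 : 2 * T / w ≤ 2 * T := Nat.div_le_self _ _
    nlinarith
  refine le_trans (Finset.card_le_card_of_injOn f (fun X hX => ?_) ?_) h1
  · simp only [Finset.coe_filter, Finset.mem_range, Set.mem_ofPred_eq] at hX
    obtain ⟨hXP, q, hq, c, hc⟩ := hX
    obtain ⟨hq1, hq2⟩ := abs_le.1 hq
    have hmod : (((w * X + T) % P : ℕ) : ℤ) = q + T := by
      push_cast
      have : (w : ℤ) * X + T = (q + T) + P * c := by linarith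
      rw [this, Int.add_mul_emod_self_left, Int.emod_eq_of_lt (by omega) (by omega)]
    simp only [f, Finset.coe_product, Set.mem_prod, Finset.mem_coe, Finset.mem_range]
    constructor
    · rw [Nat.div_lt_iff_lt_mul (by omega)]
      nlinarith
    · refine Nat.lt_succ_of_le (Nat.div_le_div_right ?_)
      omega
  · intro X hX Y hY hf
    simp only [f, Prod.mk.injEq] at hf
    obtain ⟨e1, e2⟩ := hf
    have a1 := Nat.div_add_mod (w * X + T) P
    have a2 := Nat.div_add_mod (w * Y + T) P
    have b1 := Nat.div_add_mod ((w * X + T) % P) w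
    have b2 := Nat.div_add_mod ((w * Y + T) % P) w
    have c1 := Nat.mod_lt ((w * X + T) % P) hw
    have c2 := Nat.mod_lt ((w * Y + T) % P) hw
    rw [e1] at a1
    rw [e2] at b1
    have g1 : w * X < w * (Y + 1) := by rw [mul_add]; omega
    have g2 : w * Y < w * (X + 1) := by rw [mul_add]; omega
    have := Nat.lt_of_mul_lt_mul_left g1
    have := Nat.lt_of_mul_lt_mul_left g2
    omega

/-! ### Coprime rational approximations near a given point -/

/-- A coprime lattice point for simultaneous `p`-adic approximation of `β` with precision
`p ^ (-K i)` in the `i`-th coordinate. -/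
lemma exists_coprime_approx {p : ℕ} [Fact p.Prime] {n : ℕ} (β : Fin n → ℤ_[p]) (K : Fin n → ℕ)
    (T R Q B : ℕ) (hT : 1 ≤ T)
    (hshort : ∀ v : Fin (n + 1) → ℤ,
      (∀ i, ‖(v 0 : ℤ_[p]) * β i - (v i.succ : ℤ_[p])‖ ≤ (p : ℝ) ^ (-(K i : ℤ))) →
      (∀ j, |v j| ≤ n * T) → v = 0)
    (hR : p ^ (∑ i, K i) * (R / T + 1) ^ n < (R + 1) ^ (n + 1)) (hB1 : 1 ≤ B)
    (hB : ∀ D : ℕ, D ≠ 0 → D ≤ p * (2 * Q ^ 2) ^ (n + 1) → 8 ^ D.primeFactors.card ≤ B)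
    (hQ : 100 * (n + 1) * (R + 1) * B ≤ Q) :
    ∃ v : Fin (n + 1) → ℤ,
      (∀ i, ‖(v 0 : ℤ_[p]) * β i - (v i.succ : ℤ_[p])‖ ≤ (p : ℝ) ^ (-(K i : ℤ))) ∧
      0 < v 0 ∧ v 0 ≤ Q ∧ (Q : ℤ) ≤ 2 * v 0 ∧ (∀ i : Fin n, |v i.succ| ≤ v 0) ∧
      (∀ i : Fin n, Int.gcd (v i.succ) (v 0) = 1) ∧ ¬ (p : ℤ) ∣ v 0 := by
  have hp : p.Prime := Fact.out
  have : NeZero p := ⟨hp.ne_zero⟩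
  let ψ : (Fin (n + 1) → ℤ) →+ (∀ i, ZMod (p ^ K i)) :=
    { toFun := fun v i => PadicInt.toZModPow (K i) ((v 0 : ℤ_[p]) * β i - (v i.succ : ℤ_[p]))
      map_zero' := by ext i; simp
      map_add' := fun v w => by
        funext i
        change PadicInt.toZModPow (K i) (((v 0 + w 0 : ℤ) : ℤ_[p]) * β i
          - ((v i.succ + w i.succ : ℤ) : ℤ_[p])) = PadicInt.toZModPow (K i) _
          + PadicInt.toZModPow (K i) _
        rw [← map_add]
        congr 1
        push_cast
        ring }
  have hψ : ∀ v, ψ v = 0 ↔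
      ∀ i, ‖(v 0 : ℤ_[p]) * β i - (v i.succ : ℤ_[p])‖ ≤ (p : ℝ) ^ (-(K i : ℤ)) := by
    intro v
    rw [funext_iff]
    refine forall_congr' fun i => ?_
    rw [PadicInt.norm_le_pow_iff_mem_span_pow, ← PadicInt.ker_toZModPow, RingHom.mem_ker]
    rfl
  let e : Fin (n + 1) → ℤ := Fin.cons 1 fun i => ((β i).appr (K i) : ℤ)
  have he : ψ e = 0 := by
    rw [hψ]
    intro i
    rw [PadicInt.norm_le_pow_iff_mem_span_pow]
    have := PadicInt.appr_spec (K i) (β i)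
    simpa [e] using this
  obtain ⟨v, h1, h2⟩ := exists_coprime_lattice_point ψ e he (by simp [e]) T R hT
    (fun v hv => hshort v ((hψ v).1 hv)) (by
      rw [Fintype.card_pi]
      simpa [ZMod.card, Finset.prod_pow_eq_pow_sum] using hR) p hp Q B hB1 hB hQ
  exact ⟨v, (hψ v).1 h1, h2⟩

/-- Away from few residue classes modulo `p ^ k'`, the lattice attached to `(x, α)` has no short
vectors. -/
lemma exists_bad_set {p : ℕ} [Fact p.Prime] {d m : ℕ}
    (α : Fin m → ℤ_[p]) (k' k S C : ℕ) (hkk : k' ≤ k) (hS : 2 * S < p ^ k')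
    (hC : ∀ W : Finset (ℤ × (Fin m → ℤ)), (∀ w ∈ W, 0 < w.1 ∧ w.1 ≤ S ∧
      (∀ i, |w.2 i| ≤ (S : ℤ)) ∧
      ∀ i, ‖(w.1 : ℤ_[p]) * α i - (w.2 i : ℤ_[p])‖ ≤ (p : ℝ) ^ (-(k : ℤ))) → W.card ≤ C) :
    ∃ E : Finset (Fin d → ℕ), E.card ≤ C * (6 * S) ^ d ∧
      ∀ Y : Fin d → ℕ, (∀ i, Y i < p ^ k') → Y ∉ E → ∀ v : Fin (d + m + 1) → ℤ,
        (∀ i : Fin d, ‖(v 0 : ℤ_[p]) * (Y i : ℤ_[p]) - (v (Fin.castAdd m i).succ : ℤ_[p])‖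
          ≤ (p : ℝ) ^ (-(k' : ℤ))) →
        (∀ i : Fin m, ‖(v 0 : ℤ_[p]) * α i - (v (Fin.natAdd d i).succ : ℤ_[p])‖
          ≤ (p : ℝ) ^ (-(k : ℤ))) →
        (∀ j, |v j| ≤ (S : ℤ)) → v = 0 := by
  set W : Finset (ℤ × (Fin m → ℤ)) := (Finset.Icc (1 : ℤ) S ×ˢ
    Fintype.piFinset fun _ => Finset.Icc (-(S : ℤ)) S).filter fun w =>
      ∀ i, ‖(w.1 : ℤ_[p]) * α i - (w.2 i : ℤ_[p])‖ ≤ (p : ℝ) ^ (-(k : ℤ)) with hW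
  have hmem : ∀ w, w ∈ W ↔ 0 < w.1 ∧ w.1 ≤ S ∧ (∀ i, |w.2 i| ≤ (S : ℤ)) ∧
      ∀ i, ‖(w.1 : ℤ_[p]) * α i - (w.2 i : ℤ_[p])‖ ≤ (p : ℝ) ^ (-(k : ℤ)) := by
    intro w
    simp only [hW, Finset.mem_filter, Finset.mem_product, Finset.mem_Icc, Fintype.mem_piFinset,
      abs_le]
    constructor
    · rintro ⟨⟨⟨h1, h2⟩, h3⟩, h4⟩; exact ⟨by omega, h2, h3, h4⟩
    · rintro ⟨h1, h2, h3, h4⟩; exact ⟨⟨⟨by omega, h2⟩, h3⟩, h4⟩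
  refine ⟨W.biUnion fun w => Fintype.piFinset fun _ => (Finset.range (p ^ k')).filter
    fun X : ℕ => ∃ q : ℤ, |q| ≤ S ∧ ((p ^ k' : ℕ) : ℤ) ∣ (w.1.toNat : ℤ) * (X : ℤ) - q, ?_, ?_⟩
  · refine (Finset.card_biUnion_le_card_mul _ _ ((6 * S) ^ d) fun w hw => ?_).trans
      (Nat.mul_le_mul_right _ (hC W fun w hw => (hmem w).1 hw))
    obtain ⟨h1, h2, -⟩ := (hmem w).1 hw
    rw [Fintype.card_piFinset, Finset.prod_const, Finset.card_univ, Fintype.card_fin]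
    exact Nat.pow_le_pow_left (card_mul_small (p ^ k') S w.1.toNat (by omega) (by omega) hS) d
  · intro Y hY hYE
    -- vectors with positive first coordinate are excluded by the choice of the bad set
    have hpos : ∀ v : Fin (d + m + 1) → ℤ,
        (∀ i : Fin d, ‖(v 0 : ℤ_[p]) * (Y i : ℤ_[p]) - (v (Fin.castAdd m i).succ : ℤ_[p])‖
          ≤ (p : ℝ) ^ (-(k' : ℤ))) →
        (∀ i : Fin m, ‖(v 0 : ℤ_[p]) * α i - (v (Fin.natAdd d i).succ : ℤ_[p])‖
          ≤ (p : ℝ) ^ (-(k : ℤ))) →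
        (∀ j, |v j| ≤ (S : ℤ)) → ¬ 0 < v 0 := by
      intro v h1 h2 h3 h0
      apply hYE
      rw [Finset.mem_biUnion]
      refine ⟨(v 0, fun i => v (Fin.natAdd d i).succ),
        (hmem _).2 ⟨h0, (le_abs_self _).trans (h3 0), fun i => h3 _, h2⟩, ?_⟩
      rw [Fintype.mem_piFinset]
      intro i
      rw [Finset.mem_filter, Finset.mem_range]
      refine ⟨hY i, v (Fin.castAdd m i).succ, h3 _, ?_⟩
      have := h1 i
      rw [show (v 0 : ℤ_[p]) * (Y i : ℤ_[p]) - (v (Fin.castAdd m i).succ : ℤ_[p])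
        = ((v 0 * (Y i : ℤ) - v (Fin.castAdd m i).succ : ℤ) : ℤ_[p]) by push_cast; rfl,
        PadicInt.norm_int_le_pow_iff_dvd] at this
      rw [Int.toNat_of_nonneg h0.le]
      exact_mod_cast this
    intro v h1 h2 h3
    have hneg : ¬ 0 < -v 0 := by
      refine hpos (-v) (fun i => ?_) (fun i => ?_) (fun j => by simpa using h3 j)
      · have := h1 i
        rw [← norm_neg] at this
        refine le_trans (le_of_eq ?_) this
        rw [Pi.neg_apply, Pi.neg_apply]
        congr 1
        push_cast
        ring
      · have := h2 i
        rw [← norm_neg] at this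
        refine le_trans (le_of_eq ?_) this
        rw [Pi.neg_apply, Pi.neg_apply]
        congr 1
        push_cast
        ring
    have h0 : v 0 = 0 := by
      have := hpos v h1 h2 h3
      omega
    have hzero : ∀ (z : ℤ), |z| ≤ S → ‖((z : ℤ) : ℤ_[p])‖ ≤ (p : ℝ) ^ (-(k' : ℤ)) → z = 0 := by
      intro z hz hn
      rw [PadicInt.norm_int_le_pow_iff_dvd] at hn
      refine Int.eq_zero_of_abs_lt_dvd hn ?_
      have : ((p ^ k' : ℕ) : ℤ) = (p : ℤ) ^ k' := by push_cast; rfl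
      omega
    have hp1 : (1 : ℝ) ≤ p := by exact_mod_cast (Fact.out : p.Prime).one_lt.le
    funext j
    refine Fin.cases h0 (fun j => ?_) j
    refine Fin.addCases (fun i => ?_) (fun i => ?_) j
    · refine hzero _ (h3 _) ?_
      have := h1 i
      rwa [h0, Int.cast_zero, zero_mul, zero_sub, norm_neg] at this
    · refine hzero _ (h3 _) ?_
      have := h2 i
      rw [h0, Int.cast_zero, zero_mul, zero_sub, norm_neg] at this
      exact this.trans (zpow_le_zpow_right₀ hp1 (by omega))

/-- If the lattice attached to `(Y, α)` has no short vectors, then near `Y` there is a rational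
point `(v₁, …, v_d) / v₀` for which `(v₁, …, vₙ) / v₀` witnesses membership in `𝔄_{v₀}` for a whole
ball. The denominator `v₀` is prime to `p`, so the division takes place in `ℤ_p`. -/
lemma exists_center {p : ℕ} [Fact p.Prime] {d m : ℕ} (α : Fin m → ℤ_[p]) {τ : ℝ} (hτ : 0 ≤ τ)
    (k' k T R Q B N : ℕ) (hT : 1 ≤ T) (Y : Fin d → ℤ_[p])
    (hshort : ∀ v : Fin (d + m + 1) → ℤ,
      (∀ i : Fin d, ‖(v 0 : ℤ_[p]) * Y i - (v (Fin.castAdd m i).succ : ℤ_[p])‖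
        ≤ (p : ℝ) ^ (-(k' : ℤ))) →
      (∀ i : Fin m, ‖(v 0 : ℤ_[p]) * α i - (v (Fin.natAdd d i).succ : ℤ_[p])‖
        ≤ (p : ℝ) ^ (-(k : ℤ))) →
      (∀ j, |v j| ≤ (((d + m) * T : ℕ) : ℤ)) → v = 0)
    (hR : p ^ (d * k' + m * k) * (R / T + 1) ^ (d + m) < (R + 1) ^ (d + m + 1)) (hB1 : 1 ≤ B)
    (hB : ∀ D : ℕ, D ≠ 0 → D ≤ p * (2 * Q ^ 2) ^ (d + m + 1) → 8 ^ D.primeFactors.card ≤ B)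
    (hQ : 100 * (d + m + 1) * (R + 1) * B ≤ Q)
    (hkQ : (p : ℝ) ^ (-(k : ℤ)) < (Q : ℝ) ^ (-τ)) (hN : 2 * N ≤ Q) :
    ∃ y : Fin d → ℤ_[p], dist y Y ≤ (p : ℝ)⁻¹ ^ k' ∧ Metric.closedBall y ((p : ℝ)⁻¹ ^ k) ⊆
      {x | ∃ q₀ ≥ N, Fin.append x α ∈ Aset (fun _ : Fin (d + m) => τ) q₀} := by
  have hpow : ∀ n : ℕ, (p : ℝ)⁻¹ ^ n = (p : ℝ) ^ (-(n : ℤ)) := fun n => by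
    rw [inv_pow, zpow_neg, zpow_natCast]
  obtain ⟨v, h1, h2, h3, h4, h5, h6, h7⟩ := exists_coprime_approx (Fin.append Y α)
    (Fin.append (fun _ : Fin d => k') (fun _ : Fin m => k)) T R Q B hT (fun v hv hv' => by
      refine hshort v (fun i => ?_) (fun i => ?_) fun j => ?_
      · simpa using hv (Fin.castAdd m i)
      · simpa using hv (Fin.natAdd d i)
      · exact_mod_cast hv' j) (by simpa [Fin.sum_univ_add] using hR) hB1 hB hQ
  have hunit : ‖((v 0 : ℤ) : ℤ_[p])‖ = 1 := by
    refine le_antisymm (PadicInt.norm_le_one _) (not_lt.1 fun h => h7 ?_)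
    exact PadicInt.norm_intCast_lt_one_iff.1 h
  obtain ⟨u, hu⟩ := PadicInt.isUnit_iff.2 hunit
  have hinv : ((v 0 : ℤ) : ℤ_[p]) * (↑u⁻¹ : ℤ_[p]) = 1 := by rw [← hu]; exact u.mul_inv
  have hdiv : ∀ (x : ℤ_[p]) (w : ℤ), ‖x - (w : ℤ_[p]) * (↑u⁻¹ : ℤ_[p])‖
      = ‖((v 0 : ℤ) : ℤ_[p]) * x - w‖ := by
    intro x w
    have e : ((v 0 : ℤ) : ℤ_[p]) * x - w
        = (v 0 : ℤ) * (x - (w : ℤ_[p]) * (↑u⁻¹ : ℤ_[p])) := by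
      linear_combination (w : ℤ_[p]) * hinv
    rw [e, norm_mul, hunit, one_mul]
  refine ⟨fun i => (v (Fin.castAdd m i).succ : ℤ_[p]) * (↑u⁻¹ : ℤ_[p]), ?_, fun x hx => ?_⟩
  · rw [dist_pi_le_iff (by positivity)]
    intro i
    rw [dist_comm, dist_eq_norm, hdiv, hpow]
    simpa using h1 (Fin.castAdd m i)
  · have hv0 : ((v 0).toNat : ℤ) = v 0 := Int.toNat_of_nonneg h2.le
    refine ⟨(v 0).toNat, by omega, ?_⟩
    have hx' : ∀ i, ‖Fin.append x α i - (v i.succ : ℤ_[p]) * (↑u⁻¹ : ℤ_[p])‖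
        ≤ (p : ℝ) ^ (-(k : ℤ)) := by
      intro i
      refine Fin.addCases (fun i => ?_) (fun i => ?_) i
      · rw [Metric.mem_closedBall, dist_pi_le_iff (by positivity)] at hx
        have := hx i
        rw [dist_eq_norm, hpow] at this
        simpa using this
      · rw [hdiv]
        simpa using h1 (Fin.natAdd d i)
    simp only [Aset, Set.mem_iUnion, exists_prop]
    refine ⟨fun i => v i.succ, fun i => ⟨by rw [hv0]; exact h5 i, by rw [hv0]; exact h6 i⟩,
      fun i => ?_⟩
    have hq : (((v 0).toNat : ℕ) : ℚ_[p]) = ((((v 0 : ℤ) : ℤ_[p])) : ℚ_[p]) := by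
      rw [← Int.cast_natCast, hv0]; simp
    have hne : ((((v 0 : ℤ) : ℤ_[p])) : ℚ_[p]) ≠ 0 := by
      intro h0
      have h0' : ((v 0 : ℤ) : ℤ_[p]) = 0 :=
        PadicInt.ext (h0.trans PadicInt.coe_zero.symm)
      rw [h0', norm_zero] at hunit
      exact zero_ne_one hunit
    have e : ((Fin.append x α i : ℤ_[p]) : ℚ_[p]) - ((v i.succ : ℤ) : ℚ_[p])
        / (((v 0).toNat : ℕ) : ℚ_[p])
        = ((Fin.append x α i - (v i.succ : ℤ_[p]) * (↑u⁻¹ : ℤ_[p]) : ℤ_[p]) : ℚ_[p]) := by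
      rw [hq]
      have hinv' := congrArg (fun z : ℤ_[p] => (z : ℚ_[p])) hinv
      simp only [PadicInt.coe_mul, PadicInt.coe_one] at hinv'
      rw [PadicInt.coe_sub, PadicInt.coe_mul, div_eq_mul_inv, inv_eq_of_mul_eq_one_right hinv']
      simp
    change ‖_‖ < _
    rw [e, PadicInt.padic_norm_e_of_padicInt]
    refine (hx' i).trans_lt (hkQ.trans_le ?_)
    have hpos : (0 : ℝ) < ((v 0).toNat : ℝ) := by
      have : 0 < (v 0).toNat := by omega
      exact_mod_cast this
    refine Real.rpow_le_rpow_of_nonpos hpos ?_ (by linarith)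
    have : (v 0).toNat ≤ Q := by omega
    exact_mod_cast this

/-- The inductive step of the Cantor construction, under numerical conditions on the parameters. At
least half of the residue classes modulo `p ^ k'` in a ball of radius `p ^ (-a)` carry one of the
centres of `exists_center`. -/
lemma exists_children {p : ℕ} [Fact p.Prime] {d m : ℕ} (α : Fin m → ℤ_[p]) {τ : ℝ} (hτ : 0 ≤ τ)
    (a k' k T R Q B N C : ℕ) (hT : 1 ≤ T) (hak : a ≤ k') (hkk : k' ≤ k)
    (hS : 2 * ((d + m) * T) < p ^ k')
    (hC : ∀ W : Finset (ℤ × (Fin m → ℤ)), (∀ w ∈ W, 0 < w.1 ∧ w.1 ≤ ((d + m) * T : ℕ) ∧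
      (∀ i, |w.2 i| ≤ (((d + m) * T : ℕ) : ℤ)) ∧
      ∀ i, ‖(w.1 : ℤ_[p]) * α i - (w.2 i : ℤ_[p])‖ ≤ (p : ℝ) ^ (-(k : ℤ))) → W.card ≤ C)
    (hE : 2 * (C * (6 * ((d + m) * T)) ^ d) ≤ p ^ (d * (k' - a)))
    (hR : p ^ (d * k' + m * k) * (R / T + 1) ^ (d + m) < (R + 1) ^ (d + m + 1)) (hB1 : 1 ≤ B)
    (hB : ∀ D : ℕ, D ≠ 0 → D ≤ p * (2 * Q ^ 2) ^ (d + m + 1) → 8 ^ D.primeFactors.card ≤ B)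
    (hQ : 100 * (d + m + 1) * (R + 1) * B ≤ Q)
    (hkQ : (p : ℝ) ^ (-(k : ℤ)) < (Q : ℝ) ^ (-τ)) (hN : 2 * N ≤ Q) :
    ∃ (M : ℕ) (F : (Fin d → ℤ_[p]) → Fin M → (Fin d → ℤ_[p])), 0 < M ∧
      ((p : ℝ)⁻¹) ^ (a * d) ≤ 2 * M * (p : ℝ)⁻¹ ^ (k' * d) ∧
      (∀ x c, dist (F x c) x ≤ (p : ℝ)⁻¹ ^ a) ∧
      (∀ x c, Metric.closedBall (F x c) ((p : ℝ)⁻¹ ^ k) ⊆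
        {x | ∃ q₀ ≥ N, Fin.append x α ∈ Aset (fun _ : Fin (d + m) => τ) q₀}) ∧
      (∀ x y l, l ≤ k' →
        ((Finset.univ.filter fun c => dist (F x c) y ≤ (p : ℝ)⁻¹ ^ l).card : ℝ)
          * (p : ℝ)⁻¹ ^ (k' * d) ≤ (p : ℝ)⁻¹ ^ (l * d)) := by
  have hp : p.Prime := Fact.out
  have hp1 : 1 < p := hp.one_lt
  have hpR : (1 : ℝ) < p := by exact_mod_cast hp1
  have hpow : ∀ n : ℕ, (p : ℝ)⁻¹ ^ n = (p : ℝ) ^ (-(n : ℤ)) := fun n => by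
    rw [inv_pow, zpow_neg, zpow_natCast]
  have hmono : ∀ i j : ℕ, i ≤ j → (p : ℝ)⁻¹ ^ j ≤ (p : ℝ)⁻¹ ^ i := fun i j h =>
    pow_le_pow_of_le_one (by positivity) (inv_le_one_of_one_le₀ hpR.le) h
  have happr : ∀ (n : ℕ) (x : ℤ_[p]), dist ((x.appr n : ℕ) : ℤ_[p]) x ≤ (p : ℝ)⁻¹ ^ n := by
    intro n x
    rw [dist_comm, dist_eq_norm, hpow, PadicInt.norm_le_pow_iff_mem_span_pow]
    exact PadicInt.appr_spec n x
  have hdistdvd : ∀ (n X Z : ℕ), dist (X : ℤ_[p]) (Z : ℤ_[p]) ≤ (p : ℝ)⁻¹ ^ n →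
      X % p ^ n = Z % p ^ n := by
    intro n X Z h
    rw [dist_eq_norm, hpow, ← Int.cast_natCast X, ← Int.cast_natCast Z, ← Int.cast_sub,
      PadicInt.norm_int_le_pow_iff_dvd] at h
    have : (Z : ℤ) ≡ X [ZMOD (p ^ n : ℕ)] := by
      rw [Int.modEq_iff_dvd]; exact_mod_cast h
    exact ((Int.natCast_modEq_iff).1 this).symm
  obtain ⟨E, hEcard, hEgood⟩ := exists_bad_set (d := d) α k' k ((d + m) * T) C hkk hS hC
  -- the good residue classes modulo `p ^ k'` inside a ball of radius `p ^ (-a)`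
  let g : (Fin d → ℤ_[p]) → (Fin d → Fin (p ^ (k' - a))) → (Fin d → ℕ) :=
    fun x u i => (x i).appr a + p ^ a * u i
  have hg_lt : ∀ x u i, g x u i < p ^ k' := by
    intro x u i
    have h1 := PadicInt.appr_lt (x i) a
    have h2 : (u i : ℕ) + 1 ≤ p ^ (k' - a) := (u i).2
    have h3 : p ^ k' = p ^ a * p ^ (k' - a) := by rw [← pow_add, Nat.add_sub_cancel' hak]
    have h4 := Nat.mul_le_mul_left (p ^ a) h2
    simp only [g]
    rw [h3]
    rw [mul_add] at h4
    omega
  have hg_inj : ∀ x, Function.Injective (g x) := by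
    intro x u u' h
    funext i
    have := congrFun h i
    simp only [g] at this
    have h2 : p ^ a * (u i : ℕ) = p ^ a * (u' i : ℕ) := by omega
    exact Fin.ext (Nat.eq_of_mul_eq_mul_left (by positivity) h2)
  have hg_near : ∀ x u, dist (fun i => ((g x u i : ℕ) : ℤ_[p])) x ≤ (p : ℝ)⁻¹ ^ a := by
    intro x u
    rw [dist_pi_le_iff (by positivity)]
    intro i
    refine (dist_triangle_max _ (((x i).appr a : ℕ) : ℤ_[p]) _).trans (max_le ?_ (happr a (x i)))
    rw [dist_eq_norm]
    simp only [g]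
    push_cast
    rw [add_sub_cancel_left, hpow, PadicInt.norm_le_pow_iff_mem_span_pow]
    exact Ideal.mul_mem_right _ _ (Ideal.subset_span rfl)
  set M := p ^ (d * (k' - a)) - E.card with hM
  have hEM : 2 * E.card ≤ p ^ (d * (k' - a)) := le_trans (by omega) hE
  have hMpos : 0 < M := by
    have : 0 < p ^ (d * (k' - a)) := by positivity
    omega
  have hcount : ∀ x, Nonempty (Fin M ↪ {u // g x u ∉ E}) := by
    intro x
    refine Function.Embedding.nonempty_of_card_le ?_
    rw [Fintype.card_fin, Fintype.card_subtype_compl]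
    have h1 : Fintype.card (Fin d → Fin (p ^ (k' - a))) = p ^ (d * (k' - a)) := by
      simp [← pow_mul, mul_comm]
    have h2 : Fintype.card {u // g x u ∈ E} ≤ E.card := by
      rw [← Fintype.card_coe E]
      refine Fintype.card_le_of_injective (fun u => ⟨g x u.1, u.2⟩) fun u u' h => ?_
      exact Subtype.ext (hg_inj x (congrArg Subtype.val h))
    omega
  let ι := fun x => (hcount x).some
  have hcenter : ∀ x c, ∃ y : Fin d → ℤ_[p],
      dist y (fun i => ((g x (ι x c) i : ℕ) : ℤ_[p])) ≤ (p : ℝ)⁻¹ ^ k' ∧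
      Metric.closedBall y ((p : ℝ)⁻¹ ^ k) ⊆
      {x | ∃ q₀ ≥ N, Fin.append x α ∈ Aset (fun _ : Fin (d + m) => τ) q₀} := by
    intro x c
    exact exists_center α hτ k' k T R Q B N hT _
      (hEgood _ (hg_lt x (ι x c)) (ι x c).2) hR hB1 hB hQ hkQ hN
  choose F hF1 hF2 using hcenter
  refine ⟨M, F, hMpos, ?_, ?_, hF2, ?_⟩
  · have h1 : (p : ℝ) ^ (d * (k' - a)) ≤ 2 * M := by
      have : p ^ (d * (k' - a)) ≤ 2 * M := by omega
      exact_mod_cast this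
    calc (p : ℝ)⁻¹ ^ (a * d) = (p : ℝ) ^ (d * (k' - a)) * (p : ℝ)⁻¹ ^ (k' * d) := by
          have : k' * d = a * d + d * (k' - a) := by
            rw [mul_comm d, ← add_mul, Nat.add_sub_cancel' hak]
          rw [this, pow_add, inv_pow, inv_pow]
          field_simp
      _ ≤ _ := by gcongr
  · intro x c
    exact (dist_triangle_max _ _ _).trans (max_le ((hF1 x c).trans (hmono a k' hak))
      (hg_near x (ι x c)))
  · intro x y l hl
    have hcard : (Finset.univ.filter fun c => dist (F x c) y ≤ (p : ℝ)⁻¹ ^ l).card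
        ≤ p ^ (d * (k' - l)) := by
      have h1 : (Fintype.piFinset fun _ : Fin d => Finset.range (p ^ (k' - l))).card
          = p ^ (d * (k' - l)) := by
        simp [← pow_mul, mul_comm]
      rw [← h1]
      refine Finset.card_le_card_of_injOn (fun c i => g x (ι x c) i / p ^ l) (fun c _ => ?_) ?_
      · simp only [Finset.mem_coe, Fintype.mem_piFinset, Finset.mem_range]
        intro i
        rw [Nat.div_lt_iff_lt_mul (by positivity), ← pow_add, Nat.sub_add_cancel hl]
        exact hg_lt _ _ _
      · intro c hc c' hc' h
        have hmod : ∀ c, dist (F x c) y ≤ (p : ℝ)⁻¹ ^ l → ∀ i,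
            dist (((g x (ι x c) i : ℕ) : ℤ_[p])) (y i) ≤ (p : ℝ)⁻¹ ^ l := by
          intro c hc i
          refine (dist_le_pi_dist (fun i => ((g x (ι x c) i : ℕ) : ℤ_[p])) y i).trans ?_
          refine (dist_triangle_max _ (F x c) _).trans (max_le ?_ hc)
          rw [dist_comm]
          exact (hF1 x c).trans (hmono l k' hl)
        have hc1 := hmod c (by simpa using hc)
        have hc2 := hmod c' (by simpa using hc')
        refine (ι x).injective (Subtype.ext (hg_inj x (funext fun i => ?_)))
        have e1 := hdistdvd l _ _ ((dist_triangle_max _ (y i) _).trans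
          (max_le (hc1 i) (by rw [dist_comm]; exact hc2 i)))
        have e2 := congrFun h i
        simp only at e2
        rw [← Nat.div_add_mod (g x (ι x c) i) (p ^ l), ← Nat.div_add_mod (g x (ι x c') i) (p ^ l),
          e1, e2]
    have hcard' : ((Finset.univ.filter fun c => dist (F x c) y ≤ (p : ℝ)⁻¹ ^ l).card : ℝ)
        ≤ (p : ℝ) ^ (d * (k' - l)) := by exact_mod_cast hcard
    calc _ ≤ (p : ℝ) ^ (d * (k' - l)) * (p : ℝ)⁻¹ ^ (k' * d) := by gcongr
      _ = (p : ℝ)⁻¹ ^ (l * d) := by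
          have : k' * d = l * d + d * (k' - l) := by
            rw [mul_comm d, ← add_mul, Nat.add_sub_cancel' hl]
          rw [this, pow_add, inv_pow, inv_pow]
          field_simp

/-! ### Choice of the parameters -/

/-- The residue classes excluded by `exists_bad_set` are at most half of those in a ball. Here and in
the next two lemmas `x` is the large parameter, `T ≈ x ^ (1 - ε)`, `L ≈ x ^ ρ`, `p ^ k' ≈ x ^ t`. -/
lemma param_bad {p d m a k' T L : ℕ} {x t ε ρ : ℝ} (hp : 1 < p) (hx : 1 ≤ x)
    (hT : (T : ℝ) ≤ x ^ (1 - ε)) (hL : x ^ ρ / 2 ≤ L) (he : 0 ≤ 1 - ε - ρ) (hak : a ≤ k')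
    (hk : x ^ t < (p : ℝ) ^ (k' + 1))
    (h : 2 * ((4 * ((d : ℝ) + m) + 1) ^ (m + 1) * (6 * ((d : ℝ) + m)) ^ d) *
      ((p : ℝ) ^ (a + 1)) ^ d * x ^ (((m : ℝ) + 1) * (1 - ε - ρ) + d * (1 - ε)) < x ^ (t * d)) :
    2 * ((2 * ((d + m) * T) / L + 1) ^ (m + 1) * (6 * ((d + m) * T)) ^ d)
      ≤ p ^ (d * (k' - a)) := by
  have hx0 : 0 < x := by linarith
  have hpR : (0 : ℝ) < p := by exact_mod_cast (by omega : 0 < p)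
  set n : ℝ := (d : ℝ) + m with hn
  have hn0 : 0 ≤ n := by positivity
  have hdiv : ((2 * ((d + m) * T) / L + 1 : ℕ) : ℝ) ≤ (4 * n + 1) * x ^ (1 - ε - ρ) := by
    have h1 : ((2 * ((d + m) * T) / L : ℕ) : ℝ) ≤ 4 * n * x ^ (1 - ε - ρ) := by
      refine Nat.cast_div_le.trans ?_
      push_cast
      have hpos : 0 < x ^ ρ / 2 := by positivity
      rw [div_le_iff₀ (hpos.trans_le hL)]
      have e : x ^ (1 - ε) = x ^ (1 - ε - ρ) * x ^ ρ := by
        rw [← Real.rpow_add hx0]; ring_nf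
      calc 2 * (((d : ℝ) + m) * T) ≤ 2 * (n * x ^ (1 - ε)) := by gcongr
        _ = 4 * n * x ^ (1 - ε - ρ) * (x ^ ρ / 2) := by rw [e]; ring
        _ ≤ _ := by gcongr
    have h2 := Real.one_le_rpow hx he
    push_cast at h1 ⊢
    linarith
  have hpow : (x ^ t) ^ d ≤ ((p : ℝ) ^ (a + 1)) ^ d * (p : ℝ) ^ (d * (k' - a)) := by
    calc (x ^ t) ^ d ≤ ((p : ℝ) ^ (k' + 1)) ^ d := by gcongr
      _ = _ := by
        obtain ⟨r, rfl⟩ := Nat.exists_eq_add_of_le hak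
        rw [Nat.add_sub_cancel_left]
        ring
  have hreal : 2 * (((2 * ((d + m) * T) / L + 1 : ℕ) : ℝ) ^ (m + 1) * (6 * (n * T)) ^ d)
      ≤ (p : ℝ) ^ (d * (k' - a)) := by
    have hc : 0 < ((p : ℝ) ^ (a + 1)) ^ d := by positivity
    refine le_of_mul_le_mul_left (le_trans ?_ ((h.le.trans (le_of_eq ?_)).trans hpow)) hc
    · calc ((p : ℝ) ^ (a + 1)) ^ d *
          (2 * (((2 * ((d + m) * T) / L + 1 : ℕ) : ℝ) ^ (m + 1) * (6 * (n * T)) ^ d))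
          ≤ ((p : ℝ) ^ (a + 1)) ^ d * (2 * (((4 * n + 1) * x ^ (1 - ε - ρ)) ^ (m + 1)
            * (6 * (n * x ^ (1 - ε))) ^ d)) := by gcongr
        _ = _ := by
          have e : x ^ (((m : ℝ) + 1) * (1 - ε - ρ) + d * (1 - ε))
              = (x ^ (1 - ε - ρ)) ^ (m + 1) * (x ^ (1 - ε)) ^ d := by
            rw [Real.rpow_add hx0, ← Real.rpow_natCast, ← Real.rpow_natCast,
              ← Real.rpow_mul hx0.le, ← Real.rpow_mul hx0.le]
            push_cast
            ring_nf
          rw [e]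
          simp only [mul_pow]
          ring
    · rw [Real.rpow_mul hx0.le, Real.rpow_natCast]
  rw [hn] at hreal
  exact_mod_cast hreal

/-- The pigeonhole inequality of `span_short_vectors`, for `R ≈ x ^ (1 - ε / 4)` and
`p ^ k₀ ≈ x ^ τ`; the precision used is `k₀ + 1`. -/
lemma param_index {p d m k' k₀ T R : ℕ} {x t τ ε : ℝ} (hp : 1 < p) (hx : 1 ≤ x) (hε : 0 < ε)
    (hk' : (p : ℝ) ^ k' ≤ x ^ t) (hk : (p : ℝ) ^ k₀ ≤ x ^ τ) (hT : x ^ (1 - ε) / 2 ≤ T)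
    (hR : (R : ℝ) ≤ x ^ (1 - ε / 4)) (hR' : x ^ (1 - ε / 4) < R + 1)
    (h : (3 : ℝ) ^ (d + m) * p ^ m * x ^ (t * d + m * τ + 3 / 4 * ε * ((d : ℝ) + m))
      < x ^ ((1 - ε / 4) * ((d : ℝ) + m + 1))) :
    p ^ (d * k' + m * (k₀ + 1)) * (R / T + 1) ^ (d + m) < (R + 1) ^ (d + m + 1) := by
  have hx0 : 0 < x := by linarith
  have hpR : (0 : ℝ) < p := by exact_mod_cast (by omega : 0 < p)
  have hdiv : ((R / T + 1 : ℕ) : ℝ) ≤ 3 * x ^ (3 / 4 * ε) := by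
    have h1 : ((R / T : ℕ) : ℝ) ≤ 2 * x ^ (3 / 4 * ε) := by
      refine Nat.cast_div_le.trans ?_
      have hpos : 0 < x ^ (1 - ε) / 2 := by positivity
      rw [div_le_iff₀ (hpos.trans_le hT)]
      have e : x ^ (1 - ε / 4) = x ^ (3 / 4 * ε) * x ^ (1 - ε) := by
        rw [← Real.rpow_add hx0]; ring_nf
      calc (R : ℝ) ≤ 2 * x ^ (3 / 4 * ε) * (x ^ (1 - ε) / 2) := by rw [e] at hR; linarith
        _ ≤ _ := by gcongr
    have h2 := Real.one_le_rpow hx (by positivity : 0 ≤ 3 / 4 * ε)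
    push_cast at h1 ⊢
    linarith
  have hreal : (p : ℝ) ^ (d * k' + m * (k₀ + 1)) * ((R / T + 1 : ℕ) : ℝ) ^ (d + m)
      < ((R : ℝ) + 1) ^ (d + m + 1) := by
    calc (p : ℝ) ^ (d * k' + m * (k₀ + 1)) * ((R / T + 1 : ℕ) : ℝ) ^ (d + m)
        = ((p : ℝ) ^ k') ^ d * (((p : ℝ) ^ k₀) ^ m * (p : ℝ) ^ m)
          * ((R / T + 1 : ℕ) : ℝ) ^ (d + m) := by ring
      _ ≤ (x ^ t) ^ d * ((x ^ τ) ^ m * (p : ℝ) ^ m) * (3 * x ^ (3 / 4 * ε)) ^ (d + m) := by gcongr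
      _ = (3 : ℝ) ^ (d + m) * p ^ m * x ^ (t * d + m * τ + 3 / 4 * ε * ((d : ℝ) + m)) := by
        have e : x ^ (t * d + m * τ + 3 / 4 * ε * ((d : ℝ) + m))
            = (x ^ t) ^ d * (x ^ τ) ^ m * (x ^ (3 / 4 * ε)) ^ (d + m) := by
          simp only [← Real.rpow_natCast, ← Real.rpow_mul hx0.le, ← Real.rpow_add hx0]
          push_cast
          ring_nf
        rw [e, mul_pow]
        ring
      _ < x ^ ((1 - ε / 4) * ((d : ℝ) + m + 1)) := h
      _ = (x ^ (1 - ε / 4)) ^ (d + m + 1) := by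
        rw [Real.rpow_mul hx0.le, ← Real.rpow_natCast]
        push_cast; rfl
      _ ≤ _ := by gcongr
  exact_mod_cast hreal

/-- The dimension inequality of the Cantor construction, for precision `k₀ + 1`. -/
lemma param_small {p d k' k₀ a : ℕ} {x t τ s : ℝ} (hp : 1 < p) (hx : 1 ≤ x) (hs : 0 < s)
    (hk' : x ^ t < (p : ℝ) ^ (k' + 1)) (hk : (p : ℝ) ^ k₀ ≤ x ^ τ)
    (h : 4 * (p : ℝ) ^ d * (p : ℝ) ^ s * (p : ℝ) ^ s * (p : ℝ) ^ (a * d) * x ^ (τ * s)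
      < x ^ (t * d)) :
    4 * (p : ℝ)⁻¹ ^ (k' * d)
      ≤ (p : ℝ)⁻¹ ^ s * ((p : ℝ)⁻¹ ^ (k₀ + 1)) ^ s * (p : ℝ)⁻¹ ^ (a * d) := by
  have hx0 : 0 < x := by linarith
  have hpR : (0 : ℝ) < p := by exact_mod_cast (by omega : 0 < p)
  have h1 : (p : ℝ) ^ s * ((p : ℝ) ^ (k₀ + 1)) ^ s * (p : ℝ) ^ (a * d) * 4
      ≤ (p : ℝ) ^ (k' * d) := by
    have hc : 0 < (p : ℝ) ^ d := by positivity
    refine le_of_mul_le_mul_left (le_trans ?_ (h.le.trans ?_)) hc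
    · have e : x ^ (τ * s) = (x ^ τ) ^ s := Real.rpow_mul hx0.le _ _
      have e2 : ((p : ℝ) ^ (k₀ + 1)) ^ s = ((p : ℝ) ^ k₀) ^ s * (p : ℝ) ^ s := by
        rw [pow_succ, Real.mul_rpow (by positivity) hpR.le]
      rw [e, e2]
      have h3 : ((p : ℝ) ^ k₀) ^ s ≤ (x ^ τ) ^ s :=
        Real.rpow_le_rpow (by positivity) hk hs.le
      calc _ = 4 * (p : ℝ) ^ d * (p : ℝ) ^ s * (p : ℝ) ^ s * (p : ℝ) ^ (a * d)
            * ((p : ℝ) ^ k₀) ^ s := by ring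
        _ ≤ _ := by gcongr
    · rw [Real.rpow_mul hx0.le, Real.rpow_natCast]
      calc (x ^ t) ^ d ≤ ((p : ℝ) ^ (k' + 1)) ^ d := by gcongr
        _ = _ := by ring
  rw [inv_pow, inv_pow, inv_pow, Real.inv_rpow hpR.le, Real.inv_rpow (by positivity), ← mul_inv,
    ← mul_inv, ← div_eq_mul_inv, div_le_iff₀ (by positivity), ← div_eq_inv_mul,
    le_div_iff₀ (by positivity)]
  linarith

lemma eventually_rpow_lt (C : ℝ) {c e₁ e₂ : ℝ} (hc : 0 < c) (he : e₁ < e₂) :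
    ∀ᶠ Q : ℕ in Filter.atTop, C * (Q : ℝ) ^ e₁ < c * (Q : ℝ) ^ e₂ := by
  have h := ((tendsto_rpow_atTop (sub_pos.2 he)).comp
    tendsto_natCast_atTop_atTop).eventually_gt_atTop (C / c)
  filter_upwards [h, Filter.eventually_gt_atTop 0] with Q hQ hQ0
  have hQ0' : (0 : ℝ) < Q := by exact_mod_cast hQ0
  have e : (Q : ℝ) ^ e₂ = (Q : ℝ) ^ (e₂ - e₁) * (Q : ℝ) ^ e₁ := by
    rw [← Real.rpow_add hQ0']; ring_nf
  rw [e, ← mul_assoc]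
  refine mul_lt_mul_of_pos_right ?_ (by positivity)
  rw [Function.comp_apply, div_lt_iff₀ hc] at hQ
  linarith

lemma half_le_floor {x : ℝ} (hx : 1 ≤ x) : x / 2 ≤ ⌊x⌋₊ := by
  have h1 := Nat.lt_floor_add_one x
  have h2 : (1 : ℝ) ≤ ⌊x⌋₊ := by
    exact_mod_cast (Nat.one_le_floor_iff x).2 hx
  linarith

/-- Choice of the exponents in the Cantor construction. -/
lemma exists_exponents {d m s τ : ℝ} (hd1 : 1 ≤ d) (hm1 : 1 ≤ m) (hτ₁ : 1 + 1 / (d + m) < τ)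
    (hτ₂ : τ < 1 + 1 / m) (hs : s < (d + m + 1) / τ - m) :
    ∃ ε t σ ρ : ℝ, 0 < ε ∧ ε < 1 / 2 ∧ 1 < t ∧ t ≤ τ ∧ 1 ≤ σ ∧ m + 1 < m * σ ∧ ρ * σ = τ ∧
      0 < ρ ∧ 0 ≤ 1 - ε - ρ ∧ (m + 1) * (1 - ε - ρ) + d * (1 - ε) ≤ t * d - ε / 4 ∧
      t * d + m * τ + 3 / 4 * ε * (d + m) < (1 - ε / 4) * (d + m + 1) ∧ τ * s < t * d := by
  set n : ℝ := d + m with hn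
  have hn2 : 2 ≤ n := by linarith
  have hτ1 : 1 < τ := by
    have : 0 < 1 / n := by positivity
    linarith
  have hτ0 : 0 < τ := by linarith
  have hmτ : m * τ < m + 1 := by
    have := mul_lt_mul_of_pos_left hτ₂ (by linarith : (0 : ℝ) < m)
    rwa [mul_add, mul_one, mul_one_div_cancel (by linarith : (m : ℝ) ≠ 0)] at this
  have hmτ1 : (m : ℝ) < m * τ := by nlinarith
  have hnτ : n + 1 < n * τ := by
    have := mul_lt_mul_of_pos_left hτ₁ (by linarith : (0 : ℝ) < n)
    rwa [mul_add, mul_one, mul_one_div_cancel (by linarith : (n : ℝ) ≠ 0)] at this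
  have hδ : 0 < n + 1 - m * τ - τ * s := by
    have h1 := mul_lt_mul_of_pos_left hs hτ0
    rw [mul_sub, mul_div_cancel₀ _ hτ0.ne'] at h1
    linarith
  obtain ⟨ε, hε0, hε1, hε2⟩ : ∃ ε : ℝ, 0 < ε ∧ (n + 1 / 2) * ε < n + 1 - m * τ - τ * s ∧
      2 * ((n + 1 / 2) * ε) ≤ m + 1 - m * τ := by
    refine ⟨min (n + 1 - m * τ - τ * s) (m + 1 - m * τ) / 2 / (n + 1 / 2), ?_, ?_, ?_⟩
    · have : 0 < min (n + 1 - m * τ - τ * s) (m + 1 - m * τ) := lt_min hδ (by linarith)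
      positivity
    · rw [mul_div_cancel₀ _ (by positivity)]
      have := min_le_left (n + 1 - m * τ - τ * s) (m + 1 - m * τ)
      linarith
    · rw [mul_div_cancel₀ _ (by positivity)]
      have := min_le_right (n + 1 - m * τ - τ * s) (m + 1 - m * τ)
      linarith
  have hmε : m * ε ≤ n * ε := by gcongr; linarith
  have hnε : 2 * ε ≤ n * ε := by gcongr
  have hε3 : ε < 1 / 2 := by linarith
  have htd : (n + 1 - m * τ - (n + 1 / 2) * ε) / d * d = n + 1 - m * τ - (n + 1 / 2) * ε :=
    div_mul_cancel₀ _ (by linarith)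
  have hmσ : m * ((m + 1 + ε / 4) / m) = m + 1 + ε / 4 := mul_div_cancel₀ _ (by linarith)
  have hσ1 : 1 ≤ (m + 1 + ε / 4) / m := by
    rw [le_div_iff₀ (by linarith)]; linarith
  set σ : ℝ := (m + 1 + ε / 4) / m with hσ
  have hσ0 : 0 < σ := by linarith
  have hρσ : τ / σ * σ = τ := div_mul_cancel₀ _ hσ0.ne'
  set ρ : ℝ := τ / σ with hρ
  have hρ0 : 0 < ρ := by positivity
  have hρm : (m + 1 + ε / 4) * ρ = m * τ := by rw [← hmσ, ← hρσ]; ring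
  -- `ρ` is slightly smaller than `m τ / (m + 1)`
  have hρ1 : ρ ≤ 1 := by
    by_contra hcon
    push Not at hcon
    have := mul_lt_mul_of_pos_left hcon (by linarith : 0 < m + 1 + ε / 4)
    linarith
  have hρ2 : ε / 4 * ρ ≤ ε / 4 := mul_le_of_le_one_right (by linarith) hρ1
  have hρ3 : m * τ - ε / 4 ≤ (m + 1) * ρ := by linarith
  have hεε : ε * ε ≤ ε / 2 := by
    have := mul_le_mul_of_nonneg_left hε3.le hε0.le
    linarith
  refine ⟨ε, (n + 1 - m * τ - (n + 1 / 2) * ε) / d, σ, ρ, hε0, hε3, ?_, ?_, hσ1, ?_, hρσ, hρ0,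
    ?_, ?_, ?_, ?_⟩
  · rw [lt_div_iff₀ (by linarith)]; linarith
  · rw [div_le_iff₀ (by linarith)]; linarith
  · linarith
  · by_contra hcon
    push Not at hcon
    have := mul_lt_mul_of_pos_left (show 1 - ε < ρ by linarith)
      (by linarith : 0 < m + 1 + ε / 4)
    rw [hρm] at this
    linarith
  · rw [htd]; linarith
  · rw [htd]; linarith
  · rw [htd]; linarith

set_option maxHeartbeats 2000000 in
/-- Choice of the numerical parameters for one step of the Cantor construction. The scales are
powers of a large integer `Q`: precision `p ^ k ≈ Q ^ τ` in the balls, `p ^ k' ≈ Q ^ t` for their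
spacing, where `t d` is slightly smaller than `n + 1 - m τ`. -/
lemma exists_params {p d m : ℕ} (hp : 1 < p) (hd : 1 ≤ d) (hm : 1 ≤ m) {τ s : ℝ}
    (hτ₁ : 1 + 1 / ((d : ℝ) + m) < τ) (hτ₂ : τ < 1 + 1 / (m : ℝ)) (hs0 : 0 < s)
    (hs : s < ((d : ℝ) + m + 1) / τ - m) (P : ℝ → ℕ → Prop)
    (hno : ∀ σ : ℝ, (m : ℝ) + 1 < m * σ → ∃ Q₀ : ℕ, ∀ L ≥ Q₀, P σ L)
    (hpf : ∀ ε : ℝ, 0 < ε →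
      ∃ C : ℝ, 1 ≤ C ∧ ∀ D : ℕ, D ≠ 0 → (8 : ℝ) ^ D.primeFactors.card ≤ C * (D : ℝ) ^ ε)
    (a N : ℕ) :
    ∃ σ : ℝ, 1 ≤ σ ∧ ∃ k' k T R Q B L : ℕ, 1 ≤ L ∧ P σ L ∧ 1 ≤ T ∧ a ≤ k' ∧ k' ≤ k ∧ a < k ∧
      2 * ((d + m) * T) < p ^ k' ∧
      (p : ℝ) ^ (-(k : ℤ)) < (L : ℝ) ^ (-σ) ∧
      2 * ((2 * ((d + m) * T) / L + 1) ^ (m + 1) * (6 * ((d + m) * T)) ^ d)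
        ≤ p ^ (d * (k' - a)) ∧
      p ^ (d * k' + m * k) * (R / T + 1) ^ (d + m) < (R + 1) ^ (d + m + 1) ∧ 1 ≤ B ∧
      (∀ D : ℕ, D ≠ 0 → D ≤ p * (2 * Q ^ 2) ^ (d + m + 1) → 8 ^ D.primeFactors.card ≤ B) ∧
      100 * (d + m + 1) * (R + 1) * B ≤ Q ∧
      (p : ℝ) ^ (-(k : ℤ)) < (Q : ℝ) ^ (-τ) ∧ 2 * N ≤ Q ∧
      4 * (p : ℝ)⁻¹ ^ (k' * d) ≤ (p : ℝ)⁻¹ ^ s * ((p : ℝ)⁻¹ ^ k) ^ s * (p : ℝ)⁻¹ ^ (a * d) := by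
  have hm1 : (1 : ℝ) ≤ m := by exact_mod_cast hm
  have hd1 : (1 : ℝ) ≤ d := by exact_mod_cast hd
  have hpR : (1 : ℝ) < p := by exact_mod_cast hp
  obtain ⟨ε, t, σ, ρ, hε0, hε3, ht1, htτ, hσ1, hmσ, hρσ, hρ0, hρ2, hexp1, hexp2, hexp3⟩ :=
    exists_exponents hd1 hm1 hτ₁ hτ₂ hs
  have hτ0 : 0 < τ := by linarith
  obtain ⟨Q₀, hQ₀⟩ := hno σ hmσ
  set n : ℝ := (d : ℝ) + m with hn
  have hn2 : 2 ≤ n := by linarith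
  set η : ℝ := ε / (16 * (n + 1)) with hη
  have hη0 : 0 < η := by positivity
  obtain ⟨C, hC1, hC⟩ := hpf η hη0
  set C₁ : ℝ := C * ((p : ℝ) * 2 ^ (d + m + 1)) ^ η with hC₁
  have hC₁0 : 0 < C₁ := by positivity
  -- conditions on `Q`, all of which hold for large `Q`
  have ev0 := Filter.eventually_ge_atTop (2 * N + 1)
  have ev1 := eventually_rpow_lt (p : ℝ) (c := 1) one_pos (show (0 : ℝ) < 1 by norm_num)
  have ev2 := eventually_rpow_lt (2 * n * p) (c := 1) one_pos (show 1 - ε < t by linarith)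
  have ev3 := eventually_rpow_lt (Q₀ + 1) (c := 1) one_pos hρ0
  have ev4 := eventually_rpow_lt (2 * ((4 * n + 1) ^ (m + 1) * (6 * n) ^ d) * (p ^ (a + 1)) ^ d)
    (c := 1) one_pos
    (show (m + 1) * (1 - ε - ρ) + d * (1 - ε) < t * d by linarith)
  have ev5 := eventually_rpow_lt (3 ^ (d + m) * p ^ m : ℝ) (c := 1) one_pos
    hexp2
  have ev6 := eventually_rpow_lt (100 * (n + 1) * 2 * C₁) (c := 1) one_pos
    (show 1 - ε / 8 < 1 by linarith)
  have ev7 := eventually_rpow_lt (4 * p ^ d * (p : ℝ) ^ s * (p : ℝ) ^ s * p ^ (a * d)) (c := 1)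
    one_pos hexp3
  have ev8 := eventually_rpow_lt ((p : ℝ) ^ (a + 1)) (c := 1) one_pos
    (show (0 : ℝ) < t by linarith)
  obtain ⟨Q, hQN, h1, h2, h3, h4, h5, h6, h7, h8⟩ := (ev0.and (ev1.and (ev2.and (ev3.and
    (ev4.and (ev5.and (ev6.and (ev7.and ev8)))))))).exists
  simp only [one_mul, Real.rpow_zero, mul_one, Real.rpow_one] at h1 h2 h3 h4 h5 h6 h7 h8
  set x : ℝ := (Q : ℝ) with hx
  have hx1 : 1 ≤ x := by
    rw [hx]
    exact_mod_cast (by omega : 1 ≤ Q)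
  have hx0 : 0 < x := by linarith
  have hge1 : ∀ e : ℝ, 0 ≤ e → 1 ≤ x ^ e := fun e he => Real.one_le_rpow hx1 he
  obtain ⟨k', hk1, hk2⟩ := exists_nat_pow_near (hge1 t (by linarith)) hpR
  obtain ⟨k₀, hk3, hk4⟩ := exists_nat_pow_near (hge1 τ hτ0.le) hpR
  have hkk : k' ≤ k₀ := by
    have : (p : ℝ) ^ k' < (p : ℝ) ^ (k₀ + 1) :=
      hk1.trans_lt ((Real.rpow_le_rpow_of_exponent_le hx1 htτ).trans_lt hk4)
    exact Nat.lt_succ_iff.1 ((pow_lt_pow_iff_right₀ hpR).1 this)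
  have hak : a ≤ k' := by
    have : (p : ℝ) ^ (a + 1) < (p : ℝ) ^ (k' + 1) := h8.trans hk2
    have := (pow_lt_pow_iff_right₀ hpR).1 this
    omega
  set T : ℕ := ⌊x ^ (1 - ε)⌋₊ with hT
  have hTle : (T : ℝ) ≤ x ^ (1 - ε) := Nat.floor_le (by positivity)
  have hTge : x ^ (1 - ε) / 2 ≤ T := half_le_floor (hge1 _ (by linarith))
  have hT1 : 1 ≤ T := (Nat.one_le_floor_iff _).2 (hge1 _ (by linarith))
  set L : ℕ := ⌊x ^ ρ⌋₊ with hL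
  have hLle : (L : ℝ) ≤ x ^ ρ := Nat.floor_le (by positivity)
  have hLge : x ^ ρ / 2 ≤ L := half_le_floor (hge1 _ hρ0.le)
  have hL1 : 1 ≤ L := (Nat.one_le_floor_iff _).2 (hge1 _ hρ0.le)
  set R : ℕ := ⌊x ^ (1 - ε / 4)⌋₊ with hR
  have hRle : (R : ℝ) ≤ x ^ (1 - ε / 4) := Nat.floor_le (by positivity)
  have hRlt : x ^ (1 - ε / 4) < R + 1 := Nat.lt_floor_add_one _
  set B : ℕ := ⌊C * ((p * (2 * Q ^ 2) ^ (d + m + 1) : ℕ) : ℝ) ^ η⌋₊ with hB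
  have hBprop : ∀ D : ℕ, D ≠ 0 → D ≤ p * (2 * Q ^ 2) ^ (d + m + 1) →
      8 ^ D.primeFactors.card ≤ B := by
    intro D hD hDle
    rw [hB]
    refine Nat.le_floor ?_
    push_cast [-Nat.cast_mul]
    refine (hC D hD).trans ?_
    have : (D : ℝ) ≤ ((p * (2 * Q ^ 2) ^ (d + m + 1) : ℕ) : ℝ) := by exact_mod_cast hDle
    gcongr
  have hB1 : 1 ≤ B := by
    have hQ0 : 0 < Q := by omega
    have := hBprop 1 one_ne_zero (Nat.succ_le_of_lt (by positivity))
    simpa using this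
  have hBle : (B : ℝ) ≤ C₁ * x ^ (ε / 8) := by
    refine (Nat.floor_le (by positivity)).trans (le_of_eq ?_)
    rw [hC₁, mul_assoc]
    congr 1
    have e1 : ((p * (2 * Q ^ 2) ^ (d + m + 1) : ℕ) : ℝ)
        = ((p : ℝ) * 2 ^ (d + m + 1)) * x ^ (2 * (n + 1)) := by
      have e2 : x ^ (2 * (n + 1)) = x ^ (2 * (d + m + 1)) := by
        rw [← Real.rpow_natCast]; congr 1; push_cast; ring
      rw [e2, pow_mul]
      push_cast
      rw [mul_pow, mul_assoc]
    rw [e1, Real.mul_rpow (by positivity) (by positivity), ← Real.rpow_mul hx0.le]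
    congr 2
    rw [hη]; field_simp; ring
  have hkQ : (p : ℝ) ^ (-((k₀ + 1 : ℕ) : ℤ)) < x ^ (-τ) := by
    rw [zpow_neg, zpow_natCast, Real.rpow_neg hx0.le]
    exact inv_strictAnti₀ (by positivity) hk4
  refine ⟨σ, hσ1, k', k₀ + 1, T, R, Q, B, L, hL1, hQ₀ L ?_, hT1, hak, by omega, by omega, ?_, ?_,
    ?_, ?_, hB1, hBprop, ?_, hkQ, by omega, ?_⟩
  · have : Q₀ + 1 ≤ L := Nat.le_floor (by push_cast; exact h3.le)
    omega
  · have : 2 * (n * (T : ℝ)) < (p : ℝ) ^ k' := by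
      have h9 : 2 * n * p * x ^ (1 - ε) < (p : ℝ) ^ k' * p := by
        rw [← pow_succ]; exact h2.trans hk2
      have h10 : 2 * n * x ^ (1 - ε) < (p : ℝ) ^ k' := by
        refine lt_of_mul_lt_mul_right ?_ (by linarith : (0 : ℝ) ≤ p)
        linarith
      refine lt_of_le_of_lt ?_ h10
      rw [← mul_assoc]
      gcongr
    rw [hn] at this
    exact_mod_cast this
  · refine hkQ.trans_le ?_
    rw [← hρσ, ← mul_neg, Real.rpow_mul hx0.le]
    exact Real.rpow_le_rpow_of_nonpos (by exact_mod_cast hL1) hLle (by linarith)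
  · exact param_bad hp hx1 hTle hLge hρ2 hak hk2 h4
  · exact param_index hp hx1 hε0 hk1 hk3 hTge hRle hRlt h5
  · have h9 : 100 * (n + 1) * (R + 1) * B ≤ x := by
      have h10 := hge1 (1 - ε / 4) (by linarith)
      have h11 : x ^ (1 - ε / 4) * x ^ (ε / 8) = x ^ (1 - ε / 8) := by
        rw [← Real.rpow_add hx0]; ring_nf
      calc 100 * (n + 1) * (R + 1) * B
          ≤ 100 * (n + 1) * (2 * x ^ (1 - ε / 4)) * (C₁ * x ^ (ε / 8)) := by
            gcongr
            linarith
        _ = 100 * (n + 1) * 2 * C₁ * x ^ (1 - ε / 8) := by rw [← h11]; ring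
        _ ≤ x := h6.le
    rw [hn, hx] at h9
    exact_mod_cast h9
  · exact param_small hp hx1 hs0 hk2 hk3 h7

/-! ### Lower bound -/

lemma isometry_append {p : ℕ} [Fact p.Prime] {d m : ℕ} (α : Fin m → ℤ_[p]) :
    Isometry fun x : Fin d → ℤ_[p] => (Fin.append x α : Fin (d + m) → ℤ_[p]) := by
  refine Isometry.of_dist_eq fun x y => le_antisymm ?_ ?_
  · refine (dist_pi_le_iff dist_nonneg).2 fun i => ?_
    refine Fin.addCases (fun j => ?_) (fun j => ?_) i
    · simpa using dist_le_pi_dist x y j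
    · simp
  · refine (dist_pi_le_iff dist_nonneg).2 fun i => ?_
    simpa using dist_le_pi_dist (Fin.append x α) (Fin.append y α) (Fin.castAdd m i)

lemma le_dimH_Wset_inter {p : ℕ} [Fact p.Prime] {d m : ℕ} (hd : 1 ≤ d) (hm : 1 ≤ m)
    (α : Fin m → ℤ_[p]) (hα : dioExp α = (m : ℝ) + 1) {τ : ℝ}
    (hτ₁ : 1 + 1 / ((d : ℝ) + m) < τ) (hτ₂ : τ < 1 + 1 / (m : ℝ)) {s : NNReal} (hs0 : 0 < s)
    (hs : (s : ℝ) < ((d : ℝ) + m + 1) / τ - m) :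
    (s : ℝ≥0∞) ≤ dimH (Wset (fun _ : Fin (d + m) => τ) ∩ Pialpha α) := by
  have hp : p.Prime := Fact.out
  have hpR : (1 : ℝ) < p := by exact_mod_cast hp.one_lt
  have hm1 : (1 : ℝ) ≤ m := by exact_mod_cast hm
  have hd1 : (1 : ℝ) ≤ d := by exact_mod_cast hd
  have hτ0 : 0 < τ := lt_trans (by positivity) hτ₁
  have hsd : (s : ℝ) ≤ d := by
    have h1 : ((d : ℝ) + m + 1) / τ < d + m := by
      rw [div_lt_iff₀ hτ0]
      calc (d : ℝ) + m + 1 = (d + m) * (1 + 1 / ((d : ℝ) + m)) := by field_simp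
        _ < (d + m) * τ := by gcongr
    linarith
  let G : ℕ → Set (Fin d → ℤ_[p]) := fun N =>
    {x | ∃ q₀ ≥ N, Fin.append x α ∈ Aset (fun _ : Fin (d + m) => τ) q₀}
  have hG : (s : ℝ≥0∞) ≤ dimH (⋂ N, G N) := by
    refine le_dimH_iInter_of_step (q := (p : ℝ)⁻¹) (d := d) (by positivity)
      (inv_lt_one_of_one_lt₀ hpR) hs0 hsd fun a N => ?_
    obtain ⟨σ, hσ, k', k, T, R, Q, B, L, hL, hno, hT, hak', hkk, hak, hS, hkL, hE, hR, hB1, hB,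
      hQ, hkQ, hN, hsmall⟩ := exists_params hp.one_lt hd hm hτ₁ hτ₂ (s := s) (by exact_mod_cast hs0)
        hs _ (fun σ hσ => exists_no_small α hα hσ)
        (pow_card_primeFactors_le 8 (by norm_num)) a N
    obtain ⟨M, F, hM, hMl, hnear, hball, hsep⟩ := exists_children (d := d) α hτ0.le a k' k T R Q B N
      ((2 * ((d + m) * T) / L + 1) ^ (m + 1)) hT hak' hkk hS
      (fun W hW => card_approx_le α hσ hL hno le_rfl W fun w hw =>
        ⟨(hW w hw).1, (hW w hw).2.1, (hW w hw).2.2.1,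
          fun i => ((hW w hw).2.2.2 i).trans_lt hkL⟩)
      hE hR hB1 hB hQ hkQ hN
    exact ⟨k', k, M, F, hak', hkk, hak, hM, hsmall, hMl, hnear, hball, hsep⟩
  rw [← (isometry_append α).dimH_image] at hG
  refine hG.trans (dimH_mono ?_)
  rintro _ ⟨x, hx, rfl⟩
  refine ⟨?_, fun i => by simp⟩
  simp only [Wset, Set.mem_iInter, Set.mem_iUnion]
  intro N
  obtain ⟨q₀, hq, hx⟩ := Set.mem_iInter.1 hx N
  exact ⟨q₀, hq, hx⟩

/-! ### Upper bound -/

/-- Upper bound for the dimension of a limsup set: if `S` lies in infinitely many of the unions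
`⋃ i ∈ I j, t j i`, pointwise, and these consist of `O(K ^ j)` sets of diameter at most `ρ ^ j`, then
the dimension is at most any `s` with `K * ρ ^ s < 1`. -/
lemma dimH_le_of_frequently_cover {X ι : Type*} [MetricSpace X] [MeasurableSpace X] [BorelSpace X]
    (I : ℕ → Finset ι) (t : ℕ → ι → Set X) {S : Set X} {s : NNReal} {ρ C K : ℝ} (hρ0 : 0 < ρ)
    (hρ1 : ρ < 1) (hK : 0 ≤ K) (hKρ : K * ρ ^ (s : ℝ) < 1)
    (hdiam : ∀ j, ∀ i ∈ I j, Metric.ediam (t j i) ≤ ENNReal.ofReal (ρ ^ j))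
    (hcard : ∀ᶠ j in Filter.atTop, ((I j).card : ℝ) ≤ C * K ^ j)
    (hS : ∀ x ∈ S, ∃ᶠ j in Filter.atTop, ∃ i ∈ I j, x ∈ t j i) : dimH S ≤ s := by
  have hKρ0 : 0 ≤ K * ρ ^ (s : ℝ) := by positivity
  let f : ℕ → ℝ≥0∞ := fun j => ENNReal.ofReal (C * (K * ρ ^ (s : ℝ)) ^ j)
  have hf : ∑' j, f j ≠ ⊤ :=
    ((summable_geometric_of_lt_one hKρ0 hKρ).mul_left C).tsum_ofReal_ne_top
  have hlim : Filter.Tendsto (fun N => ENNReal.ofReal (ρ ^ N)) Filter.atTop (nhds 0) := by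
    rw [← ENNReal.ofReal_zero]
    exact ENNReal.tendsto_ofReal (tendsto_pow_atTop_nhds_zero_of_lt_one hρ0.le hρ1)
  have hμ := Measure.hausdorffMeasure_le_liminf_tsum (ι := fun N => Σ k : ℕ, I (k + N)) (s : ℝ) S
    (l := Filter.atTop)
    (fun N => ENNReal.ofReal (ρ ^ N)) hlim (fun N z => t (z.1 + N) z.2)
    (Filter.Eventually.of_forall fun N z => (hdiam _ _ z.2.2).trans
      (ENNReal.ofReal_le_ofReal (pow_le_pow_of_le_one hρ0.le hρ1.le (Nat.le_add_left _ _))))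
    (Filter.Eventually.of_forall fun N x hx => by
      obtain ⟨j, hj, i, hi, hxi⟩ := Filter.frequently_atTop.1 (hS x hx) N
      obtain ⟨k, rfl⟩ := Nat.exists_eq_add_of_le' hj
      exact Set.mem_iUnion.2 ⟨⟨k, i, hi⟩, hxi⟩)
  have hle : Filter.liminf (fun N => ∑' z : Σ k : ℕ, I (k + N),
      Metric.ediam (t (z.1 + N) z.2) ^ (s : ℝ)) Filter.atTop ≤ 0 := by
    rw [← (ENNReal.tendsto_sum_nat_add f hf).liminf_eq]
    refine Filter.liminf_le_liminf ?_
    obtain ⟨j₀, hj₀⟩ := Filter.eventually_atTop.1 hcard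
    filter_upwards [Filter.eventually_ge_atTop j₀] with N hN
    rw [ENNReal.tsum_sigma']
    refine ENNReal.tsum_le_tsum fun k => ?_
    calc ∑' i : I (k + N), Metric.ediam (t (k + N) i) ^ (s : ℝ)
        ≤ ∑' _ : I (k + N), ENNReal.ofReal (ρ ^ (k + N)) ^ (s : ℝ) :=
          ENNReal.tsum_le_tsum fun i => ENNReal.rpow_le_rpow (hdiam _ _ i.2) s.coe_nonneg
      _ = ENNReal.ofReal ((I (k + N)).card * (ρ ^ (s : ℝ)) ^ (k + N)) := by
          rw [tsum_fintype, Finset.sum_const, Finset.card_univ, Fintype.card_coe, nsmul_eq_mul,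
            ENNReal.ofReal_rpow_of_nonneg (by positivity) s.coe_nonneg,
            ENNReal.ofReal_mul (by positivity), ENNReal.ofReal_natCast,
            ← Real.rpow_natCast_mul hρ0.le, ← Real.rpow_mul_natCast hρ0.le, mul_comm (s : ℝ)]
      _ ≤ f (k + N) := by
          refine ENNReal.ofReal_le_ofReal ?_
          rw [mul_pow, ← mul_assoc]
          exact mul_le_mul_of_nonneg_right (hj₀ _ (by omega)) (by positivity)
  refine dimH_le_of_hausdorffMeasure_ne_top ?_
  rw [le_antisymm (hμ.trans hle) bot_le]
  exact ENNReal.zero_ne_top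

/-- The number of balls in the cover at the dyadic scale `2 ^ j`, where `L` is of order
`2 ^ (j * ξ)`. -/
lemma card_scale_le {m d j L : ℕ} {ξ : ℝ} (hξ : ξ ≤ 1)
    (hL : ((2 : ℝ) ^ j) ^ ξ / 2 ≤ L) :
    (((2 * 2 ^ (j + 1) / L + 1) ^ (m + 1) * (2 * 2 ^ (j + 1) + 1) ^ d : ℕ) : ℝ)
      ≤ (9 ^ (m + 1) * 5 ^ d) * ((2 : ℝ) ^ ((1 - ξ) * (m + 1) + d)) ^ j := by
  have h2 : (1 : ℝ) ≤ 2 ^ j := one_le_pow₀ (by norm_num)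
  have h20 : (0 : ℝ) < 2 ^ j := by positivity
  have hy : (1 : ℝ) ≤ ((2 : ℝ) ^ j) ^ (1 - ξ) := Real.one_le_rpow h2 (by linarith)
  have h1 : ((2 * 2 ^ (j + 1) / L : ℕ) : ℝ) ≤ 8 * ((2 : ℝ) ^ j) ^ (1 - ξ) := by
    refine Nat.cast_div_le.trans ?_
    have hpos : 0 < ((2 : ℝ) ^ j) ^ ξ := by positivity
    rw [div_le_iff₀ (by linarith)]
    calc ((2 * 2 ^ (j + 1) : ℕ) : ℝ) = 8 * ((2 : ℝ) ^ j) ^ (1 - ξ) * (((2 : ℝ) ^ j) ^ ξ / 2) := by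
          rw [mul_assoc, mul_div_assoc', ← Real.rpow_add h20]
          push_cast
          simp [pow_succ]
          ring
      _ ≤ _ := by gcongr
  have h3 : ((2 : ℝ) ^ ((1 - ξ) * (m + 1) + d)) ^ j
      = (((2 : ℝ) ^ j) ^ (1 - ξ)) ^ (m + 1) * ((2 : ℝ) ^ j) ^ d := by
    rw [← Real.rpow_natCast, ← Real.rpow_natCast, ← Real.rpow_natCast, ← Real.rpow_natCast,
      ← Real.rpow_mul (by norm_num), ← Real.rpow_mul (by norm_num), ← Real.rpow_mul (by norm_num),
      ← Real.rpow_mul (by norm_num), ← Real.rpow_add (by norm_num)]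
    congr 1
    push_cast
    ring
  rw [h3]
  push_cast
  calc _ ≤ (9 * ((2 : ℝ) ^ j) ^ (1 - ξ)) ^ (m + 1) * (5 * (2 : ℝ) ^ j) ^ d := by
        gcongr
        · linarith
        · rw [pow_succ]; linarith
    _ = _ := by rw [mul_pow, mul_pow]; ring

lemma dimH_Wset_inter_le {p : ℕ} [Fact p.Prime] {d m : ℕ} (hm : 1 ≤ m)
    (α : Fin m → ℤ_[p]) (hα : dioExp α = (m : ℝ) + 1) {τ : ℝ}
    (hτ0 : 0 < τ) (hτ₂ : τ < 1 + 1 / (m : ℝ)) {s : NNReal}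
    (hs : ((d : ℝ) + m + 1) / τ - m < s) :
    dimH (Wset (fun _ : Fin (d + m) => τ) ∩ Pialpha α) ≤ s := by
  have hm1 : (1 : ℝ) ≤ m := by exact_mod_cast hm
  -- the exponent `σ = (m + 1) / u` slightly exceeds `(m + 1) / m`
  obtain ⟨u, hu, hum⟩ := exists_between (a₁ := max 0 (((d : ℝ) + m + 1) / τ - s)) (a₂ := (m : ℝ))
    (max_lt (by linarith) (by linarith))
  obtain ⟨hu0, hus⟩ := max_lt_iff.1 hu
  have hτm : τ * m < m + 1 := by
    calc τ * m < (1 + 1 / (m : ℝ)) * m := by gcongr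
      _ = m + 1 := by field_simp
  set σ : ℝ := (m + 1) / u with hσ
  have hσ0 : 0 < σ := by positivity
  have hmσ : (m : ℝ) + 1 < m * σ := by
    rw [hσ, mul_div_assoc', lt_div_iff₀ hu0]
    nlinarith
  have hσ1 : 1 ≤ σ := by nlinarith
  set ξ : ℝ := τ / σ with hξ
  have hξe : ξ = τ * u / (m + 1) := by rw [hξ, hσ]; field_simp
  have hξ0 : 0 < ξ := by positivity
  have hξ1 : ξ ≤ 1 := by
    rw [hξe, div_le_one (by positivity)]
    nlinarith
  obtain ⟨Q₀, hQ₀⟩ := exists_no_small α hα hmσ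
  let θ : ℕ → ℝ := fun j => ((2 : ℝ) ^ (-τ)) ^ j
  have hθ : ∀ j, θ j = ((2 : ℝ) ^ j) ^ (-τ) := fun j => by
    simp only [θ]
    rw [← Real.rpow_natCast, ← Real.rpow_natCast, ← Real.rpow_mul (by norm_num),
      ← Real.rpow_mul (by norm_num), mul_comm]
  let V : ℕ → Finset (ℤ × (Fin m → ℤ)) := fun j =>
    (Finset.Icc (1 : ℤ) (2 ^ (j + 1) : ℕ) ×ˢ
      Fintype.piFinset fun _ => Finset.Icc (-((2 ^ (j + 1) : ℕ) : ℤ)) (2 ^ (j + 1) : ℕ)).filter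
      fun w => ∀ i, ‖(w.1 : ℤ_[p]) * α i - (w.2 i : ℤ_[p])‖ < θ j
  let I : ℕ → Finset ((ℤ × (Fin m → ℤ)) × (Fin d → ℤ)) := fun j =>
    V j ×ˢ Fintype.piFinset fun _ => Finset.Icc (-((2 ^ (j + 1) : ℕ) : ℤ)) (2 ^ (j + 1) : ℕ)
  let t : ℕ → (ℤ × (Fin m → ℤ)) × (Fin d → ℤ) → Set (Fin (d + m) → ℤ_[p]) := fun j w =>
    {x | ∀ i, ‖(x i : ℚ_[p]) - (Fin.append w.2 w.1.2 i : ℤ) / (w.1.1 : ℚ_[p])‖ < θ j}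
  have h2τ0 : (0 : ℝ) < 2 ^ (-τ) := by positivity
  refine dimH_le_of_frequently_cover I t (ρ := (2 : ℝ) ^ (-τ)) (C := 9 ^ (m + 1) * 5 ^ d)
    (K := (2 : ℝ) ^ ((1 - ξ) * (m + 1) + d)) h2τ0
    (Real.rpow_lt_one_of_one_lt_of_neg (by norm_num) (by linarith)) (by positivity) ?_ ?_ ?_ ?_
  · rw [← Real.rpow_mul (by norm_num), ← Real.rpow_add (by norm_num)]
    refine Real.rpow_lt_one_of_one_lt_of_neg (by norm_num) ?_
    have : (d + m + 1 : ℝ) < (u + s) * τ := by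
      rw [← div_lt_iff₀ hτ0]; linarith
    have h2 : ξ * (m + 1) = τ * u := by rw [hξe]; field_simp
    nlinarith
  · intro j w _
    refine Metric.ediam_le fun x hx y hy => ?_
    rw [edist_dist]
    refine ENNReal.ofReal_le_ofReal ((dist_pi_le_iff (by positivity)).2 fun i => ?_)
    have h1 := IsUltrametricDist.dist_triangle_max (x i : ℚ_[p])
      ((Fin.append w.2 w.1.2 i : ℤ) / (w.1.1 : ℚ_[p])) (y i)
    rw [dist_comm (_ / _) (y i : ℚ_[p]), dist_eq_norm, dist_eq_norm, dist_eq_norm] at h1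
    rw [dist_eq_norm, PadicInt.norm_def, PadicInt.coe_sub]
    exact h1.trans (max_le (hx i).le (hy i).le)
  · have htend : Filter.Tendsto (fun j : ℕ => ((2 : ℝ) ^ j) ^ ξ) Filter.atTop Filter.atTop :=
      (tendsto_rpow_atTop hξ0).comp (tendsto_pow_atTop_atTop_of_one_lt (by norm_num))
    filter_upwards [htend.eventually_ge_atTop (Q₀ + 1 : ℝ)] with j hj
    set L : ℕ := ⌊((2 : ℝ) ^ j) ^ ξ⌋₊ with hL
    have hLQ : Q₀ + 1 ≤ L := Nat.le_floor (by exact_mod_cast hj)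
    have hL0 : (0 : ℝ) < L := by exact_mod_cast (by omega : 0 < L)
    have hLle : (L : ℝ) ≤ ((2 : ℝ) ^ j) ^ ξ := Nat.floor_le (by positivity)
    have hLhalf : ((2 : ℝ) ^ j) ^ ξ / 2 ≤ L :=
      half_le_floor (Real.one_le_rpow (one_le_pow₀ (by norm_num)) hξ0.le)
    have hθL : θ j ≤ (L : ℝ) ^ (-σ) := by
      calc θ j = (((2 : ℝ) ^ j) ^ ξ) ^ (-σ) := by
            rw [hθ, ← Real.rpow_mul (by positivity), hξ]
            congr 1
            field_simp
        _ ≤ (L : ℝ) ^ (-σ) := Real.rpow_le_rpow_of_nonpos hL0 hLle (by linarith)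
    have hV := card_approx_le α hσ1 (by omega : 1 ≤ L) (hQ₀ L (by omega)) hθL
      (T := 2 ^ (j + 1)) (V j) fun w hw => by
        simp only [V, Finset.mem_filter, Finset.mem_product, Finset.mem_Icc,
          Fintype.mem_piFinset] at hw
        exact ⟨by omega, hw.1.1.2, fun i => abs_le.2 (hw.1.2 i), hw.2⟩
    refine le_trans ?_ (card_scale_le hξ1 hLhalf)
    have hI : (I j).card = (V j).card * (2 * 2 ^ (j + 1) + 1) ^ d := by
      simp only [I, Finset.card_product, Fintype.card_piFinset, Int.card_Icc, Finset.prod_const,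
        Finset.card_univ, Fintype.card_fin]
      congr 2
      omega
    rw [hI]
    exact_mod_cast Nat.mul_le_mul_right _ hV
  · rintro x ⟨hxW, hxP⟩
    refine Filter.frequently_atTop.2 fun N => ?_
    simp only [Wset, Aset, Set.mem_iInter, Set.mem_iUnion] at hxW
    obtain ⟨q₀, hq₀, q, hq, hx⟩ := hxW (2 ^ N)
    have hq0 : 0 < q₀ := lt_of_lt_of_le (by positivity) hq₀
    have hlow : 2 ^ Nat.log 2 q₀ ≤ q₀ := Nat.pow_log_le_self 2 hq0.ne'
    have hup : q₀ < 2 ^ (Nat.log 2 q₀ + 1) := Nat.lt_pow_succ_log_self (by norm_num) q₀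
    have hxθ : ∀ i, ‖(x i : ℚ_[p]) - (q i : ℚ_[p]) / (q₀ : ℚ_[p])‖ < θ (Nat.log 2 q₀) := by
      intro i
      refine (hx i).trans_le ?_
      rw [hθ]
      exact Real.rpow_le_rpow_of_nonpos (by positivity) (by exact_mod_cast hlow) (by linarith)
    have hqT : ∀ i, -((2 ^ (Nat.log 2 q₀ + 1) : ℕ) : ℤ) ≤ q i ∧
        q i ≤ (2 ^ (Nat.log 2 q₀ + 1) : ℕ) := fun i =>
      abs_le.1 ((hq i).1.trans (by exact_mod_cast hup.le))
    refine ⟨Nat.log 2 q₀, Nat.le_log_of_pow_le (by norm_num) hq₀,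
      (((q₀ : ℤ), fun i => q (Fin.natAdd d i)), fun i => q (Fin.castAdd m i)), ?_, ?_⟩
    · simp only [I, V, Finset.mem_filter, Finset.mem_product, Finset.mem_Icc,
        Fintype.mem_piFinset]
      refine ⟨⟨⟨⟨by omega, by exact_mod_cast hup.le⟩, fun i => hqT _⟩, fun i => ?_⟩,
        fun i => hqT _⟩
      refine lt_of_le_of_lt ?_ (hxθ (Fin.natAdd d i))
      rw [hxP i, PadicInt.norm_def]
      have hne : (q₀ : ℚ_[p]) ≠ 0 := by exact_mod_cast hq0.ne'
      have : (((((q₀ : ℤ) : ℤ_[p]) * α i - (q (Fin.natAdd d i) : ℤ_[p])) : ℤ_[p]) : ℚ_[p])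
          = (q₀ : ℚ_[p]) * ((α i : ℚ_[p]) - (q (Fin.natAdd d i) : ℚ_[p]) / (q₀ : ℚ_[p])) := by
        push_cast
        field_simp
      rw [this, norm_mul]
      exact mul_le_of_le_one_left (norm_nonneg _) (by
        simpa using Padic.norm_int_le_one (p := p) (q₀ : ℤ))
    · intro i
      have happ : Fin.append (fun i => q (Fin.castAdd m i)) (fun i => q (Fin.natAdd d i)) i = q i :=
        congrFun (Fin.append_castAdd_natAdd (f := q)) i
      simp only [happ]
      simpa using hxθ i

theorem dimH_Wset_inter_hyperplane_const {p : ℕ} [Fact p.Prime] {d m : ℕ}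
    (hd : 1 ≤ d) (hm : 1 ≤ m) (α : Fin m → ℤ_[p])
    (hα : dioExp α = (m : ℝ) + 1) (τ : ℝ)
    (hτ₁ : 1 + 1 / ((d : ℝ) + m) < τ) (hτ₂ : τ < 1 + 1 / (m : ℝ)) :
    dimH (Wset (fun _ : Fin (d + m) => τ) ∩ Pialpha α) =
      ENNReal.ofReal (((d : ℝ) + m + 1) / τ - m) := by
  have hτ0 : 0 < τ := lt_trans (by positivity) hτ₁
  refine le_antisymm (ENNReal.le_of_forall_pos_le_add fun ε hε _ => ?_)
    (ENNReal.le_of_forall_nnreal_lt fun r hr => ?_)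
  · refine (dimH_Wset_inter_le (s := Real.toNNReal (((d : ℝ) + m + 1) / τ - m) + ε)
      hm α hα hτ0 hτ₂ ?_).trans_eq ?_
    · have h1 := Real.le_coe_toNNReal (((d : ℝ) + m + 1) / τ - m)
      have h2 : (0 : ℝ) < ε := by exact_mod_cast hε
      push_cast at h1 ⊢
      linarith
    · rw [ENNReal.coe_add]
      rfl
  · rcases eq_or_ne r 0 with rfl | hr0
    · simp
    refine le_dimH_Wset_inter hd hm α hα hτ₁ hτ₂ (pos_iff_ne_zero.2 hr0) ?_
    rw [← ENNReal.ofReal_coe_nnreal] at hr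
    exact (ENNReal.ofReal_lt_ofReal_iff'.1 hr).1
end

section
/- Let p be a prime, n ≥ 2, and α ∈ ℤ_p with Diophantine exponent τ(α). Let τ = (τ₁,…,τₙ) ∈ ℝ^n_{>0} be a weight vector with τ_i > 1 for all i, Σ_{i=1}^n τ_i > n+1, and max{1, τ(α) − 1} < τₙ < τ(α). Then the Hausdorff dimension of 𝔚_n(τ) ∩ Π_α is at most min_{1≤i≤n−1} ( n + τ(α) − 1 − τₙ + Σ_{j ≠ n, τ_j ≤ τ_i} (τ_i − τ_j) ) / τ_i. -/
/-!
Write `T` for the Diophantine exponent of `α` and `η` for the last weight. A point of the slice is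
approximable only with denominators `q₀` for which some `|q₁| ≤ q₀` satisfies
`‖q₀ α - q₁‖ < q₀ ^ (-η)`. The proof counts these denominators in dyadic blocks and covers, for
each of them, the rectangles in the remaining `d` coordinates.

*Counting* (`card_goodDen_le`). For `t > T` there are at most `72 * 2 ^ (k (t - η))` such
denominators in `[2 ^ k, 2 ^ (k + 1))`, for large `k`. Cut the plane of pairs `(q₀, q₁)` into
squares of side `M ≈ 2 ^ (k η / t)`. Two admissible pairs in one square would differ by a pair of
height below `M` approximating `α` to within `M ^ (-t)`, which `t > T` forbids. This leaves about
`(2 ^ k / M) ^ 2 = 2 ^ (2 k (t - η) / t)` pairs, and `t ≥ 2` turns the exponent into `k (t - η)`.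
The bound `T ≥ 2` is Dirichlet's theorem (`two_le_dioExp1`), a pigeonhole argument modulo
`p ^ (2 m)` with height `p ^ m`.

*Covering* (`dimH_slice_le_of_lt`). Fix `i`. For each good `q₀` in the `k`-th block there are
`O(2 ^ (k d))` choices of the other numerators, and the rectangle belonging to each choice is
covered by `O(2 ^ (k Σ max(0, τ i - τ j)))` sets of diameter `O(2 ^ (-k τ i))`, indexed by the
base-`p` digits between the scale of coordinate `j` and the scale of coordinate `i`
(`exists_digit`, `pow_sub_le`). For any `s` above the `i`-th quotient in the theorem the sum of the
`s`-th powers of the diameters is dominated by a geometric series, and the convergence part of the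
Borel–Cantelli argument (`dimH_le_of_summable_covers`) bounds the dimension by `s`.
-/

open scoped BigOperators ENNReal Classical
open MeasureTheory

/-- The Diophantine exponent of a `p`-adic integer `α`. -/
noncomputable def dioExp1 {p : ℕ} [Fact p.Prime] (α : ℤ_[p]) : ℝ :=
  sSup {τ : ℝ | ∀ Q₀ : ℕ, ∃ Q : ℕ, Q₀ ≤ Q ∧ ∃ q₀ q₁ : ℤ,
    0 < q₀ ∧ q₀ ≤ (Q : ℤ) ∧ |q₁| ≤ (Q : ℤ) ∧
    ‖(q₀ : ℤ_[p]) * α - (q₁ : ℤ_[p])‖ < (Q : ℝ) ^ (-τ)}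

open Filter Topology

theorem norm_sub_le_max_of_ultrametric {S : Type*} [SeminormedAddCommGroup S]
    [IsUltrametricDist S] (x y : S) : ‖x - y‖ ≤ max ‖x‖ ‖y‖ := by
  simpa [sub_eq_add_neg] using IsUltrametricDist.norm_add_le_max x (-y)

/-! ### Dimension of limsup sets -/

/-- Hausdorff–Cantelli: if every point of `E` lies in members of infinitely many of the finite
families `t k`, whose diameters are at most `r k`, and `∑ k, #(ι k) * r k ^ s` converges, then `E`
has dimension at most `s` (indeed `μH[s] E = 0`). -/
theorem dimH_le_of_summable_covers {X : Type*} [MetricSpace X] {E : Set X} {s : ℝ} (hs : 0 < s)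
    (ι : ℕ → Type) [∀ k, Fintype (ι k)] (t : ∀ k, ι k → Set X) (r : ℕ → ℝ)
    (hr : Antitone r) (hr0 : Tendsto r atTop (𝓝 0))
    (hdiam : ∀ k i, ∀ x ∈ t k i, ∀ y ∈ t k i, dist x y ≤ r k)
    (hcov : ∀ x ∈ E, ∀ N, ∃ k, N ≤ k ∧ ∃ i, x ∈ t k i)
    (hsum : Summable fun k => (Fintype.card (ι k) : ℝ) * r k ^ s) :
    dimH E ≤ ENNReal.ofReal s := by
  borelize X
  have hrn : ∀ k, 0 ≤ r k := fun k => hr.le_of_tendsto hr0 k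
  refine dimH_le_of_hausdorffMeasure_ne_top (d := s.toNNReal) ?_
  rw [Real.coe_toNNReal s hs.le]
  have hed : ∀ k i, Metric.ediam (t k i) ≤ ENNReal.ofReal (r k) := fun k i =>
    Metric.ediam_le fun x hx y hy => by
      rw [edist_dist]; exact ENNReal.ofReal_le_ofReal (hdiam k i x hx y hy)
  have key := Measure.hausdorffMeasure_le_liminf_tsum (l := (atTop : Filter ℕ))
    (ι := fun N => Σ k : ℕ, ι (k + N)) s E (fun N => ENNReal.ofReal (r N))
    (by simpa using ENNReal.tendsto_ofReal hr0) (fun N i => t (i.1 + N) i.2)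
    (Eventually.of_forall fun N i => (hed _ _).trans
      (ENNReal.ofReal_le_ofReal (hr (Nat.le_add_left _ _))))
    (Eventually.of_forall fun N x hx => by
      obtain ⟨k, hk, i, hi⟩ := hcov x hx N
      obtain ⟨m, rfl⟩ := Nat.exists_eq_add_of_le' hk
      exact Set.mem_iUnion.2 ⟨⟨m, i⟩, hi⟩)
  set f : ℕ → ENNReal := fun k => ENNReal.ofReal ((Fintype.card (ι k) : ℝ) * r k ^ s) with hf
  have hf1 : ∑' k, f k ≠ ⊤ := hsum.tsum_ofReal_ne_top
  have hle : ∀ N, (∑' i : Σ k : ℕ, ι (k + N), Metric.ediam (t (i.1 + N) i.2) ^ s)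
      ≤ ∑' k, f (k + N) := by
    intro N
    rw [ENNReal.tsum_sigma']
    refine ENNReal.tsum_le_tsum fun k => ?_
    rw [tsum_fintype]
    calc _ ≤ ∑ _i : ι (k + N), (ENNReal.ofReal (r (k + N))) ^ s :=
          Finset.sum_le_sum fun i _ => ENNReal.rpow_le_rpow (hed _ _) hs.le
      _ = f (k + N) := by
          simp only [hf]
          rw [Finset.sum_const, Finset.card_univ, nsmul_eq_mul,
            ENNReal.ofReal_mul (by positivity), ENNReal.ofReal_natCast,
            ENNReal.ofReal_rpow_of_nonneg (hrn _) hs.le]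
  have hlim : Tendsto (fun N => ∑' i : Σ k : ℕ, ι (k + N), Metric.ediam (t (i.1 + N) i.2) ^ s)
      atTop (𝓝 0) :=
    tendsto_of_tendsto_of_tendsto_of_le_of_le tendsto_const_nhds
      (ENNReal.tendsto_sum_nat_add f hf1) (fun _ => zero_le) hle
  rw [hlim.liminf_eq] at key
  exact (key.trans_lt (by simp)).ne

/-! ### The Diophantine exponent -/

/-- The condition `dioExp1 α ≠ 0` rules out the junk value `0` of the supremum of an unbounded set
of exponents. -/
theorem exists_not_solvable_of_dioExp1_lt {p : ℕ} [Fact p.Prime] {α : ℤ_[p]}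
    (h0 : dioExp1 α ≠ 0) {t : ℝ} (ht : dioExp1 α < t) :
    ∃ Q₀ : ℕ, ∀ Q : ℕ, Q₀ ≤ Q → ∀ q₀ q₁ : ℤ, 0 < q₀ → q₀ ≤ Q → |q₁| ≤ Q →
      (Q : ℝ) ^ (-t) ≤ ‖(q₀ : ℤ_[p]) * α - (q₁ : ℤ_[p])‖ := by
  by_contra! hcon
  have hb : BddAbove {τ : ℝ | ∀ Q₀ : ℕ, ∃ Q : ℕ, Q₀ ≤ Q ∧ ∃ q₀ q₁ : ℤ,
      0 < q₀ ∧ q₀ ≤ (Q : ℤ) ∧ |q₁| ≤ (Q : ℤ) ∧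
      ‖(q₀ : ℤ_[p]) * α - (q₁ : ℤ_[p])‖ < (Q : ℝ) ^ (-τ)} := by
    by_contra hb
    exact h0 (Real.sSup_of_not_bddAbove hb)
  exact absurd (le_csSup hb hcon) (not_le.2 ht)

/-- Dirichlet's theorem, by pigeonhole modulo `p ^ (2 m)` on pairs of height at most `p ^ m`. -/
theorem two_le_dioExp1 {p : ℕ} [Fact p.Prime] {α : ℤ_[p]} (h0 : dioExp1 α ≠ 0) :
    2 ≤ dioExp1 α := by
  by_contra! hlt
  obtain ⟨Q₀, hQ₀⟩ := exists_not_solvable_of_dioExp1_lt h0 (t := (dioExp1 α + 2) / 2) (by linarith)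
  have hp1 : 1 < p := (Fact.out : p.Prime).one_lt
  set m := Q₀ + 1 with hm
  set Q := p ^ m with hQ
  have hQQ : Q₀ ≤ Q := (Nat.le_succ _).trans (Nat.lt_pow_self hp1).le
  have hQ1 : 1 < Q := Nat.one_lt_pow (by omega) hp1
  have : NeZero (p ^ (2 * m)) := ⟨by positivity⟩
  obtain ⟨u, hu, v, hv, huv, heq⟩ := Finset.exists_ne_map_eq_of_card_lt_of_maps_to
    (s := Finset.range (Q + 1) ×ˢ Finset.range (Q + 1)) (t := (Finset.univ : Finset (ZMod (p ^ (2 * m)))))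
    (f := fun u => PadicInt.toZModPow (2 * m) ((u.1 : ℤ_[p]) * α - (u.2 : ℤ_[p])))
    (by
      rw [Finset.card_univ, ZMod.card, Finset.card_product, Finset.card_range, two_mul, pow_add]
      exact Nat.mul_lt_mul'' (Nat.lt_succ_self _) (Nat.lt_succ_self _))
    (by intro _ _; simp)
  simp only [Finset.mem_product, Finset.mem_range] at hu hv
  -- The difference of the two colliding pairs, with signs chosen so that `a ≥ 0`, is a solution
  -- at height `Q` with quality `Q ^ (-2)`; `a = 0` would force `p ^ (2 m) ∣ b`, hence `b = 0`.
  have main : ∀ a b : ℤ, 0 ≤ a → a ≤ Q → |b| ≤ Q → (a ≠ 0 ∨ b ≠ 0) →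
      ((a : ℤ_[p]) * α - (b : ℤ_[p])) ∈ Ideal.span {(p : ℤ_[p]) ^ (2 * m)} → False := by
    intro a b ha haQ hbQ hab hmem
    rw [← PadicInt.norm_le_pow_iff_mem_span_pow] at hmem
    rcases ha.eq_or_lt with rfl | ha
    · simp only [Int.cast_zero, zero_mul, zero_sub, norm_neg] at hmem
      rw [PadicInt.norm_int_le_pow_iff_dvd] at hmem
      have : b = 0 := by
        refine Int.eq_zero_of_abs_lt_dvd (by exact_mod_cast hmem) (hbQ.trans_lt ?_)
        exact_mod_cast Nat.pow_lt_pow_right hp1 (by omega)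
      simp [this] at hab
    · have h1 := (hQ₀ Q hQQ a b ha haQ hbQ).trans hmem
      have h2 : (p : ℝ) ^ (-((2 * m : ℕ) : ℤ)) = (Q : ℝ) ^ (-2 : ℝ) := by
        rw [hQ, Nat.cast_pow, ← Real.rpow_natCast (p : ℝ) m, ← Real.rpow_mul (by positivity),
          ← Real.rpow_intCast]
        push_cast; ring_nf
      rw [h2, Real.rpow_le_rpow_left_iff (by exact_mod_cast hQ1)] at h1
      linarith
  have hmem : ((u.1 : ℤ_[p]) * α - (u.2 : ℤ_[p])) - ((v.1 : ℤ_[p]) * α - (v.2 : ℤ_[p])) ∈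
      Ideal.span {(p : ℤ_[p]) ^ (2 * m)} := by
    rw [← PadicInt.ker_toZModPow, RingHom.mem_ker, map_sub, sub_eq_zero]; exact heq
  have hne : u.1 ≠ v.1 ∨ u.2 ≠ v.2 := by
    by_contra! h; exact huv (Prod.ext h.1 h.2)
  rcases le_total v.1 u.1 with hle | hle
  · refine main (u.1 - v.1) (u.2 - v.2) (by omega) (by omega) (by rw [abs_le]; omega) (by omega) ?_
    convert hmem using 1; push_cast; ring
  · refine main (v.1 - u.1) (v.2 - u.2) (by omega) (by omega) (by rw [abs_le]; omega) (by omega) ?_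
    convert neg_mem hmem using 1; push_cast; ring

/-! ### Counting good denominators -/

/-- The denominators `q` in the dyadic block `[2 ^ k, 2 ^ (k + 1))` for which `α` is approximated
by some `a / q` with `|a| ≤ q` and `‖q α - a‖ < q ^ (-η)`. No coprimality of `a` and `q` is
required: the upper bound for the count holds without it. -/
noncomputable def goodDen {p : ℕ} [Fact p.Prime] (α : ℤ_[p]) (η : ℝ) (k : ℕ) : Finset ℕ :=
  (Finset.Ico (2 ^ k) (2 ^ (k + 1))).filter fun q =>
    ∃ a : ℤ, |a| ≤ (q : ℤ) ∧ ‖(q : ℤ_[p]) * α - (a : ℤ_[p])‖ < (q : ℝ) ^ (-η)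

/-- Distinct good denominators, paired with their numerators, lie in distinct squares of side
`M = ⌊2 ^ (k η / t)⌋`. -/
theorem card_goodDen_le {p : ℕ} [Fact p.Prime] {α : ℤ_[p]} {η t : ℝ} (hη : 0 < η) (hηt : η ≤ t)
    (ht2 : 2 ≤ t) (ht : dioExp1 α < t) (h0 : dioExp1 α ≠ 0) :
    ∀ᶠ k : ℕ in atTop, ((goodDen α η k).card : ℝ) ≤ 72 * ((2 : ℝ) ^ (t - η)) ^ k := by
  obtain ⟨Q₀, hQ₀⟩ := exists_not_solvable_of_dioExp1_lt h0 ht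
  have hten : Tendsto (fun k : ℕ => ⌊((2 : ℝ) ^ (η / t)) ^ k⌋₊) atTop atTop :=
    tendsto_nat_floor_atTop.comp (tendsto_pow_atTop_atTop_of_one_lt
      (Real.one_lt_rpow (by norm_num) (by positivity)))
  filter_upwards [hten.eventually_ge_atTop (Q₀ + 1)] with k hk
  set x : ℝ := ((2 : ℝ) ^ (η / t)) ^ k with hx
  set M := ⌊x⌋₊ with hM
  have hM1 : 1 ≤ M := by omega
  have htpos : 0 < t := by linarith
  have hx0 : 0 < x := by positivity
  have hMx : (M : ℝ) ≤ x := Nat.floor_le hx0.le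
  have hxM : x ≤ 2 * M := by
    have : x < M + 1 := Nat.lt_floor_add_one x
    have : (1 : ℝ) ≤ M := by exact_mod_cast hM1
    linarith
  have hxt : x ^ t = ((2 : ℝ) ^ k) ^ η := by
    rw [hx, ← Real.rpow_natCast, ← Real.rpow_natCast, ← Real.rpow_mul (by positivity),
      ← Real.rpow_mul (by positivity), ← Real.rpow_mul (by positivity)]
    congr 1; field_simp
  have hxQ : x ≤ (2 : ℝ) ^ k := by
    refine pow_le_pow_left₀ (Real.rpow_nonneg (by norm_num) _) ?_ k
    calc (2 : ℝ) ^ (η / t) ≤ 2 ^ (1 : ℝ) :=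
          Real.rpow_le_rpow_of_exponent_le (by norm_num) ((div_le_one htpos).2 hηt)
      _ = 2 := by norm_num
  -- First coordinates fall into `D + 1` intervals of length `M`, second coordinates into `2 D + 2`.
  set D := 2 ^ (k + 1) / M with hD
  have hex : ∀ q ∈ goodDen α η k, ∃ a : ℤ, |a| ≤ (q : ℤ) ∧
      ‖(q : ℤ_[p]) * α - (a : ℤ_[p])‖ < (q : ℝ) ^ (-η) := fun q hq => (Finset.mem_filter.1 hq).2
  choose! a ha1 ha2 using hex
  have hIco : ∀ q ∈ goodDen α η k, 2 ^ k ≤ q ∧ q < 2 ^ (k + 1) := fun q hq =>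
    Finset.mem_Ico.1 (Finset.mem_filter.1 hq).1
  have hnorm : ∀ q ∈ goodDen α η k, ‖(q : ℤ_[p]) * α - (a q : ℤ_[p])‖ < (M : ℝ) ^ (-t) := by
    intro q hq
    have hq2 : (2 : ℝ) ^ k ≤ q := by exact_mod_cast (hIco q hq).1
    have hMpos : (0 : ℝ) < M := by exact_mod_cast hM1
    refine (ha2 q hq).trans_le ?_
    calc (q : ℝ) ^ (-η) ≤ ((2 : ℝ) ^ k) ^ (-η) :=
          Real.rpow_le_rpow_of_nonpos (by positivity) hq2 (by linarith)
      _ = x ^ (-t) := by rw [Real.rpow_neg (by positivity), Real.rpow_neg hx0.le, hxt]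
      _ ≤ (M : ℝ) ^ (-t) := Real.rpow_le_rpow_of_nonpos hMpos hMx (by linarith)
  have hMz : (0 : ℤ) < M := by exact_mod_cast hM1
  have hcard : (goodDen α η k).card ≤
      (Finset.range (D + 1) ×ˢ Finset.Icc (-(D : ℤ) - 1) D).card := by
    refine Finset.card_le_card_of_injOn (fun q => (q / M, a q / (M : ℤ))) ?_ ?_
    · intro q hq
      have h1 := hIco q hq
      have h2 := abs_le.1 (ha1 q hq)
      have hDz : (D : ℤ) = (2 ^ (k + 1) : ℤ) / M := by rw [hD]; push_cast; rfl
      have h3 : (q : ℤ) < 2 ^ (k + 1) := by exact_mod_cast h1.2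
      have h4 : (2 ^ (k + 1) : ℤ) < M * ((2 ^ (k + 1) : ℤ) / M + 1) :=
        Int.lt_mul_ediv_self_add hMz |>.trans_le (by ring_nf; rfl)
      simp only [Finset.coe_product, Set.mem_prod, Finset.mem_coe, Finset.mem_range,
        Finset.mem_Icc]
      refine ⟨Nat.lt_succ_of_le (Nat.div_le_div_right h1.2.le), ?_, ?_⟩
      · rw [hDz, Int.le_ediv_iff_mul_le hMz]
        nlinarith
      · rw [hDz]
        exact Int.ediv_le_ediv hMz (by linarith)
    · have aux : ∀ q ∈ goodDen α η k, ∀ q' ∈ goodDen α η k, q / M = q' / M →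
          a q / (M : ℤ) = a q' / (M : ℤ) → q < q' → False := by
        intro q hq q' hq' h1 h2 hlt
        have e1 := Nat.div_add_mod q M
        have e2 := Nat.div_add_mod q' M
        have m1 := Nat.mod_lt q hM1
        have m2 := Nat.mod_lt q' hM1
        have e3 := Int.mul_ediv_add_emod (a q) M
        have e4 := Int.mul_ediv_add_emod (a q') M
        have m3 := Int.emod_lt_of_pos (a q) hMz
        have m4 := Int.emod_lt_of_pos (a q') hMz
        have n3 := Int.emod_nonneg (a q) hMz.ne'
        have n4 := Int.emod_nonneg (a q') hMz.ne'
        rw [h1] at e1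
        rw [h2] at e3
        have hlow := hQ₀ M (by omega) ((q' : ℤ) - q) (a q' - a q) (by omega) (by omega)
          (by rw [abs_le]; omega)
        have hlt2 : ‖(((q' : ℤ) - q : ℤ) : ℤ_[p]) * α - ((a q' - a q : ℤ) : ℤ_[p])‖
            < (M : ℝ) ^ (-t) := by
          have : (((q' : ℤ) - q : ℤ) : ℤ_[p]) * α - ((a q' - a q : ℤ) : ℤ_[p]) =
              ((q' : ℤ_[p]) * α - (a q' : ℤ_[p])) - ((q : ℤ_[p]) * α - (a q : ℤ_[p])) := by
            push_cast; ring
          rw [this]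
          exact (norm_sub_le_max_of_ultrametric _ _).trans_lt (max_lt (hnorm q' hq') (hnorm q hq))
        exact absurd hlow (not_le.2 hlt2)
      intro q hq q' hq' h
      obtain ⟨h1, h2⟩ := Prod.ext_iff.1 h
      rcases lt_trichotomy q q' with hlt | heq | hlt
      · exact (aux q hq q' hq' h1 h2 hlt).elim
      · exact heq
      · exact (aux q' hq' q hq h1.symm h2.symm hlt).elim
  rw [Finset.card_product, Finset.card_range, Int.card_Icc] at hcard
  have hD2 : ((D : ℤ) + 1 - (-(D : ℤ) - 1)).toNat = 2 * (D + 1) := by omega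
  rw [hD2] at hcard
  have hDle : (D : ℝ) ≤ 2 ^ (k + 1) / M := by
    rw [hD]; exact_mod_cast Nat.cast_div_le (α := ℝ) (m := 2 ^ (k + 1)) (n := M)
  have hMpos : (0 : ℝ) < M := by exact_mod_cast hM1
  have hD3 : (D : ℝ) + 1 ≤ 6 * (2 ^ k / x) := by
    have h1 : (1 : ℝ) ≤ 2 ^ k / x := (one_le_div hx0).2 hxQ
    have h2 : (2 : ℝ) ^ (k + 1) / M ≤ 4 * (2 ^ k / x) := by
      rw [pow_succ, ← mul_div_assoc, div_le_div_iff₀ hMpos hx0]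
      have : (0 : ℝ) < 2 ^ k := by positivity
      nlinarith
    linarith
  have hfin : (2 ^ k / x) ^ 2 ≤ ((2 : ℝ) ^ (t - η)) ^ k := by
    rw [hx, ← div_pow, ← pow_mul, mul_comm k 2, pow_mul]
    refine pow_le_pow_left₀ (by positivity) ?_ k
    have : (2 : ℝ) / 2 ^ (η / t) = 2 ^ (1 - η / t) := by
      rw [Real.rpow_sub (by norm_num), Real.rpow_one]
    rw [this, ← Real.rpow_natCast, ← Real.rpow_mul (by norm_num)]
    refine Real.rpow_le_rpow_of_exponent_le (by norm_num) ?_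
    -- The only use of `2 ≤ t`: the exponent `2 (t - η) / t` is at most `t - η`.
    have h3 : 1 - η / t = (t - η) / t := by field_simp
    rw [h3, div_mul_eq_mul_div, div_le_iff₀ htpos]
    push_cast
    nlinarith
  calc ((goodDen α η k).card : ℝ) ≤ (((D + 1) * (2 * (D + 1)) : ℕ) : ℝ) := by exact_mod_cast hcard
    _ = 2 * ((D : ℝ) + 1) ^ 2 := by push_cast; ring
    _ ≤ 2 * (6 * (2 ^ k / x)) ^ 2 := by gcongr
    _ = 72 * (2 ^ k / x) ^ 2 := by ring
    _ ≤ _ := by gcongr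

/-! ### Covering the slice -/

/-- A ball of radius `p ^ (-l)` around `0` is covered by `p ^ (m - l)` balls of radius `p ^ (-m)`.
The truncated subtraction is intended: for `m ≤ l` one ball suffices. -/
theorem exists_digit {p : ℕ} [Fact p.Prime] {w : ℤ_[p]} {l : ℕ} (m : ℕ)
    (hw : ‖w‖ ≤ (p : ℝ) ^ (-(l : ℤ))) :
    ∃ c : Fin (p ^ (m - l)), ‖w - (p : ℤ_[p]) ^ l * ((c : ℕ) : ℤ_[p])‖ ≤ (p : ℝ) ^ (-(m : ℤ)) := by
  rw [PadicInt.norm_le_pow_iff_mem_span_pow, Ideal.mem_span_singleton] at hw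
  obtain ⟨z, rfl⟩ := hw
  refine ⟨⟨z.appr (m - l), PadicInt.appr_lt z (m - l)⟩, ?_⟩
  rw [PadicInt.norm_le_pow_iff_mem_span_pow, Ideal.mem_span_singleton, ← mul_sub]
  refine (pow_dvd_pow (p : ℤ_[p]) (by omega : m ≤ l + (m - l))).trans ?_
  rw [pow_add]
  exact mul_dvd_mul_left _ (Ideal.mem_span_singleton.1 (PadicInt.appr_spec (m - l) z))

/-- The number of digit choices in `exists_digit`, when `p ^ (-m)` and `p ^ (-l)` are the scales of
`2 ^ (-k u)` and `2 ^ (-k v)`. -/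
theorem pow_sub_le {p k l m : ℕ} (hp : 1 < p) {u v : ℝ}
    (hm : (p : ℝ) ^ m ≤ ((2 : ℝ) ^ u) ^ k) (hl : ((2 : ℝ) ^ v) ^ k < (p : ℝ) ^ (l + 1)) :
    ((p ^ (m - l) : ℕ) : ℝ) ≤ p * ((2 : ℝ) ^ max 0 (u - v)) ^ k := by
  have hp1 : (1 : ℝ) < p := by exact_mod_cast hp
  rcases le_total m l with h | h
  · rw [Nat.sub_eq_zero_of_le h, pow_zero, Nat.cast_one]
    exact one_le_mul_of_one_le_of_one_le hp1.le
      (one_le_pow₀ (Real.one_le_rpow (by norm_num) (le_max_left _ _)))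
  · have h1 : ((2 : ℝ) ^ (u - v)) ^ k ≤ ((2 : ℝ) ^ max 0 (u - v)) ^ k :=
      pow_le_pow_left₀ (by positivity)
        (Real.rpow_le_rpow_of_exponent_le (by norm_num) (le_max_right _ _)) k
    refine le_trans ?_ (mul_le_mul_of_nonneg_left h1 (by positivity))
    rw [Real.rpow_sub (by norm_num), div_pow, Nat.cast_pow, pow_sub₀ _ (by positivity) h,
      ← div_eq_mul_inv, mul_div_assoc', div_le_div_iff₀ (by positivity) (by positivity)]
    calc (p : ℝ) ^ m * ((2 : ℝ) ^ v) ^ k ≤ ((2 : ℝ) ^ u) ^ k * (p : ℝ) ^ (l + 1) := by gcongr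
      _ = _ := by ring

/-- The `i`-th term of the minimum: covering by sets of diameter `O(2 ^ (-k τ i))`. -/
theorem dimH_slice_le_of_lt {p : ℕ} [Fact p.Prime] {d : ℕ} (α : ℤ_[p]) (τ : Fin (d + 1) → ℝ)
    (hτpos : ∀ i, 0 < τ i) (h0 : 0 < dioExp1 α) (hτn : τ (Fin.last d) < dioExp1 α) (i : Fin d)
    {s : ℝ} (hs : 0 < s)
    (hsi : d + dioExp1 α - τ (Fin.last d) + ∑ j : Fin d, max 0 (τ i.castSucc - τ j.castSucc)
      < s * τ i.castSucc) :
    dimH (Wset τ ∩ {x : Fin (d + 1) → ℤ_[p] | x (Fin.last d) = α}) ≤ ENNReal.ofReal s := by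
  have hp : 1 < p := (Fact.out : p.Prime).one_lt
  have hp1 : (1 : ℝ) < p := by exact_mod_cast hp
  set η := τ (Fin.last d) with hη
  have hη0 : 0 < η := hτpos _
  -- Half of the gap in `hsi` is spent on taking `t = T + e`; the other half, `2 ^ (-e)`, is the
  -- ratio of the dominating geometric series.
  set e : ℝ := (s * τ i.castSucc - (d + dioExp1 α - η +
    ∑ j : Fin d, max 0 (τ i.castSucc - τ j.castSucc))) / 2 with he
  have he0 : 0 < e := by rw [he]; linarith
  set t := dioExp1 α + e with ht
  have ht2 : 2 ≤ t := by linarith [two_le_dioExp1 h0.ne']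
  have hB1 : ∀ j : Fin d, 1 < (2 : ℝ) ^ τ j.castSucc := fun j =>
    Real.one_lt_rpow (by norm_num) (hτpos _)
  have hB0 : ∀ j : Fin d, 0 < (2 : ℝ) ^ τ j.castSucc := fun j => by positivity
  have hl : ∀ (k : ℕ) (j : Fin d), ∃ l : ℕ, (p : ℝ) ^ l ≤ ((2 : ℝ) ^ τ j.castSucc) ^ k ∧
      ((2 : ℝ) ^ τ j.castSucc) ^ k < (p : ℝ) ^ (l + 1) := fun k j =>
    exists_nat_pow_near (one_le_pow₀ (hB1 j).le) hp1
  choose l hl1 hl2 using hl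
  -- Rectangles are recentred at one of their own points, so that `a j / q` need not be a `p`-adic
  -- integer; an empty rectangle gets the centre `0`.
  have hcen : ∀ (k q : ℕ) (a : Fin d → ℤ), ∃ z : Fin d → ℤ_[p], ∀ y : Fin d → ℤ_[p],
      2 ^ k ≤ q →
      (∀ j : Fin d, ‖(y j : ℚ_[p]) - (a j : ℚ_[p]) / (q : ℚ_[p])‖ < (q : ℝ) ^ (-(τ j.castSucc))) →
      ∀ j : Fin d, ‖y j - z j‖ ≤ (p : ℝ) ^ (-(l k j : ℤ)) := by
    intro k q a
    by_cases hne : ∃ z : Fin d → ℤ_[p], ∀ j : Fin d,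
      ‖(z j : ℚ_[p]) - (a j : ℚ_[p]) / (q : ℚ_[p])‖ < (q : ℝ) ^ (-(τ j.castSucc))
    · obtain ⟨z, hz⟩ := hne
      refine ⟨z, fun y hq hy j => ?_⟩
      have hq' : (2 : ℝ) ^ k ≤ q := by exact_mod_cast hq
      have h1 : ‖y j - z j‖ ≤ (q : ℝ) ^ (-(τ j.castSucc)) := by
        have h2 : ((y j - z j : ℤ_[p]) : ℚ_[p]) = ((y j : ℚ_[p]) - (a j : ℚ_[p]) / (q : ℚ_[p])) -
            ((z j : ℚ_[p]) - (a j : ℚ_[p]) / (q : ℚ_[p])) := by push_cast; ring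
        rw [PadicInt.norm_def, h2]
        exact (norm_sub_le_max_of_ultrametric _ _).trans (max_le (hy j).le (hz j).le)
      refine h1.trans ?_
      calc (q : ℝ) ^ (-(τ j.castSucc)) ≤ ((2 : ℝ) ^ k) ^ (-(τ j.castSucc)) :=
            Real.rpow_le_rpow_of_nonpos (by positivity) hq' (by linarith [hτpos j.castSucc])
        _ = (((2 : ℝ) ^ τ j.castSucc) ^ k)⁻¹ := by
            rw [Real.rpow_neg (by positivity), Real.rpow_pow_comm (by norm_num)]
        _ ≤ ((p : ℝ) ^ l k j)⁻¹ := inv_anti₀ (by positivity) (hl1 k j)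
        _ = _ := by rw [zpow_neg, zpow_natCast]
    · push Not at hne
      exact ⟨0, fun y _ hy => absurd hy (by push Not; exact hne y)⟩
  choose z hz using hcen
  have hri : ∀ k, (p : ℝ) ^ (-(l k i : ℤ)) ≤ p * (((2 : ℝ) ^ τ i.castSucc)⁻¹) ^ k := by
    intro k
    rw [inv_pow, ← div_eq_mul_inv, le_div_iff₀ (by positivity), zpow_neg, zpow_natCast,
      inv_mul_le_iff₀ (by positivity), ← pow_succ]
    exact (hl2 k i).le
  refine dimH_le_of_summable_covers hs
    (fun k => (goodDen α η k) ×
      (Fintype.piFinset fun _ : Fin d => Finset.Icc (-(2 ^ (k + 1)) : ℤ) (2 ^ (k + 1))) ×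
      (∀ j : Fin d, Fin (p ^ (l k i - l k j))))
    (fun k u => {y | y (Fin.last d) = α ∧ ∀ j : Fin d,
      ‖y j.castSucc - z k u.1 u.2.1 j - (p : ℤ_[p]) ^ l k j * ((u.2.2 j : ℕ) : ℤ_[p])‖
        ≤ (p : ℝ) ^ (-(l k i : ℤ))})
    (fun k => p * (((2 : ℝ) ^ τ i.castSucc)⁻¹) ^ k) ?_ ?_ ?_ ?_ ?_
  · exact (pow_right_anti₀ (by positivity) (inv_le_one_of_one_le₀ (hB1 i).le)).const_mul
      (by positivity)
  · simpa using (tendsto_pow_atTop_nhds_zero_of_lt_one (by positivity)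
      (inv_lt_one_of_one_lt₀ (hB1 i))).const_mul (p : ℝ)
  · rintro k u x ⟨hx1, hx2⟩ y ⟨hy1, hy2⟩
    refine le_trans ?_ (hri k)
    rw [dist_pi_le_iff (by positivity)]
    intro j
    refine Fin.lastCases ?_ (fun j => ?_) j
    · rw [hx1, hy1, dist_self]; positivity
    · rw [dist_eq_norm, ← sub_sub_sub_cancel_right (x j.castSucc) (y j.castSucc)
        (z k u.1 u.2.1 j), ← sub_sub_sub_cancel_right (x j.castSucc - _) _
        ((p : ℤ_[p]) ^ l k j * ((u.2.2 j : ℕ) : ℤ_[p]))]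
      exact (norm_sub_le_max_of_ultrametric _ _).trans (max_le (hx2 j) (hy2 j))
  · rintro x ⟨hxW, hxα⟩ N
    simp only [Set.mem_ofPred_eq] at hxα
    simp only [Wset, Aset, Set.mem_iInter, Set.mem_iUnion] at hxW
    obtain ⟨q, hNq, a, ha, hx⟩ := hxW (2 ^ N)
    have hq0 : q ≠ 0 := by
      have : 0 < 2 ^ N := by positivity
      omega
    set k := Nat.log 2 q with hk
    have hk1 : 2 ^ k ≤ q := Nat.pow_log_le_self 2 hq0
    have hk2 : q < 2 ^ (k + 1) := Nat.lt_pow_succ_log_self (by norm_num) q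
    have hgood : q ∈ goodDen α η k := by
      refine Finset.mem_filter.2 ⟨Finset.mem_Ico.2 ⟨hk1, hk2⟩, a (Fin.last d), (ha _).1, ?_⟩
      have h1 := hx (Fin.last d)
      rw [hxα] at h1
      refine lt_of_le_of_lt ?_ h1
      have hqp : (q : ℚ_[p]) ≠ 0 := by exact_mod_cast hq0
      have h2 : (((q : ℤ_[p]) * α - (a (Fin.last d) : ℤ_[p]) : ℤ_[p]) : ℚ_[p]) =
          (q : ℚ_[p]) * ((α : ℚ_[p]) - (a (Fin.last d) : ℚ_[p]) / (q : ℚ_[p])) := by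
        push_cast; field_simp
      rw [PadicInt.norm_def, h2, norm_mul]
      refine mul_le_of_le_one_left (norm_nonneg _) ?_
      simpa using Padic.norm_int_le_one (p := p) (q : ℤ)
    have hq2 : (q : ℤ) ≤ 2 ^ (k + 1) := by exact_mod_cast hk2.le
    have ha' : (fun j : Fin d => a j.castSucc) ∈ Fintype.piFinset
        (fun _ : Fin d => Finset.Icc (-(2 ^ (k + 1)) : ℤ) (2 ^ (k + 1))) := by
      rw [Fintype.mem_piFinset]
      intro j
      have := abs_le.1 (ha j.castSucc).1
      exact Finset.mem_Icc.2 ⟨by linarith, by linarith⟩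
    have hzz := hz k q (fun j => a j.castSucc) (fun j => x j.castSucc) hk1 (fun j => hx j.castSucc)
    choose c hc using fun j => exists_digit (l k i) (hzz j)
    exact ⟨k, Nat.le_log_of_pow_le (by norm_num) hNq, ⟨⟨q, hgood⟩, ⟨_, ha'⟩, c⟩, hxα, hc⟩
  · have hθ : Summable fun k : ℕ => (72 * 8 ^ d * (p : ℝ) ^ d * (p : ℝ) ^ s) * ((2 : ℝ) ^ (-e)) ^ k :=
      (summable_geometric_of_lt_one (by positivity)
        (Real.rpow_lt_one_of_one_lt_of_neg (by norm_num) (by linarith))).mul_left _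
    refine Summable.of_norm_bounded_eventually_nat hθ ?_
    filter_upwards [card_goodDen_le (p := p) (α := α) hη0 (by linarith : η ≤ t) ht2
      (by linarith) h0.ne'] with k hk
    rw [Real.norm_of_nonneg (by positivity), Fintype.card_prod, Fintype.card_prod,
      Fintype.card_coe, Fintype.card_coe, Fintype.card_piFinset, Fintype.card_pi]
    simp only [Int.card_Icc, Fintype.card_fin, Finset.prod_const, Finset.card_univ]
    have hbox : (((2 ^ (k + 1) + 1 - -(2 ^ (k + 1)) : ℤ).toNat : ℕ) : ℝ) ≤ 8 * 2 ^ k := by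
      have h1 : (2 ^ (k + 1) + 1 - -(2 ^ (k + 1)) : ℤ).toNat ≤ 8 * 2 ^ k := by
        have : (1 : ℤ) ≤ 2 ^ k := one_le_pow₀ (by norm_num)
        rw [Int.toNat_le, pow_succ]
        push_cast
        linarith
      exact_mod_cast h1
    have hdig : ((∏ j : Fin d, p ^ (l k i - l k j) : ℕ) : ℝ) ≤
        ∏ j : Fin d, (p * ((2 : ℝ) ^ max 0 (τ i.castSucc - τ j.castSucc)) ^ k) := by
      rw [Nat.cast_prod]
      exact Finset.prod_le_prod (fun _ _ => by positivity)
        fun j _ => pow_sub_le hp (hl1 k i) (hl2 k j)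
    rw [Nat.cast_mul, Nat.cast_mul, Nat.cast_pow]
    calc _ ≤ (72 * ((2 : ℝ) ^ (t - η)) ^ k) * ((8 * 2 ^ k) ^ d *
          ∏ j : Fin d, (p * ((2 : ℝ) ^ max 0 (τ i.castSucc - τ j.castSucc)) ^ k)) *
          ((p : ℝ) * (((2 : ℝ) ^ τ i.castSucc)⁻¹) ^ k) ^ s := by gcongr
      _ = (72 * 8 ^ d * (p : ℝ) ^ d * (p : ℝ) ^ s) * ((2 : ℝ) ^ (t - η) * 2 ^ d *
          (∏ j : Fin d, (2 : ℝ) ^ max 0 (τ i.castSucc - τ j.castSucc)) *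
          (((2 : ℝ) ^ τ i.castSucc)⁻¹) ^ s) ^ k := by
          rw [Finset.prod_mul_distrib, Finset.prod_const, Finset.card_univ, Fintype.card_fin,
            Finset.prod_pow, Real.mul_rpow (by positivity) (by positivity),
            ← Real.rpow_pow_comm (by positivity)]
          ring
      _ = _ := by
          congr 2
          rw [← Real.rpow_sum_of_pos (by norm_num), ← Real.rpow_neg (by norm_num),
            ← Real.rpow_mul (by norm_num), ← Real.rpow_natCast 2 d, ← Real.rpow_add (by norm_num),
            ← Real.rpow_add (by norm_num), ← Real.rpow_add (by norm_num)]
          congr 1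
          rw [ht, he]
          ring

/-- Upper bound for the Hausdorff dimension of `𝔚_n(τ) ∩ Π_α` for a general
scalar `α ∈ ℤ_p` with `max{1, τ(α)−1} < τₙ < τ(α)` (here `n = d + 1 ≥ 2`). -/
theorem dimH_Wset_inter_hyperplane_scalar_upper {p : ℕ} [Fact p.Prime] {d : ℕ}
    (hd : 1 ≤ d) (α : ℤ_[p]) (τ : Fin (d + 1) → ℝ)
    (hτpos : ∀ i, 0 < τ i) (h₃ : ∀ i, 1 < τ i)
    (h₂ : ((d : ℝ) + 1) + 1 < ∑ i, τ i)
    (hτn₁ : max 1 (dioExp1 α - 1) < τ (Fin.last d))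
    (hτn₂ : τ (Fin.last d) < dioExp1 α) :
    dimH (Wset τ ∩ {x : Fin (d + 1) → ℤ_[p] | x (Fin.last d) = α}) ≤
      ENNReal.ofReal (⨅ i : Fin d,
        (((d : ℝ) + 1) + dioExp1 α - 1 - τ (Fin.last d) +
          ∑ j ∈ Finset.univ.filter
            (fun j : Fin d => τ j.castSucc ≤ τ i.castSucc),
            (τ i.castSucc - τ j.castSucc)) / τ i.castSucc) := by
  have hT1 : 1 < dioExp1 α := ((le_max_left _ _).trans_lt hτn₁).trans hτn₂
  have : Nonempty (Fin d) := ⟨⟨0, hd⟩⟩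
  obtain ⟨i, hi⟩ := exists_eq_ciInf_of_finite (f := fun i : Fin d =>
        (((d : ℝ) + 1) + dioExp1 α - 1 - τ (Fin.last d) +
          ∑ j ∈ Finset.univ.filter
            (fun j : Fin d => τ j.castSucc ≤ τ i.castSucc),
            (τ i.castSucc - τ j.castSucc)) / τ i.castSucc)
  rw [← hi]
  have hsum : ∑ j ∈ Finset.univ.filter (fun j : Fin d => τ j.castSucc ≤ τ i.castSucc),
      (τ i.castSucc - τ j.castSucc) = ∑ j : Fin d, max 0 (τ i.castSucc - τ j.castSucc) := by
    rw [Finset.sum_filter]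
    refine Finset.sum_congr rfl fun j _ => ?_
    split_ifs with h
    · rw [max_eq_right (by linarith)]
    · rw [max_eq_left (by linarith)]
  have hnn : 0 ≤ ∑ j : Fin d, max 0 (τ i.castSucc - τ j.castSucc) :=
    Finset.sum_nonneg fun j _ => le_max_left _ _
  have hτi := hτpos i.castSucc
  rw [hsum]
  set A : ℝ := (((d : ℝ) + 1) + dioExp1 α - 1 - τ (Fin.last d) +
    ∑ j : Fin d, max 0 (τ i.castSucc - τ j.castSucc)) / τ i.castSucc with hA
  have hA0 : 0 ≤ A := by
    have : (0 : ℝ) ≤ d := Nat.cast_nonneg d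
    exact div_nonneg (by linarith) hτi.le
  refine ENNReal.le_of_forall_pos_le_add fun ε hε _ => ?_
  rw [← ENNReal.ofReal_coe_nnreal, ← ENNReal.ofReal_add hA0 ε.coe_nonneg]
  have hε' : (0 : ℝ) < ε := hε
  refine dimH_slice_le_of_lt α τ hτpos (by linarith) hτn₂ i (by linarith) ?_
  have : A * τ i.castSucc = ((d : ℝ) + 1) + dioExp1 α - 1 - τ (Fin.last d) +
    ∑ j : Fin d, max 0 (τ i.castSucc - τ j.castSucc) := div_mul_cancel₀ _ hτi.ne'
  nlinarith
end
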